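/- arXiv:2507.01136 — 2 statements merged into one kernel-verified Lean document; each statement's English description precedes it below -/
import Mathlib

section
/- Under the 2-group SBM with observation errors, suppose q ∈ (0,1), β ∈ (0,1), and restrict to the event Y ≠ Y*. Then there exists a strictly positive definite 4×4 covariance matrix Σ_μ such that the vector √n·(μ̂_1 − μ_1, μ̂_2 − μ_2, γ̂_1 − γ_1, γ̂_2 − γ_2) converges in distribution to the centered 4-dimensional Gaussian N(0, Σ_μ) as n → ∞. -/
/-!
STATEMENT 14: Under the 2-group SBM with observation errors, restricted to the
event Y ≠ Y* (formalized via the conditional probability measure given that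
event), there is a strictly positive definite 4×4 covariance Σ_μ such that
√n(μ̂₁ − μ₁, μ̂₂ − μ₂, γ̂₁ − γ₁, γ̂₂ − γ₂) converges in distribution to
N(0, Σ_μ).  Convergence in distribution to the multivariate Gaussian is
expressed by the Cramér–Wold device.  The model hypothesis holds for all
large n.
-/

open MeasureTheory ProbabilityTheory Filter Finset

noncomputable section

/-- Mass of a label configuration: i.i.d. labels, `true` (minority) w.p. κ. -/
def labelMass (κ : ℝ) {n : ℕ} (l : Fin n → Bool) : ℝ :=
  ∏ i, (if l i then κ else 1 - κ)

/-- Conditional mass of an adjacency configuration given labels: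
independent Bernoulli edges with success probability `B (l i) (l j)`, i < j. -/
def edgeMass {n : ℕ} (B : Bool → Bool → ℝ) (l : Fin n → Bool)
    (a : Fin n → Fin n → Bool) : ℝ :=
  ∏ p ∈ Finset.univ.filter (fun p : Fin n × Fin n => p.1 < p.2),
    (if a p.1 p.2 then B (l p.1) (l p.2) else 1 - B (l p.1) (l p.2))

/-- Conditional mass of an observed network `y` given the construct network
`a` and the labels: each present edge of `a` is kept independently with
probability `1 − βm (l i) (l j)` (type II error rate `βm`), and no edges are
added. -/
def obsMass {n : ℕ} (βm : Bool → Bool → ℝ) (l : Fin n → Bool)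
    (a y : Fin n → Fin n → Bool) : ℝ :=
  ∏ p ∈ Finset.univ.filter (fun p : Fin n × Fin n => p.1 < p.2),
    (if a p.1 p.2 then
      (if y p.1 p.2 then 1 - βm (l p.1) (l p.2) else βm (l p.1) (l p.2))
     else (if y p.1 p.2 then 0 else 1))

/-- The symmetric 2×2 matrix with within-group values `x₁` (group 1 = `true`),
`x₂` (group 2 = `false`) and between-group value `xb`. -/
def sbmB (x₁ x₂ xb : ℝ) : Bool → Bool → ℝ :=
  fun x y => if x then (if y then x₁ else xb) else (if y then xb else x₂)

/-- `(P, c, A, Y, Y')` is a 2-group SBM with connectivity matrix `B` and two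
conditionally independent noisy replicates `Y`, `Y'` with group-dependent
type II error rates `βm`.  The joint law is specified by its probability
mass function. -/
structure IsObsSBM {Ω : Type*} [MeasurableSpace Ω] (P : Measure Ω) (n : ℕ)
    (B βm : Bool → Bool → ℝ) (κ : ℝ)
    (c : Ω → Fin n → Bool) (A Y Y' : Ω → Fin n → Fin n → Bool) : Prop where
  isProb : IsProbabilityMeasure P
  symmA : ∀ ω i j, A ω i j = A ω j i
  looplessA : ∀ ω i, A ω i i = false
  symmY : ∀ ω i j, Y ω i j = Y ω j i
  looplessY : ∀ ω i, Y ω i i = false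
  symmY' : ∀ ω i j, Y' ω i j = Y' ω j i
  looplessY' : ∀ ω i, Y' ω i i = false
  law : ∀ (l : Fin n → Bool) (a y y' : Fin n → Fin n → Bool),
    (∀ i j, a i j = a j i) → (∀ i, a i i = false) →
    (∀ i j, y i j = y j i) → (∀ i, y i i = false) →
    (∀ i j, y' i j = y' j i) → (∀ i, y' i i = false) →
    P {ω | c ω = l ∧ A ω = a ∧ Y ω = y ∧ Y' ω = y'}
      = ENNReal.ofReal (labelMass κ l * edgeMass B l a *
          obsMass βm l a y * obsMass βm l a y')

/-- Number of unordered pairs `i < j` selected by `sel`. -/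
def pairCard {n : ℕ} (sel : Fin n → Fin n → Bool) : ℝ :=
  ((Finset.univ.filter
      (fun p : Fin n × Fin n => p.1 < p.2 ∧ sel p.1 p.2 = true)).card : ℝ)

/-- Pairs within group 1. -/
def within1 {n : ℕ} (c : Fin n → Bool) : Fin n → Fin n → Bool :=
  fun i j => c i && c j

/-- Pairs within group 2. -/
def within2 {n : ℕ} (c : Fin n → Bool) : Fin n → Fin n → Bool :=
  fun i j => !(c i) && !(c j)

/-- Between-group pairs. -/
def between {n : ℕ} (c : Fin n → Bool) : Fin n → Fin n → Bool :=
  fun i j => c i != c j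

/-- `û₁`: observed edge density over the pairs selected by `cls`. -/
def u1hat {n : ℕ} (cls y : Fin n → Fin n → Bool) : ℝ :=
  pairCard (fun i j => cls i j && y i j) / pairCard cls

/-- `û₂`: half the disagreement rate of the two replicates over the pairs
selected by `cls`. -/
def u2hat {n : ℕ} (cls y y' : Fin n → Fin n → Bool) : ℝ :=
  pairCard (fun i j => cls i j && (y i j != y' i j)) / (2 * pairCard cls)

/-- Estimator of the type II error rate over the pairs selected by `cls`. -/
def betaHat {n : ℕ} (cls y y' : Fin n → Fin n → Bool) : ℝ :=
  u2hat cls y y' / u1hat cls y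

/-- `γ̂₁ = √n (β̂_b − β̂₁)`. -/
def gammaHat1 {n : ℕ} (c : Fin n → Bool) (y y' : Fin n → Fin n → Bool) : ℝ :=
  Real.sqrt n * (betaHat (between c) y y' - betaHat (within1 c) y y')

/-- `γ̂₂ = √n (β̂_b − β̂₂)`. -/
def gammaHat2 {n : ℕ} (c : Fin n → Bool) (y y' : Fin n → Fin n → Bool) : ℝ :=
  Real.sqrt n * (betaHat (between c) y y' - betaHat (within2 c) y y')

/-- `μ̂₁ = √n (û₁,₁/(1−β̂₁) − û₁,b/(1−β̂_b))`. -/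
def muHat1 {n : ℕ} (c : Fin n → Bool) (y y' : Fin n → Fin n → Bool) : ℝ :=
  Real.sqrt n * (u1hat (within1 c) y / (1 - betaHat (within1 c) y y')
    - u1hat (between c) y / (1 - betaHat (between c) y y'))

/-- `μ̂₂ = √n (û₁,₂/(1−β̂₂) − û₁,b/(1−β̂_b))`. -/
def muHat2 {n : ℕ} (c : Fin n → Bool) (y y' : Fin n → Fin n → Bool) : ℝ :=
  Real.sqrt n * (u1hat (within2 c) y / (1 - betaHat (within2 c) y y')
    - u1hat (between c) y / (1 - betaHat (between c) y y'))

/-- Quadratic form of a 4×4 matrix. -/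
def quadForm4 (M : Matrix (Fin 4) (Fin 4) ℝ) (t : Fin 4 → ℝ) : ℝ :=
  ∑ k, ∑ k', t k * M k k' * t k'

/-!
Conditionally on the labels, the triples `(A i j, Y i j, Y' i j)` over pairs `i < j` are independent
and the law of each depends only on its block. The block averages of `(Y, ½ 1[Y ≠ Y'])` therefore
satisfy a Lindeberg central limit theorem for bounded triangular arrays, at rate `n` since every
block has of order `n²` pairs. The estimators are `√n` times the image of these averages under a
smooth map `contrast`, and the remaining factor `√n` completes the rate, so the delta method
applies. `contrast` has a local smooth right inverse, so its derivative is onto and the limiting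
covariance is positive definite. The limit depends on the labels only through the group proportion,
which tends to `κ` almost surely; dominated convergence then integrates the labels out. Finally
`Y = Y'` has vanishing probability, so conditioning on `Y ≠ Y'` does not change the limit.
-/

section Lindeberg

variable {Ω : Type*} [MeasurableSpace Ω] {μ : Measure Ω} [IsProbabilityMeasure μ]

lemma norm_exp_mul_I_sub_taylor_le {x : ℝ} (hx : |x| ≤ 1) :
    ‖Complex.exp (x * Complex.I) - (1 + x * Complex.I - x ^ 2 / 2)‖ ≤ |x| ^ 3 := by
  have hnorm : ‖(x * Complex.I : ℂ)‖ = |x| := by simp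
  have htaylor : ∑ m ∈ range 3, (x * Complex.I) ^ m / (m.factorial : ℂ)
      = 1 + x * Complex.I - x ^ 2 / 2 := by
    simp only [sum_range_succ, sum_range_zero, mul_pow, Complex.I_sq, Nat.factorial]
    push_cast
    ring
  have hexp := Complex.exp_bound (hnorm.trans_le hx) (n := 3) (by norm_num)
  rw [htaylor, hnorm] at hexp
  exact hexp.trans (mul_le_of_le_one_right (by positivity) (by norm_num [Nat.factorial]))

variable {X : Ω → ℝ} {C : ℝ}

lemma norm_charFun_map_sub_one_sub_le (hX : AEMeasurable X μ) (hmean : μ[X] = 0)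
    (hbound : ∀ᵐ ω ∂μ, |X ω| ≤ C) {t : ℝ} (ht : |t| * C ≤ 1) :
    ‖charFun (μ.map X) t - ((1 - t ^ 2 * Var[X; μ] / 2 : ℝ) : ℂ)‖ ≤ |t| ^ 3 * C * Var[X; μ] := by
  have hL2 : MemLp X 2 μ := .of_bound hX.aestronglyMeasurable C hbound
  have hint : Integrable X μ := hL2.integrable one_le_two
  have hvar : Var[X; μ] = ∫ ω, X ω ^ 2 ∂μ := variance_of_integral_eq_zero hX hmean
  have hlin : Integrable (fun ω => ((t * X ω : ℝ) : ℂ) * Complex.I) μ :=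
    (hint.const_mul t).ofReal.mul_const _
  have hquad : Integrable (fun ω => ((1 - (t * X ω) ^ 2 / 2 : ℝ) : ℂ)) μ := by
    simp only [mul_pow]
    exact ((integrable_const 1).sub ((hL2.integrable_sq.const_mul _).div_const 2)).ofReal
  have hsplit (ω : Ω) : 1 + (t * X ω : ℝ) * Complex.I - ((t * X ω : ℝ) : ℂ) ^ 2 / 2
      = ((1 - (t * X ω) ^ 2 / 2 : ℝ) : ℂ) + (t * X ω : ℝ) * Complex.I := by
    push_cast; ring
  have htaylor : ∫ ω, (1 + (t * X ω : ℝ) * Complex.I - ((t * X ω : ℝ) : ℂ) ^ 2 / 2) ∂μ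
      = ((1 - t ^ 2 * Var[X; μ] / 2 : ℝ) : ℂ) := by
    simp only [hsplit]
    rw [integral_add hquad hlin, integral_mul_const, integral_complex_ofReal,
      integral_complex_ofReal, integral_const_mul, hmean]
    simp only [mul_pow]
    rw [integral_sub (integrable_const 1) ((hL2.integrable_sq.const_mul _).div_const 2),
      integral_div, integral_const_mul, hvar]
    simp
  have hpointwise : ∀ᵐ ω ∂μ, ‖Complex.exp ((t * X ω : ℝ) * Complex.I)
      - (1 + (t * X ω : ℝ) * Complex.I - (t * X ω : ℝ) ^ 2 / 2)‖ ≤ |t| ^ 3 * C * X ω ^ 2 := by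
    filter_upwards [hbound] with ω hω
    have htX : |t * X ω| ≤ 1 := by
      rw [abs_mul]; exact (mul_le_mul_of_nonneg_left hω (abs_nonneg t)).trans ht
    calc _ ≤ |t * X ω| ^ 3 := norm_exp_mul_I_sub_taylor_le htX
      _ = |t| ^ 3 * |X ω| * X ω ^ 2 := by rw [abs_mul, ← sq_abs (X ω)]; ring
      _ ≤ _ := by gcongr
  have hcharFun : charFun (μ.map X) t = ∫ ω, Complex.exp ((t * X ω : ℝ) * Complex.I) ∂μ := by
    rw [charFun_apply_real, integral_map hX (by fun_prop)]
    push_cast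
    rfl
  rw [hcharFun, ← htaylor, ← integral_sub, hvar, ← integral_const_mul]
  · exact norm_integral_le_of_norm_le (hL2.integrable_sq.const_mul _) hpointwise
  · refine .of_bound (C := 1) (by fun_prop) (Eventually.of_forall fun ω => ?_)
    rw [Complex.norm_exp_ofReal_mul_I]
  · exact (hquad.add hlin).congr (Eventually.of_forall fun ω => (hsplit ω).symm)

lemma norm_charFun_map_sub_exp_le (hX : AEMeasurable X μ) (hmean : μ[X] = 0)
    (hbound : ∀ᵐ ω ∂μ, |X ω| ≤ C) {t : ℝ} (ht : |t| * C ≤ 1) :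
    ‖charFun (μ.map X) t - Complex.exp (-(t ^ 2 * Var[X; μ] / 2 : ℝ))‖
      ≤ 2 * |t| ^ 3 * C * Var[X; μ] := by
  have hC : 0 ≤ C := by
    obtain ⟨ω, hω⟩ := hbound.exists
    exact (abs_nonneg _).trans hω
  set v := Var[X; μ]
  have hv0 : 0 ≤ v := variance_nonneg X μ
  have hvC : v ≤ C ^ 2 := by
    have := variance_le_sq_of_bounded (μ := μ) (X := X) (a := -C) (b := C)
      (hbound.mono fun ω hω => abs_le.1 hω) hX
    exact this.trans_eq (by ring)
  have htv : t ^ 2 * v ≤ |t| * C * (|t| * C) := by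
    rw [← sq_abs t]; nlinarith [sq_nonneg t, abs_nonneg t]
  have htv' : t ^ 2 * v ≤ |t| * C := htv.trans (mul_le_of_le_one_left (by positivity) ht)
  have hsmall : t ^ 2 * v / 2 ≤ 1 := by linarith
  have hexp : ‖((1 - t ^ 2 * v / 2 : ℝ) : ℂ) - Complex.exp (-(t ^ 2 * v / 2 : ℝ))‖
      ≤ |t| ^ 3 * C * v := by
    have hexp2 := Real.abs_exp_sub_one_sub_id_le (x := -(t ^ 2 * v / 2))
      (by rw [abs_neg, abs_of_nonneg (by positivity)]; exact hsmall)
    rw [norm_sub_rev, ← Complex.ofReal_neg, ← Complex.ofReal_exp, ← Complex.ofReal_sub,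
      Complex.norm_real, Real.norm_eq_abs]
    calc |Real.exp (-(t ^ 2 * v / 2)) - (1 - t ^ 2 * v / 2)|
        ≤ (-(t ^ 2 * v / 2)) ^ 2 := by convert hexp2 using 2; ring
      _ = t ^ 2 * v * (t ^ 2 * v) / 4 := by ring
      _ ≤ |t| * C * (t ^ 2 * v) := by
          nlinarith [mul_le_mul_of_nonneg_right htv' (mul_nonneg (sq_nonneg t) hv0),
            mul_nonneg (sq_nonneg t) hv0]
      _ = |t| ^ 3 * C * v := by rw [← sq_abs t]; ring
  calc _ ≤ _ := norm_sub_le_norm_sub_add_norm_sub _ ((1 - t ^ 2 * v / 2 : ℝ) : ℂ) _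
    _ ≤ |t| ^ 3 * C * v + |t| ^ 3 * C * v :=
        add_le_add (norm_charFun_map_sub_one_sub_le hX hmean hbound ht) hexp
    _ = _ := by ring

lemma norm_prod_sub_prod_le {ι : Type*} (s : Finset ι) {f g : ι → ℂ}
    (hf : ∀ i ∈ s, ‖f i‖ ≤ 1) (hg : ∀ i ∈ s, ‖g i‖ ≤ 1) :
    ‖∏ i ∈ s, f i - ∏ i ∈ s, g i‖ ≤ ∑ i ∈ s, ‖f i - g i‖ := by
  induction s using Finset.cons_induction with
  | empty => simp
  | cons a s ha ih =>
    rw [forall_mem_cons] at hf hg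
    rw [prod_cons, prod_cons, sum_cons]
    have hprod : ‖∏ i ∈ s, g i‖ ≤ 1 := by
      rw [norm_prod]
      exact prod_le_one (fun i _ => norm_nonneg _) hg.2
    calc ‖f a * ∏ i ∈ s, f i - g a * ∏ i ∈ s, g i‖
        = ‖(f a - g a) * ∏ i ∈ s, g i + f a * (∏ i ∈ s, f i - ∏ i ∈ s, g i)‖ := by ring_nf
      _ ≤ ‖f a - g a‖ * ‖∏ i ∈ s, g i‖ + ‖f a‖ * ‖∏ i ∈ s, f i - ∏ i ∈ s, g i‖ := by
          grw [norm_add_le, norm_mul, norm_mul]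
      _ ≤ ‖f a - g a‖ * 1 + 1 * ∑ i ∈ s, ‖f i - g i‖ := by
          gcongr
          exacts [hf.1, ih hf.2 hg.2]
      _ = _ := by ring

lemma norm_charFun_map_sum_sub_exp_le {ι : Type*} [Fintype ι] {X : ι → Ω → ℝ} {C : ℝ}
    (hX : ∀ i, AEMeasurable (X i) μ) (hindep : iIndepFun X μ) (hmean : ∀ i, μ[X i] = 0)
    (hbound : ∀ i, ∀ᵐ ω ∂μ, |X i ω| ≤ C) {t : ℝ} (ht : |t| * C ≤ 1) :
    ‖charFun (μ.map fun ω => ∑ i, X i ω) t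
        - Complex.exp (-(t ^ 2 * (∑ i, Var[X i; μ]) / 2 : ℝ))‖
      ≤ 2 * |t| ^ 3 * C * ∑ i, Var[X i; μ] := by
  have hexp : Complex.exp (-(t ^ 2 * (∑ i, Var[X i; μ]) / 2 : ℝ))
      = ∏ i, Complex.exp (-(t ^ 2 * Var[X i; μ] / 2 : ℝ)) := by
    rw [← Complex.exp_sum, sum_neg_distrib, mul_sum, sum_div, Complex.ofReal_sum]
  have hexp_le (i : ι) : ‖Complex.exp (-(t ^ 2 * Var[X i; μ] / 2 : ℝ))‖ ≤ 1 := by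
    have := variance_nonneg (X i) μ
    rw [← Complex.ofReal_neg, Complex.norm_exp_ofReal, Real.exp_le_one_iff, neg_nonpos]
    positivity
  have (i : ι) : IsProbabilityMeasure (μ.map (X i)) := Measure.isProbabilityMeasure_map (hX i)
  rw [hindep.charFun_map_fun_sum_eq_prod hX, Finset.prod_apply, hexp, mul_sum]
  exact (norm_prod_sub_prod_le _ (fun i _ => norm_charFun_le_one t) (fun i _ => hexp_le i)).trans
    (sum_le_sum fun i _ => norm_charFun_map_sub_exp_le (hX i) (hmean i) (hbound i) ht)

theorem tendstoInDistribution_sum_of_bounded {I : ℕ → Type*} [∀ k, Fintype (I k)]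
    {X : ∀ k, I k → Ω → ℝ} {C : ℕ → ℝ} {V : NNReal}
    {Ω' : Type*} [MeasurableSpace Ω'] {μ' : Measure Ω'} [IsProbabilityMeasure μ'] {Z : Ω' → ℝ}
    (hX : ∀ k i, AEMeasurable (X k i) μ) (hindep : ∀ k, iIndepFun (X k) μ)
    (hmean : ∀ k i, μ[X k i] = 0) (hbound : ∀ k i, ∀ᵐ ω ∂μ, |X k i ω| ≤ C k)
    (hC : Tendsto C atTop (nhds 0))
    (hvar : Tendsto (fun k => ∑ i, Var[X k i; μ]) atTop (nhds V))
    (hZ : HasLaw Z (gaussianReal 0 V) μ') :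
    TendstoInDistribution (fun k ω => ∑ i, X k i ω) atTop Z (fun _ => μ) μ' where
  forall_aemeasurable k := Finset.aemeasurable_fun_sum _ fun i _ => hX k i
  aemeasurable_limit := hZ.aemeasurable
  tendsto := by
    refine ProbabilityMeasure.tendsto_iff_tendsto_charFun.2 fun t => ?_
    rw! [hZ.map_eq]
    have hgauss : Tendsto (fun k => Complex.exp (-(t ^ 2 * (∑ i, Var[X k i; μ]) / 2 : ℝ))) atTop
        (nhds (charFun (gaussianReal 0 V) t)) := by
      have hlim : charFun (gaussianReal 0 V) t = Complex.exp (-(t ^ 2 * V / 2 : ℝ)) := by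
        rw [charFun_gaussianReal]
        push_cast
        ring_nf
      have hcont : Continuous fun v : ℝ => Complex.exp (-(t ^ 2 * v / 2 : ℝ)) := by fun_prop
      rw [hlim]
      exact (hcont.tendsto _).comp hvar
    have hsmall : ∀ᶠ k in atTop, |t| * C k ≤ 1 := by
      have := hC.const_mul |t|
      rw [mul_zero] at this
      exact this.eventually_le_const one_pos
    have herror : Tendsto (fun k => 2 * |t| ^ 3 * C k * ∑ i, Var[X k i; μ]) atTop (nhds 0) := by
      simpa only [mul_zero, zero_mul] using (hC.const_mul (2 * |t| ^ 3)).mul hvar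
    refine hgauss.congr_dist <|
      squeeze_zero' (Eventually.of_forall fun _ => dist_nonneg) ?_ herror
    filter_upwards [hsmall] with k hk
    rw [dist_comm, dist_eq_norm]
    exact norm_charFun_map_sum_sub_exp_le (hX k) (hindep k) (hmean k) (hbound k) hk

end Lindeberg

section DeltaMethod

variable {ι Ω E F : Type*} [MeasurableSpace Ω] {μ : Measure Ω} {l : Filter ι}
  [NormedAddCommGroup E] [NormedAddCommGroup F]

/-- Boundedness in probability, written `O_P(1)`, of a family of random variables along a filter. -/
def BoundedInMeasure (μ : Measure Ω) (X : ι → Ω → E) (l : Filter ι) : Prop :=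
  ∀ ε : ENNReal, 0 < ε → ∃ M : ℝ, ∀ᶠ k in l, μ {ω | M < ‖X k ω‖} ≤ ε

lemma BoundedInMeasure.congr' {X Y : ι → Ω → E} (hX : BoundedInMeasure μ X l)
    (hXY : ∀ᶠ k in l, X k = Y k) : BoundedInMeasure μ Y l := by
  intro ε hε
  obtain ⟨M, hM⟩ := hX ε hε
  exact ⟨M, (hM.and hXY).mono fun k hk => hk.2 ▸ hk.1⟩

lemma BoundedInMeasure.pi {J : Type*} [Fintype J] {X : J → ι → Ω → E}
    (hX : ∀ x, BoundedInMeasure μ (X x) l) :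
    BoundedInMeasure μ (fun k ω x => X x k ω) l := by
  intro ε hε
  choose M hM using fun x => hX x (ε / (Fintype.card J + 1))
    (ENNReal.div_pos hε.ne' (by finiteness))
  refine ⟨∑ x, |M x|, ?_⟩
  filter_upwards [eventually_all.2 hM] with k hk
  have hsub : {ω | ∑ x, |M x| < ‖fun x => X x k ω‖} ⊆ ⋃ x, {ω | M x < ‖X x k ω‖} := by
    intro ω hω
    by_contra hnot
    simp only [Set.mem_iUnion, Set.mem_ofPred_eq, not_exists, not_lt] at hnot
    refine (Set.mem_ofPred_eq ▸ hω : _ < _).not_ge ?_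
    refine (pi_norm_le_iff_of_nonneg (by positivity)).2 fun x => (hnot x).trans ?_
    refine (le_abs_self _).trans ?_
    exact single_le_sum (f := fun x => |M x|) (fun _ _ => abs_nonneg _) (mem_univ x)
  calc _ ≤ _ := measure_mono hsub
    _ ≤ ∑ x : J, ε / (Fintype.card J + 1) :=
        (measure_iUnion_fintype_le _ _).trans (sum_le_sum fun x _ => hk x)
    _ = Fintype.card J * (ε / (Fintype.card J + 1)) := by simp
    _ ≤ (Fintype.card J + 1) * (ε / (Fintype.card J + 1)) := by gcongr; exact le_self_add
    _ ≤ ε := ENNReal.mul_div_le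

lemma boundedInMeasure_of_variance_le [IsFiniteMeasure μ] {X : ι → Ω → ℝ} {V : ℝ}
    (hX : ∀ k, MemLp (X k) 2 μ) (hmean : ∀ k, μ[X k] = 0) (hvar : ∀ᶠ k in l, Var[X k; μ] ≤ V) :
    BoundedInMeasure μ X l := by
  intro ε hε
  have hlim : Tendsto (fun M : ℝ => ENNReal.ofReal (V / M ^ 2)) atTop (nhds 0) := by
    rw [← ENNReal.ofReal_zero]
    exact ENNReal.tendsto_ofReal (tendsto_const_nhds.div_atTop (tendsto_pow_atTop two_ne_zero))
  obtain ⟨M, hMε, hM⟩ := ((hlim.eventually_le_const hε).and (eventually_gt_atTop 0)).exists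
  refine ⟨M, hvar.mono fun k hk => ?_⟩
  calc μ {ω | M < ‖X k ω‖} ≤ μ {ω | M ≤ |X k ω - μ[X k]|} := by
        refine measure_mono fun ω hω => ?_
        simp only [hmean, sub_zero, Set.mem_ofPred_eq, Real.norm_eq_abs] at hω ⊢
        exact hω.le
    _ ≤ ENNReal.ofReal (Var[X k; μ] / M ^ 2) := meas_ge_le_variance_div_sq (hX k) hM
    _ ≤ ENNReal.ofReal (V / M ^ 2) := by gcongr
    _ ≤ ε := hMε

theorem BoundedInMeasure.tendstoInMeasure_sub_fderiv [NormedSpace ℝ E] [NormedSpace ℝ F]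
    {U : ι → Ω → E} {θ : ι → E} {θ₀ : E} {r : ι → ℝ} {G : E → F} {L : E →L[ℝ] F}
    (hU : BoundedInMeasure μ (fun k ω => r k • (U k ω - θ k)) l)
    (hr : Tendsto r l atTop) (hθ : Tendsto θ l (nhds θ₀)) (hG : HasStrictFDerivAt G L θ₀) :
    TendstoInMeasure μ (fun k ω => r k • (G (U k ω) - G (θ k) - L (U k ω - θ k))) l 0 := by
  rw [tendstoInMeasure_iff_norm]
  intro η hη
  rw [ENNReal.tendsto_nhds_zero]
  intro ε hε
  obtain ⟨M, hM⟩ := hU ε hε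
  set c : ℝ := η / (2 * (|M| + 1)) with hc
  have hc0 : 0 < c := by positivity
  obtain ⟨δ, hδ, hball⟩ := Metric.eventually_nhds_iff.1 (hG.isLittleO.def hc0)
  have hθδ : ∀ᶠ k in l, dist (θ k) θ₀ < δ / 2 := Metric.tendsto_nhds.1 hθ _ (half_pos hδ)
  filter_upwards [hM, hθδ, hr.eventually_gt_atTop (2 * (|M| + 1) / δ)] with k hk hθk hrk
  have hr0 : 0 < r k := (by positivity : (0 : ℝ) ≤ _).trans_lt hrk
  refine (measure_mono fun ω hω => ?_).trans hk
  by_contra hnot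
  simp only [Set.mem_ofPred_eq, not_lt, norm_smul, Real.norm_of_nonneg hr0.le, Pi.zero_apply,
    sub_zero] at hω hnot
  have hUθ : dist (U k ω) (θ k) < δ / 2 := by
    rw [div_lt_iff₀ hδ] at hrk
    rw [dist_eq_norm]
    nlinarith [le_abs_self M]
  have hclose : dist (U k ω, θ k) (θ₀, θ₀) < δ :=
    max_lt (by linarith [dist_triangle (U k ω) (θ k) θ₀]) (by linarith)
  have herror : r k * ‖G (U k ω) - G (θ k) - L (U k ω - θ k)‖ ≤ c * |M| :=
    calc _ ≤ r k * (c * ‖U k ω - θ k‖) := by gcongr; exact hball hclose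
      _ = c * (r k * ‖U k ω - θ k‖) := by ring
      _ ≤ c * |M| := by gcongr; exact hnot.trans (le_abs_self M)
  have hcM : c * |M| < η := by
    rw [hc, div_mul_eq_mul_div, div_lt_iff₀ (by positivity)]
    nlinarith [abs_nonneg M]
  linarith

end DeltaMethod

section Block

variable {ι J Z E : Type*} [Fintype ι] [DecidableEq J] [AddCommGroup E] [Module ℝ E]

/-- Number of indices in the block `x`, for a partition into blocks given by `cl : ι → J`. -/
def blockCard (cl : ι → J) (x : J) : ℕ := #{i | cl i = x}

/-- Average of `f` over the observations `z i` with index in the block `x`; it is `0` when the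
block is empty. -/
def blockAvg (cl : ι → J) (x : J) (f : Z → E) (z : ι → Z) : E :=
  (blockCard cl x : ℝ)⁻¹ • ∑ i with cl i = x, f (z i)

lemma map_blockAvg {F : Type*} [AddCommGroup F] [Module ℝ F] (L : E →ₗ[ℝ] F) (cl : ι → J) (x : J)
    (f : Z → E) (z : ι → Z) : L (blockAvg cl x f z) = blockAvg cl x (fun y => L (f y)) z := by
  simp only [blockAvg, map_smul, map_sum]

lemma sum_comp_eq_sum_blockCard_mul [Fintype J] (cl : ι → J) (w : J → ℝ) :
    ∑ i, w (cl i) = ∑ x, blockCard cl x * w x := by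
  rw [← sum_fiberwise univ cl]
  refine sum_congr rfl fun x _ => ?_
  rw [sum_congr rfl fun i hi => congrArg w (mem_filter.1 hi).2, sum_const, nsmul_eq_mul, blockCard]

variable {Ω : Type*} [MeasurableSpace Z]

/-- Contribution of the `i`-th observation to the rescaled fluctuation
`r * ∑ x, (blockAvg cl x (h x) ξ - ∫ z, h x z ∂ν x)`. -/
def blockScore (cl : ι → J) (ν : J → Measure Z) (r : ℝ) (h : J → Z → ℝ)
    (ξ : ι → Ω → Z) (i : ι) (ω : Ω) : ℝ :=
  r / blockCard cl (cl i) * (h (cl i) (ξ i ω) - ∫ z, h (cl i) z ∂ν (cl i))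

lemma sum_blockScore [Fintype J] {cl : ι → J} (hcl : ∀ x, blockCard cl x ≠ 0)
    (ν : J → Measure Z) (r : ℝ) (h : J → Z → ℝ) (ξ : ι → Ω → Z) (ω : Ω) :
    ∑ i, blockScore cl ν r h ξ i ω
      = r * ∑ x, (blockAvg cl x (h x) (ξ · ω) - ∫ z, h x z ∂ν x) := by
  rw [← sum_fiberwise univ cl, mul_sum]
  refine sum_congr rfl fun x _ => ?_
  have hx : (blockCard cl x : ℝ) ≠ 0 := Nat.cast_ne_zero.2 (hcl x)
  calc ∑ i with cl i = x, blockScore cl ν r h ξ i ω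
      = ∑ i with cl i = x, r / blockCard cl x * (h x (ξ i ω) - ∫ z, h x z ∂ν x) :=
        sum_congr rfl fun i hi => by rw [blockScore, (mem_filter.1 hi).2]
    _ = r / blockCard cl x *
          (∑ i with cl i = x, h x (ξ i ω) - blockCard cl x * ∫ z, h x z ∂ν x) := by
        rw [← mul_sum, sum_sub_distrib, sum_const, nsmul_eq_mul, blockCard]
    _ = r * (blockAvg cl x (h x) (ξ · ω) - ∫ z, h x z ∂ν x) := by
        rw [blockAvg, smul_eq_mul]
        field_simp

end Block

section BlockArray

variable {J Z Ω : Type*} [DecidableEq J] [MeasurableSpace Z] [MeasurableSpace Ω]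

/-- A triangular array whose `k`-th row `ξ k` consists of independent observations with law
`ν k x` on the block `x` of `cl k`. The rate `r` is the one of the block averages: `ρ x` is the
limit of `r k ^ 2` divided by the size of the block `x`. -/
structure IsBlockArray (μ : Measure Ω) {ι : ℕ → Type*} [∀ k, Fintype (ι k)] (cl : ∀ k, ι k → J)
    (ν : ℕ → J → Measure Z) (r : ℕ → ℝ) (ρ : J → ℝ) (ξ : ∀ k, ι k → Ω → Z) : Prop where
  hasLaw : ∀ k i, HasLaw (ξ k i) (ν k (cl k i)) μ
  indep : ∀ k, iIndepFun (ξ k) μ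
  tendsto_rate : Tendsto r atTop atTop
  tendsto_sq_div : ∀ x, Tendsto (fun k => r k ^ 2 / blockCard (cl k) x) atTop (nhds (ρ x))
  limit_pos : ∀ x, 0 < ρ x

namespace IsBlockArray

variable {μ : Measure Ω} {ι : ℕ → Type*} [∀ k, Fintype (ι k)]
  {cl : ∀ k, ι k → J} {ν : ℕ → J → Measure Z} {r : ℕ → ℝ} {ρ : J → ℝ} {ξ : ∀ k, ι k → Ω → Z}

lemma eventually_blockCard_ne_zero [Finite J] (H : IsBlockArray μ cl ν r ρ ξ) :
    ∀ᶠ k in atTop, ∀ x, blockCard (cl k) x ≠ 0 := by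
  refine eventually_all.2 fun x => ?_
  filter_upwards [(H.tendsto_sq_div x).eventually_const_lt (H.limit_pos x)] with k hk h0
  simp [h0] at hk

lemma isProbabilityMeasure [IsProbabilityMeasure μ] (H : IsBlockArray μ cl ν r ρ ξ) {k : ℕ} {x : J}
    (hx : blockCard (cl k) x ≠ 0) : IsProbabilityMeasure (ν k x) := by
  obtain ⟨i, hi⟩ := card_ne_zero.1 hx
  obtain rfl : cl k i = x := (mem_filter.1 hi).2
  exact (H.hasLaw k i).isProbabilityMeasure_iff.1 ‹_›

lemma tendsto_div_blockCard (H : IsBlockArray μ cl ν r ρ ξ) (x : J) :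
    Tendsto (fun k => r k / blockCard (cl k) x) atTop (nhds 0) := by
  refine ((H.tendsto_sq_div x).div_atTop H.tendsto_rate).congr' ?_
  filter_upwards [H.tendsto_rate.eventually_gt_atTop 0] with k hk
  field_simp

variable {h : J → Z → ℝ} {B : ℝ}

lemma aemeasurable_blockScore (H : IsBlockArray μ cl ν r ρ ξ) (hh : ∀ x, Measurable (h x)) (k : ℕ)
    (i : ι k) : AEMeasurable (blockScore (cl k) (ν k) (r k) h (ξ k) i) μ :=
  (((hh _).comp_aemeasurable (H.hasLaw k i).aemeasurable).sub_const _).const_mul _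

lemma indep_blockScore (H : IsBlockArray μ cl ν r ρ ξ) (hh : ∀ x, Measurable (h x)) (k : ℕ) :
    iIndepFun (blockScore (cl k) (ν k) (r k) h (ξ k)) μ :=
  (H.indep k).comp (fun i y => r k / blockCard (cl k) (cl k i) *
    (h (cl k i) y - ∫ z, h (cl k i) z ∂ν k (cl k i)))
    fun _ => ((hh _).sub_const _).const_mul _

variable [IsProbabilityMeasure μ]

lemma integral_blockScore (H : IsBlockArray μ cl ν r ρ ξ) (hh : ∀ x, Measurable (h x))
    (hB : ∀ x z, |h x z| ≤ B) (k : ℕ) (i : ι k) :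
    μ[blockScore (cl k) (ν k) (r k) h (ξ k) i] = 0 := by
  have hint : Integrable (fun ω => h (cl k i) (ξ k i ω)) μ :=
    .of_bound ((hh _).comp_aemeasurable (H.hasLaw k i).aemeasurable).aestronglyMeasurable B
      (Eventually.of_forall fun ω => hB _ _)
  have hlaw := (H.hasLaw k i).integral_comp (hh (cl k i)).aestronglyMeasurable
  simp only [Function.comp_apply] at hlaw
  simp only [blockScore]
  rw [integral_const_mul, integral_sub hint (integrable_const _), hlaw]
  simp

lemma abs_blockScore_le [Fintype J] (H : IsBlockArray μ cl ν r ρ ξ) (hB : ∀ x z, |h x z| ≤ B)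
    (k : ℕ) (i : ι k) (ω : Ω) :
    |blockScore (cl k) (ν k) (r k) h (ξ k) i ω| ≤ ∑ x, |r k / blockCard (cl k) x| * (2 * B) := by
  have hB0 : 0 ≤ B := (abs_nonneg _).trans (hB (cl k i) (ξ k i ω))
  have hprob : IsProbabilityMeasure (ν k (cl k i)) := (H.hasLaw k i).isProbabilityMeasure_iff.1 ‹_›
  have hmean : |∫ z, h (cl k i) z ∂ν k (cl k i)| ≤ B := by
    simpa using norm_integral_le_of_norm_le_const (μ := ν k (cl k i)) (f := h (cl k i))
      (Eventually.of_forall fun z => hB (cl k i) z)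
  rw [blockScore, abs_mul]
  calc _ ≤ |r k / blockCard (cl k) (cl k i)| * (2 * B) := by
        gcongr
        exact (abs_sub _ _).trans (by linarith [hB (cl k i) (ξ k i ω)])
    _ ≤ _ := single_le_sum (f := fun x => |r k / blockCard (cl k) x| * (2 * B))
        (fun _ _ => by positivity) (mem_univ _)

lemma variance_blockScore (H : IsBlockArray μ cl ν r ρ ξ) (hh : ∀ x, Measurable (h x)) (k : ℕ)
    (i : ι k) : Var[blockScore (cl k) (ν k) (r k) h (ξ k) i; μ]
      = (r k / blockCard (cl k) (cl k i)) ^ 2 * Var[h (cl k i); ν k (cl k i)] := by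
  have hmeas := (hh (cl k i)).comp_aemeasurable (H.hasLaw k i).aemeasurable
  have hlaw := variance_map (μ := μ) (hh (cl k i)).aemeasurable (H.hasLaw k i).aemeasurable
  rw [(H.hasLaw k i).map_eq] at hlaw
  unfold blockScore
  rw [variance_const_mul, hlaw]
  exact congrArg _ (variance_sub_const hmeas.aestronglyMeasurable _)

lemma sum_variance_blockScore [Fintype J] (H : IsBlockArray μ cl ν r ρ ξ)
    (hh : ∀ x, Measurable (h x)) (k : ℕ) :
    ∑ i, Var[blockScore (cl k) (ν k) (r k) h (ξ k) i; μ]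
      = ∑ x, r k ^ 2 / blockCard (cl k) x * Var[h x; ν k x] := by
  simp only [H.variance_blockScore hh]
  rw [sum_comp_eq_sum_blockCard_mul (cl k)
    fun x => (r k / blockCard (cl k) x) ^ 2 * Var[h x; ν k x]]
  refine sum_congr rfl fun x _ => ?_
  rcases eq_or_ne (blockCard (cl k) x : ℝ) 0 with h0 | h0
  · simp [h0]
  · field_simp

lemma memLp_blockScore [Finite J] (H : IsBlockArray μ cl ν r ρ ξ) (hh : ∀ x, Measurable (h x))
    (hB : ∀ x z, |h x z| ≤ B) (k : ℕ) (i : ι k) :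
    MemLp (blockScore (cl k) (ν k) (r k) h (ξ k) i) 2 μ :=
  have := Fintype.ofFinite J
  .of_bound (H.aemeasurable_blockScore hh k i).aestronglyMeasurable _
    (Eventually.of_forall fun ω => H.abs_blockScore_le hB k i ω)

lemma variance_sum_blockScore [Fintype J] (H : IsBlockArray μ cl ν r ρ ξ)
    (hh : ∀ x, Measurable (h x)) (hB : ∀ x z, |h x z| ≤ B) (k : ℕ) :
    Var[fun ω => ∑ i, blockScore (cl k) (ν k) (r k) h (ξ k) i ω; μ]
      = ∑ x, r k ^ 2 / blockCard (cl k) x * Var[h x; ν k x] := by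
  rw [← H.sum_variance_blockScore hh,
    ← IndepFun.variance_sum (fun i _ => H.memLp_blockScore hh hB k i)
      fun i _ j _ hij => (H.indep_blockScore hh k).indepFun hij]
  simp only [← Finset.sum_fn]

lemma boundedInMeasure_sum_blockScore [Finite J] (H : IsBlockArray μ cl ν r ρ ξ)
    (hh : ∀ x, Measurable (h x)) (hB : ∀ x z, |h x z| ≤ B) :
    BoundedInMeasure μ (fun k ω => ∑ i, blockScore (cl k) (ν k) (r k) h (ξ k) i ω) atTop := by
  have := Fintype.ofFinite J
  refine boundedInMeasure_of_variance_le (V := ∑ x, (ρ x + 1) * B ^ 2)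
    (fun k => memLp_finsetSum _ fun i _ => H.memLp_blockScore hh hB k i) (fun k => ?_) ?_
  · rw [integral_finsetSum _ fun i _ => (H.memLp_blockScore hh hB k i).integrable one_le_two]
    exact sum_eq_zero fun i _ => H.integral_blockScore hh hB k i
  · have hrate : ∀ᶠ k in atTop, ∀ x, r k ^ 2 / blockCard (cl k) x ≤ ρ x + 1 :=
      eventually_all.2 fun x => (H.tendsto_sq_div x).eventually_le_const (lt_add_one _)
    filter_upwards [hrate, H.eventually_blockCard_ne_zero] with k hk hne
    rw [H.variance_sum_blockScore hh hB]
    refine sum_le_sum fun x _ => mul_le_mul (hk x) ?_ (variance_nonneg _ _)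
      (by linarith [H.limit_pos x])
    have := H.isProbabilityMeasure (hne x)
    calc Var[h x; ν k x] ≤ ((B - -B) / 2) ^ 2 :=
          variance_le_sq_of_bounded (Eventually.of_forall fun z => abs_le.1 (hB x z))
            (hh x).aemeasurable
      _ = B ^ 2 := by ring

lemma tendstoInDistribution_sum_blockScore [Fintype J] {Ω' : Type*} [MeasurableSpace Ω']
    {μ' : Measure Ω'} [IsProbabilityMeasure μ'] {W : Ω' → ℝ} {V : NNReal}
    (H : IsBlockArray μ cl ν r ρ ξ) (hh : ∀ x, Measurable (h x)) (hB : ∀ x z, |h x z| ≤ B)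
    {v : J → ℝ} (hv : ∀ x, Tendsto (fun k => Var[h x; ν k x]) atTop (nhds (v x)))
    (hV : V = ∑ x, ρ x * v x) (hW : HasLaw W (gaussianReal 0 V) μ') :
    TendstoInDistribution (fun k ω => ∑ i, blockScore (cl k) (ν k) (r k) h (ξ k) i ω) atTop W
      (fun _ => μ) μ' := by
  refine tendstoInDistribution_sum_of_bounded (H.aemeasurable_blockScore hh)
    (H.indep_blockScore hh) (H.integral_blockScore hh hB)
    (fun k i => Eventually.of_forall (H.abs_blockScore_le hB k i)) ?_ ?_ hW
  · simpa using tendsto_finsetSum univ fun x _ =>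
      ((H.tendsto_div_blockCard x).abs.mul_const (2 * B))
  · simp only [H.sum_variance_blockScore hh, hV]
    exact tendsto_finsetSum _ fun x _ => (H.tendsto_sq_div x).mul (hv x)

lemma boundedInMeasure_blockAvg_sub [Finite J] (H : IsBlockArray μ cl ν r ρ ξ)
    {f : Z → ℝ} (hf : Measurable f) (hB : ∀ z, |f z| ≤ B) (x : J) :
    BoundedInMeasure μ (fun k ω => r k * (blockAvg (cl k) x f (ξ k · ω) - ∫ z, f z ∂ν k x))
      atTop := by
  have := Fintype.ofFinite J
  set h : J → Z → ℝ := fun y z => if y = x then f z else 0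
  have hmeas (y : J) : Measurable (h y) := by
    by_cases hy : y = x
    · simpa only [h, hy, if_true] using hf
    · simp only [h, hy, if_false, measurable_const]
  have hbound (y : J) (z : Z) : |h y z| ≤ B := by
    by_cases hy : y = x
    · simpa only [h, hy, if_true] using hB z
    · simpa only [h, hy, if_false, abs_zero] using (abs_nonneg _).trans (hB z)
  refine (H.boundedInMeasure_sum_blockScore hmeas hbound).congr' ?_
  filter_upwards [H.eventually_blockCard_ne_zero] with k hne
  funext ω
  rw [sum_blockScore hne,
    sum_eq_single_of_mem x (mem_univ x) fun y _ hy => by simp [h, hy, blockAvg]]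
  simp only [h, if_true]

variable {D : Type*} [Fintype D] {f : Z → D → ℝ}

lemma integrable (H : IsBlockArray μ cl ν r ρ ξ) (hf : Measurable f) (hB : ∀ z, ‖f z‖ ≤ B) {k : ℕ}
    {x : J} (hx : blockCard (cl k) x ≠ 0) : Integrable f (ν k x) := by
  have := H.isProbabilityMeasure hx
  exact .of_bound hf.aestronglyMeasurable B (Eventually.of_forall hB)

lemma boundedInMeasure_blockAvg_pi_sub [Fintype J] (H : IsBlockArray μ cl ν r ρ ξ)
    (hf : Measurable f) (hB : ∀ z, ‖f z‖ ≤ B) :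
    BoundedInMeasure μ (fun k ω => r k • ((fun x => blockAvg (cl k) x f (ξ k · ω))
      - fun x => ∫ z, f z ∂ν k x)) atTop := by
  refine .pi fun x => .pi fun d => ?_
  refine (H.boundedInMeasure_blockAvg_sub (f := fun z => f z d) (by fun_prop)
    (fun z => (norm_le_pi_norm (f z) d).trans (hB z)) x).congr' ?_
  filter_upwards [H.eventually_blockCard_ne_zero] with k hne
  funext ω
  rw [← eval_integral (fun d => (H.integrable hf hB (hne x)).eval d) d]
  exact congrArg (fun u => r k * (u - _)) (map_blockAvg (LinearMap.proj d) (cl k) x f _).symm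

lemma sum_blockScore_clm [Finite J] (H : IsBlockArray μ cl ν r ρ ξ) (hf : Measurable f)
    (hB : ∀ z, ‖f z‖ ≤ B) (L : (J → D → ℝ) →L[ℝ] ℝ) {k : ℕ} (hne : ∀ x, blockCard (cl k) x ≠ 0)
    (ω : Ω) : ∑ i, blockScore (cl k) (ν k) (r k) (fun x z => L (Pi.single x (f z))) (ξ k) i ω
      = r k * L ((fun x => blockAvg (cl k) x f (ξ k · ω)) - fun x => ∫ z, f z ∂ν k x) := by
  have := Fintype.ofFinite J
  have hblock (x : J) : blockAvg (cl k) x (fun z => L (Pi.single x (f z))) (ξ k · ω)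
      - ∫ z, L (Pi.single x (f z)) ∂ν k x
      = L (Pi.single x (blockAvg (cl k) x f (ξ k · ω) - ∫ z, f z ∂ν k x)) := by
    set Lx := L ∘L ContinuousLinearMap.single ℝ (fun _ => D → ℝ) x
    have havg := map_blockAvg (Lx : (D → ℝ) →ₗ[ℝ] ℝ) (cl k) x f (ξ k · ω)
    have hmean := Lx.integral_comp_comm (H.integrable hf hB (hne x))
    exact (congrArg₂ _ havg.symm hmean).trans (map_sub Lx _ _).symm
  rw [sum_blockScore hne, sum_congr rfl fun x _ => hblock x, ← map_sum]
  exact congrArg (fun u => r k * L u) (univ_sum_single _)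

theorem tendstoInDistribution_comp_blockAvg [Fintype J]
    {G : (J → D → ℝ) → ℝ} {L : (J → D → ℝ) →L[ℝ] ℝ} {m : J → D → ℝ} {v : J → ℝ} {V : NNReal}
    {Ω' : Type*} [MeasurableSpace Ω'] {μ' : Measure Ω'} [IsProbabilityMeasure μ'] {W : Ω' → ℝ}
    (H : IsBlockArray μ cl ν r ρ ξ) (hf : Measurable f) (hB : ∀ z, ‖f z‖ ≤ B)
    (hm : Tendsto (fun k x => ∫ z, f z ∂ν k x) atTop (nhds m)) (hGmeas : Measurable G)
    (hG : HasStrictFDerivAt G L m)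
    (hv : ∀ x, Tendsto (fun k => Var[fun z => L (Pi.single x (f z)); ν k x]) atTop (nhds (v x)))
    (hV : V = ∑ x, ρ x * v x) (hW : HasLaw W (gaussianReal 0 V) μ') :
    TendstoInDistribution (fun k ω => r k *
        (G (fun x => blockAvg (cl k) x f (ξ k · ω)) - G (fun x => ∫ z, f z ∂ν k x))) atTop W
      (fun _ => μ) μ' := by
  have hmeas (x : J) : Measurable fun z => L (Pi.single x (f z)) :=
    (L ∘L ContinuousLinearMap.single ℝ (fun _ => D → ℝ) x).continuous.measurable.comp hf
  have hbound (x : J) (z : Z) : |L (Pi.single x (f z))| ≤ ‖L‖ * B := by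
    refine (L.le_opNorm _).trans ?_
    rw [Pi.norm_single]
    gcongr
    exact hB z
  have hdelta := (H.boundedInMeasure_blockAvg_pi_sub hf hB).tendstoInMeasure_sub_fderiv
    H.tendsto_rate hm hG
  refine tendstoInDistribution_of_tendstoInMeasure_sub _ W
    (H.tendstoInDistribution_sum_blockScore hmeas hbound hv hV hW) (hdelta.congr' ?_ .rfl)
    fun k => ?_
  · filter_upwards [H.eventually_blockCard_ne_zero] with k hne
    refine Eventually.of_forall fun ω => ?_
    simp only [Pi.sub_apply, H.sum_blockScore_clm hf hB L hne, smul_eq_mul]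
    ring
  · have hξ (i : ι k) : AEMeasurable (ξ k i) μ := (H.hasLaw k i).aemeasurable
    have hU : AEMeasurable (fun ω x => blockAvg (cl k) x f (ξ k · ω)) μ := by
      unfold blockAvg
      fun_prop
    exact ((hGmeas.comp_aemeasurable hU).sub_const _).const_mul _

end IsBlockArray

end BlockArray

section TripleLaw

/-- Probability of observing `y` for an entry `a` of the construct network that is missed with
probability `b`. -/
def missMass (b : ℝ) (a y : Bool) : ℝ :=
  if a then (if y then 1 - b else b) else (if y then 0 else 1)

/-- Probability that a pair has construct entry `z.1` and observed entries `z.2.1`, `z.2.2`, for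
edge probability `p` and error rate `b`. -/
def tripleMass (p b : ℝ) (z : Bool × Bool × Bool) : ℝ :=
  (if z.1 then p else 1 - p) * missMass b z.1 z.2.1 * missMass b z.1 z.2.2

lemma tripleMass_nonneg (p b : unitInterval) (z : Bool × Bool × Bool) : 0 ≤ tripleMass p b z := by
  have hmiss (a y : Bool) : 0 ≤ missMass b a y := by
    cases a <;> cases y <;> simp [missMass, b.2.1, b.2.2]
  refine mul_nonneg (mul_nonneg ?_ (hmiss _ _)) (hmiss _ _)
  split_ifs <;> simp [p.2.1, p.2.2]

lemma sum_tripleMass (p b : ℝ) : ∑ z, tripleMass p b z = 1 := by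
  simp only [Fintype.sum_prod_type, Fintype.sum_bool, tripleMass, missMass, if_true, if_false,
    Bool.false_eq_true]
  ring

/-- Law of the construct entry and the two observed entries of a pair. -/
def tripleLaw (p b : unitInterval) : Measure (Bool × Bool × Bool) :=
  (PMF.ofFintype (fun z => ENNReal.ofReal (tripleMass p b z)) (by
    rw [← ENNReal.ofReal_sum_of_nonneg fun z _ => tripleMass_nonneg p b z, sum_tripleMass,
      ENNReal.ofReal_one])).toMeasure

instance (p b : unitInterval) : IsProbabilityMeasure (tripleLaw p b) := by
  unfold tripleLaw
  infer_instance

lemma tripleLaw_singleton (p b : unitInterval) (z : Bool × Bool × Bool) :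
    tripleLaw p b {z} = ENNReal.ofReal (tripleMass p b z) := by
  rw [tripleLaw, PMF.toMeasure_apply_singleton _ _ (measurableSet_singleton z),
    PMF.ofFintype_apply]

lemma integral_tripleLaw {E : Type*} [NormedAddCommGroup E] [NormedSpace ℝ E] [CompleteSpace E]
    (p b : unitInterval) (f : Bool × Bool × Bool → E) :
    ∫ z, f z ∂tripleLaw p b = ∑ z, tripleMass p b z • f z := by
  rw [integral_fintype .of_finite]
  simp only [Measure.real, tripleLaw_singleton, ENNReal.toReal_ofReal (tripleMass_nonneg p b _)]

lemma continuous_tripleMass (z : Bool × Bool × Bool) :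
    Continuous fun s : ℝ × ℝ => tripleMass s.1 s.2 z := by
  obtain ⟨_ | _, _ | _, _ | _⟩ := z <;> simp only [tripleMass, missMass, if_true, if_false,
    Bool.false_eq_true] <;> fun_prop

lemma continuous_integral_tripleLaw {E : Type*} [NormedAddCommGroup E] [NormedSpace ℝ E]
    [CompleteSpace E] (f : Bool × Bool × Bool → E) :
    Continuous fun s : unitInterval × unitInterval => ∫ z, f z ∂tripleLaw s.1 s.2 := by
  simp only [integral_tripleLaw]
  refine continuous_finsetSum _ fun z _ => .smul ?_ continuous_const
  exact (continuous_tripleMass z).comp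
    (f := fun s : unitInterval × unitInterval => ((s.1 : ℝ), (s.2 : ℝ))) (by fun_prop)

lemma continuous_variance_tripleLaw (h : Bool × Bool × Bool → ℝ) :
    Continuous fun s : unitInterval × unitInterval => Var[h; tripleLaw s.1 s.2] := by
  simp only [variance_eq_sub (MemLp.of_discrete (f := h) (p := 2))]
  exact (continuous_integral_tripleLaw _).sub ((continuous_integral_tripleLaw _).pow 2)

/-- The contribution of a pair to the edge density `û₁` and to half the disagreement rate `û₂`. -/
def pairObs (z : Bool × Bool × Bool) : Fin 2 → ℝ :=
  ![if z.2.1 then 1 else 0, if z.2.1 != z.2.2 then 1 / 2 else 0]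

lemma norm_pairObs_le (z : Bool × Bool × Bool) : ‖pairObs z‖ ≤ 1 := by
  refine (pi_norm_le_iff_of_nonneg zero_le_one).2 fun d => ?_
  obtain ⟨a, _ | _, _ | _⟩ := z <;> fin_cases d <;> norm_num [pairObs]

lemma integral_pairObs (p b : unitInterval) :
    ∫ z, pairObs z ∂tripleLaw p b = (![p * (1 - b), p * b * (1 - b)] : Fin 2 → ℝ) := by
  rw [integral_tripleLaw]
  ext d
  fin_cases d <;> simp only [Fintype.sum_prod_type, Fintype.sum_bool, tripleMass, missMass, pairObs,
    Finset.sum_apply, Pi.smul_apply, smul_eq_mul, Fin.zero_eta, Fin.mk_one, Matrix.cons_val,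
    Bool.bne_false, Bool.bne_true, Bool.not_true, Bool.not_false, if_true, if_false,
    Bool.false_eq_true] <;> ring

lemma eq_zero_of_variance_pairObs_eq_zero {p b : unitInterval} (hp : (p : ℝ) ∈ Set.Ioo 0 1)
    (hb : (b : ℝ) ∈ Set.Ioo 0 1) {L : (Fin 2 → ℝ) →L[ℝ] ℝ}
    (hL : Var[fun z => L (pairObs z); tripleLaw p b] = 0) : L = 0 := by
  set m := ∫ z, L (pairObs z) ∂tripleLaw p b
  rw [variance_eq_integral (measurable_of_finite _).aemeasurable, integral_tripleLaw,
    sum_eq_zero_iff_of_nonneg fun z _ => smul_nonneg (tripleMass_nonneg p b z) (sq_nonneg _)]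
    at hL
  have hconst {z : Bool × Bool × Bool} (hz : tripleMass p b z ≠ 0) : L (pairObs z) = m := by
    simpa [hz, sub_eq_zero] using hL z (mem_univ z)
  have hq0 : 1 - (p : ℝ) ≠ 0 := (sub_pos.2 hp.2).ne'
  have hb0 : 1 - (b : ℝ) ≠ 0 := (sub_pos.2 hb.2).ne'
  have h00 := hconst (z := (false, false, false)) (by simpa [tripleMass, missMass] using hq0)
  have h11 := hconst (z := (true, true, true)) (by simp [tripleMass, missMass, hp.1.ne', hb0])
  have h10 := hconst (z := (true, true, false)) (by
    simp [tripleMass, missMass, hp.1.ne', hb0, hb.1.ne'])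
  have hzero : pairObs (false, false, false) = 0 := by ext d; fin_cases d <;> simp [pairObs]
  rw [hzero, map_zero] at h00
  ext v
  have hv : v = (v 0 - 2 * v 1) • pairObs (true, true, true)
      + (2 * v 1) • pairObs (true, true, false) := by
    ext d
    fin_cases d <;> simp only [pairObs, Pi.add_apply, Pi.smul_apply, smul_eq_mul, Fin.zero_eta,
      Fin.mk_one, Matrix.cons_val, bne_self_eq_false, Bool.bne_false, if_true, if_false,
      Bool.false_eq_true] <;> ring
  rw [hv, map_add, map_smul, map_smul, h11, h10, ← h00, smul_zero, smul_zero, add_zero]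
  simp

end TripleLaw

section Contrast

/-- Error rate of a block whose pairs have mean observation `u`, as in `β̂ = û₂ / û₁`. -/
def errorRate (u : Fin 2 → ℝ) : ℝ := u 1 / u 0

/-- Edge probability of a block whose pairs have mean observation `u`, as in `û₁ / (1 - β̂)`. -/
def edgeProb (u : Fin 2 → ℝ) : ℝ := u 0 / (1 - errorRate u)

/-- The estimand of `(μ̂₁, μ̂₂, γ̂₁, γ̂₂) / √n` as a function of the mean observations in the blocks
`0` (within group 1), `1` (within group 2) and `2` (between groups). -/
def contrast (U : Fin 3 → Fin 2 → ℝ) : Fin 4 → ℝ :=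
  ![edgeProb (U 0) - edgeProb (U 2), edgeProb (U 1) - edgeProb (U 2),
    errorRate (U 2) - errorRate (U 0), errorRate (U 2) - errorRate (U 1)]

/-- Edge probabilities of the three blocks under the deviation `w = (μ₁, μ₂, γ₁, γ₂) / √n`. -/
def blockProb (q : ℝ) (w : Fin 4 → ℝ) : Fin 3 → ℝ := ![q + w 0, q + w 1, q]

/-- Error rates of the three blocks under the deviation `w = (μ₁, μ₂, γ₁, γ₂) / √n`. -/
def blockErr (β : ℝ) (w : Fin 4 → ℝ) : Fin 3 → ℝ := ![β - w 2, β - w 3, β]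

/-- Mean observations of the three blocks under the deviation `w`. -/
def blockMean (q β : ℝ) (w : Fin 4 → ℝ) (x : Fin 3) : Fin 2 → ℝ :=
  ![blockProb q w x * (1 - blockErr β w x),
    blockProb q w x * blockErr β w x * (1 - blockErr β w x)]

lemma blockProb_zero (q : ℝ) (x : Fin 3) : blockProb q 0 x = q := by
  fin_cases x <;> simp [blockProb]

lemma blockErr_zero (β : ℝ) (x : Fin 3) : blockErr β 0 x = β := by
  fin_cases x <;> simp [blockErr]

lemma contDiff_blockProb (q : ℝ) (x : Fin 3) : ContDiff ℝ 1 fun w => blockProb q w x := by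
  fin_cases x <;> simp only [blockProb, Fin.zero_eta, Fin.mk_one, Fin.reduceFinMk,
    Matrix.cons_val] <;> fun_prop

lemma contDiff_blockErr (β : ℝ) (x : Fin 3) : ContDiff ℝ 1 fun w => blockErr β w x := by
  fin_cases x <;> simp only [blockErr, Fin.zero_eta, Fin.mk_one, Fin.reduceFinMk,
    Matrix.cons_val] <;> fun_prop

lemma contDiff_blockMean (q β : ℝ) : ContDiff ℝ 1 (blockMean q β) := by
  have hp := contDiff_blockProb q
  have hb := contDiff_blockErr β
  refine contDiff_pi.2 fun x => contDiff_pi.2 fun d => ?_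
  fin_cases d <;> simp only [blockMean, Fin.zero_eta, Fin.mk_one, Matrix.cons_val] <;> fun_prop

lemma errorRate_blockMean {q β : ℝ} {w : Fin 4 → ℝ} {x : Fin 3} (hp : blockProb q w x ≠ 0)
    (hb : blockErr β w x ≠ 1) : errorRate (blockMean q β w x) = blockErr β w x := by
  have : 1 - blockErr β w x ≠ 0 := sub_ne_zero.2 hb.symm
  simp only [errorRate, blockMean, Matrix.cons_val]
  field_simp

lemma edgeProb_blockMean {q β : ℝ} {w : Fin 4 → ℝ} {x : Fin 3} (hp : blockProb q w x ≠ 0)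
    (hb : blockErr β w x ≠ 1) : edgeProb (blockMean q β w x) = blockProb q w x := by
  have : 1 - blockErr β w x ≠ 0 := sub_ne_zero.2 hb.symm
  rw [edgeProb, errorRate_blockMean hp hb]
  simp only [blockMean, Matrix.cons_val]
  field_simp

lemma eventually_contrast_blockMean {q β : ℝ} (hq : q ≠ 0) (hβ : β ≠ 1) :
    ∀ᶠ w in nhds 0, contrast (blockMean q β w) = w := by
  have hp : ∀ᶠ w in nhds 0, ∀ x, blockProb q w x ≠ 0 := eventually_all.2 fun x =>
    (contDiff_blockProb q x).continuous.continuousAt.eventually_ne (by rwa [blockProb_zero])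
  have hb : ∀ᶠ w in nhds 0, ∀ x, blockErr β w x ≠ 1 := eventually_all.2 fun x =>
    (contDiff_blockErr β x).continuous.continuousAt.eventually_ne (by rwa [blockErr_zero])
  filter_upwards [hp, hb] with w hp hb
  simp only [contrast, edgeProb_blockMean (hp _) (hb _), errorRate_blockMean (hp _) (hb _)]
  ext k
  fin_cases k <;> simp [blockProb, blockErr]

lemma contDiffAt_contrast {q β : ℝ} (hq : q ≠ 0) (hβ : β ≠ 1) :
    ContDiffAt ℝ 1 contrast (blockMean q β 0) := by
  have h0 (x : Fin 3) : blockMean q β 0 x 0 ≠ 0 := by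
    simpa [blockMean, blockProb_zero, blockErr_zero, sub_eq_zero] using ⟨hq, hβ.symm⟩
  have hrate (x : Fin 3) : ContDiffAt ℝ 1 (fun U : Fin 3 → Fin 2 → ℝ => errorRate (U x))
      (blockMean q β 0) := by
    unfold errorRate
    fun_prop (disch := exact h0 x)
  have h1 (x : Fin 3) : 1 - errorRate (blockMean q β 0 x) ≠ 0 := by
    rwa [errorRate_blockMean (by rwa [blockProb_zero]) (by rwa [blockErr_zero]), blockErr_zero,
      sub_ne_zero, ne_comm]
  have hprob (x : Fin 3) : ContDiffAt ℝ 1 (fun U : Fin 3 → Fin 2 → ℝ => edgeProb (U x))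
      (blockMean q β 0) := by
    unfold edgeProb
    fun_prop (disch := exact h1 x)
  refine contDiffAt_pi.2 fun k => ?_
  fin_cases k <;> simp only [contrast, Fin.zero_eta, Fin.mk_one, Fin.reduceFinMk,
    Matrix.cons_val] <;> fun_prop

lemma measurable_contrast : Measurable contrast := by
  unfold contrast edgeProb errorRate
  fun_prop

/-- Derivative of `contrast` at the block means of the limit model. -/
def contrastDeriv (q β : ℝ) : (Fin 3 → Fin 2 → ℝ) →L[ℝ] (Fin 4 → ℝ) :=
  fderiv ℝ contrast (blockMean q β 0)

lemma hasStrictFDerivAt_contrast {q β : ℝ} (hq : q ≠ 0) (hβ : β ≠ 1) :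
    HasStrictFDerivAt contrast (contrastDeriv q β) (blockMean q β 0) :=
  (contDiffAt_contrast hq hβ).hasStrictFDerivAt one_ne_zero

-- `contrast` has the right inverse `blockMean q β` near `0`, so its derivative has one as well.
lemma surjective_contrastDeriv {q β : ℝ} (hq : q ≠ 0) (hβ : β ≠ 1) :
    Function.Surjective (contrastDeriv q β) := by
  have hmean := ((contDiff_blockMean q β).differentiable one_ne_zero 0).hasFDerivAt
  have hcomp := (hasStrictFDerivAt_contrast hq hβ).hasFDerivAt.comp 0 hmean
  have hid := hcomp.unique <|
    (hasFDerivAt_id (𝕜 := ℝ) 0).congr_of_eventuallyEq (eventually_contrast_blockMean hq hβ)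
  exact fun w => ⟨fderiv ℝ (blockMean q β) 0 w, congr($hid w)⟩

/-- Derivative of the linear combination `t ⬝ᵥ contrast` at the block means of the limit model. -/
def contrastForm (q β : ℝ) (t : Fin 4 → ℝ) : (Fin 3 → Fin 2 → ℝ) →L[ℝ] ℝ :=
  (LinearMap.toContinuousLinearMap (dotProductBilin ℝ ℝ t)).comp (contrastDeriv q β)

lemma contrastForm_apply (q β : ℝ) (t : Fin 4 → ℝ) (U : Fin 3 → Fin 2 → ℝ) :
    contrastForm q β t U = t ⬝ᵥ contrastDeriv q β U := rfl

lemma hasStrictFDerivAt_dotProduct_contrast {q β : ℝ} (hq : q ≠ 0) (hβ : β ≠ 1) (t : Fin 4 → ℝ) :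
    HasStrictFDerivAt (fun U => t ⬝ᵥ contrast U) (contrastForm q β t) (blockMean q β 0) :=
  (LinearMap.toContinuousLinearMap (dotProductBilin ℝ ℝ t)).hasStrictFDerivAt.comp _
    (hasStrictFDerivAt_contrast hq hβ)

lemma eq_zero_of_contrastForm_eq_zero {q β : ℝ} (hq : q ≠ 0) (hβ : β ≠ 1) {t : Fin 4 → ℝ}
    (h : contrastForm q β t = 0) : t = 0 := by
  refine dotProduct_eq_zero t fun w => ?_
  obtain ⟨U, rfl⟩ := surjective_contrastDeriv hq hβ w
  rw [← contrastForm_apply, h, zero_apply]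

/-- Edge probability and error rate of block `x` under the deviation `w`, clamped to `[0, 1]`. -/
def rowParam (q β : ℝ) (x : Fin 3) (w : Fin 4 → ℝ) : unitInterval × unitInterval :=
  (Set.projIcc 0 1 zero_le_one (blockProb q w x), Set.projIcc 0 1 zero_le_one (blockErr β w x))

/-- Law of a pair of block `x` under the deviation `w`. -/
def rowLaw (q β : ℝ) (w : Fin 4 → ℝ) (x : Fin 3) : Measure (Bool × Bool × Bool) :=
  tripleLaw (rowParam q β x w).1 (rowParam q β x w).2

instance (q β : ℝ) (w : Fin 4 → ℝ) (x : Fin 3) : IsProbabilityMeasure (rowLaw q β w x) := by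
  unfold rowLaw
  infer_instance

lemma rowParam_zero (q β : unitInterval) (x : Fin 3) : rowParam q β x 0 = (q, β) := by
  rw [rowParam, blockProb_zero, blockErr_zero, Set.projIcc_val, Set.projIcc_val]

lemma rowLaw_zero (q β : unitInterval) (x : Fin 3) : rowLaw q β 0 x = tripleLaw q β := by
  rw [rowLaw, rowParam_zero]

lemma continuous_rowParam (q β : ℝ) (x : Fin 3) : Continuous (rowParam q β x) :=
  (continuous_projIcc.comp (contDiff_blockProb q x).continuous).prodMk
    (continuous_projIcc.comp (contDiff_blockErr β x).continuous)

lemma continuous_integral_rowLaw (q β : ℝ) (x : Fin 3) {E : Type*} [NormedAddCommGroup E]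
    [NormedSpace ℝ E] [CompleteSpace E] (f : Bool × Bool × Bool → E) :
    Continuous fun w => ∫ z, f z ∂rowLaw q β w x :=
  (continuous_integral_tripleLaw f).comp (continuous_rowParam q β x)

lemma continuous_variance_rowLaw (q β : ℝ) (x : Fin 3) (h : Bool × Bool × Bool → ℝ) :
    Continuous fun w => Var[h; rowLaw q β w x] :=
  (continuous_variance_tripleLaw h).comp (continuous_rowParam q β x)

lemma integral_pairObs_rowLaw {q β : ℝ} {w : Fin 4 → ℝ} {x : Fin 3}
    (hp : blockProb q w x ∈ unitInterval) (hb : blockErr β w x ∈ unitInterval) :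
    ∫ z, pairObs z ∂rowLaw q β w x = blockMean q β w x := by
  rw [rowLaw, integral_pairObs, rowParam, Set.projIcc_of_mem _ hp, Set.projIcc_of_mem _ hb,
    blockMean]

lemma eventually_blockProb_mem {q : ℝ} (hq : q ∈ Set.Ioo 0 1) :
    ∀ᶠ w in nhds 0, ∀ x, blockProb q w x ∈ unitInterval := eventually_all.2 fun x =>
  (contDiff_blockProb q x).continuous.continuousAt.eventually_mem
    (by simpa [blockProb_zero] using Icc_mem_nhds hq.1 hq.2)

lemma eventually_blockErr_mem {β : ℝ} (hβ : β ∈ Set.Ioo 0 1) :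
    ∀ᶠ w in nhds 0, ∀ x, blockErr β w x ∈ unitInterval := eventually_all.2 fun x =>
  (contDiff_blockErr β x).continuous.continuousAt.eventually_mem
    (by simpa [blockErr_zero] using Icc_mem_nhds hβ.1 hβ.2)

lemma eventually_contrast_integral_rowLaw {q β : ℝ} (hq : q ∈ Set.Ioo 0 1)
    (hβ : β ∈ Set.Ioo 0 1) :
    ∀ᶠ w in nhds 0, contrast (fun x => ∫ z, pairObs z ∂rowLaw q β w x) = w := by
  filter_upwards [eventually_blockProb_mem hq, eventually_blockErr_mem hβ,
    eventually_contrast_blockMean hq.1.ne' hβ.2.ne] with w hp hb hw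
  simp only [integral_pairObs_rowLaw (hp _) (hb _)]
  exact hw

end Contrast

section AsympCov

/-- Limiting covariance matrix of the four estimators, where `ρ x` is the limit of `n²` divided by
the number of pairs of block `x`. -/
def asympCov (q β : unitInterval) (ρ : Fin 3 → ℝ) : Matrix (Fin 4) (Fin 4) ℝ :=
  ∑ x, ρ x • Matrix.of fun k k' =>
    cov[fun z => contrastDeriv q β (Pi.single x (pairObs z)) k,
      fun z => contrastDeriv q β (Pi.single x (pairObs z)) k'; tripleLaw q β]

open scoped Matrix in
lemma dotProduct_asympCov_mulVec (q β : unitInterval) (ρ : Fin 3 → ℝ) (t : Fin 4 → ℝ) :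
    t ⬝ᵥ asympCov q β ρ *ᵥ t =
      ∑ x, ρ x * Var[fun z => contrastForm q β t (Pi.single x (pairObs z)); tripleLaw q β] := by
  simp only [asympCov, Matrix.sum_mulVec, dotProduct_sum, Matrix.smul_mulVec, dotProduct_smul,
    smul_eq_mul]
  refine sum_congr rfl fun x _ => congrArg _ ?_
  simp only [contrastForm_apply, dotProduct]
  rw [variance_fun_sum fun _ => MemLp.of_discrete]
  simp only [Matrix.mulVec, dotProduct, Matrix.of_apply, mul_sum]
  refine sum_congr rfl fun k _ => sum_congr rfl fun k' _ => ?_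
  rw [covariance_const_mul_left, covariance_const_mul_right, mul_comm _ (t k')]

lemma posDef_asympCov {q β : unitInterval} (hq : (q : ℝ) ∈ Set.Ioo 0 1)
    (hβ : (β : ℝ) ∈ Set.Ioo 0 1) {ρ : Fin 3 → ℝ} (hρ : ∀ x, 0 < ρ x) :
    (asympCov q β ρ).PosDef := by
  refine .of_dotProduct_mulVec_pos ?_ fun t ht => ?_
  · ext k k'
    simp [asympCov, Matrix.sum_apply, covariance_comm]
  set v : Fin 3 → ℝ := fun x =>
    ρ x * Var[fun z => contrastForm q β t (Pi.single x (pairObs z)); tripleLaw q β]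
  have hv (x : Fin 3) : 0 ≤ v x := mul_nonneg (hρ x).le (variance_nonneg _ _)
  rw [star_trivial, dotProduct_asympCov_mulVec]
  refine (sum_nonneg fun x _ => hv x).lt_of_ne' fun hsum => ht ?_
  rw [sum_eq_zero_iff_of_nonneg fun x _ => hv x] at hsum
  have hblock (x : Fin 3) :
      (contrastForm q β t).comp (.single ℝ (fun _ => Fin 2 → ℝ) x) = 0 :=
    eq_zero_of_variance_pairObs_eq_zero hq hβ <|
      (mul_eq_zero.1 (hsum x (mem_univ x))).resolve_left (hρ x).ne'
  refine eq_zero_of_contrastForm_eq_zero hq.1.ne' hβ.2.ne ?_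
  rw [← ContinuousLinearMap.coe_inj]
  exact LinearMap.pi_ext' fun x => congr($(hblock x).toLinearMap)

end AsympCov

section Coupling

lemma tendsto_measure_le_of_tendstoInDistribution {ι Ω' : Type*} {Ω : ι → Type*}
    [∀ i, MeasurableSpace (Ω i)] [MeasurableSpace Ω'] {μ : ∀ i, Measure (Ω i)} {μ' : Measure Ω'}
    [∀ i, IsProbabilityMeasure (μ i)] [IsProbabilityMeasure μ'] {l : Filter ι}
    {X : ∀ i, Ω i → ℝ} {W : Ω' → ℝ} (h : TendstoInDistribution X l W μ μ') {x : ℝ}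
    (hx : μ'.map W {x} = 0) :
    Tendsto (fun i => μ i {ω | X i ω ≤ x}) l (nhds (μ'.map W (Set.Iic x))) := by
  refine (ProbabilityMeasure.tendsto_measure_of_null_frontier_of_tendsto' h.tendsto
    (E := Set.Iic x) (by rwa [frontier_Iic])).congr fun i => ?_
  exact Measure.map_apply_of_aemeasurable (h.forall_aemeasurable i) measurableSet_Iic

variable {J Z : Type} [DecidableEq J] [MeasurableSpace Z] {ι : ℕ → Type} [∀ k, Fintype (ι k)]
  {cl : ∀ k, ι k → J} {ν : ℕ → J → Measure Z} {r : ℕ → ℝ} {ρ : J → ℝ}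

lemma exists_isBlockArray [∀ k x, IsProbabilityMeasure (ν k x)] (hr : Tendsto r atTop atTop)
    (hρ : ∀ x, Tendsto (fun k => r k ^ 2 / blockCard (cl k) x) atTop (nhds (ρ x)))
    (hpos : ∀ x, 0 < ρ x) :
    ∃ (Ω : Type) (_ : MeasurableSpace Ω) (μ : Measure Ω) (ξ : ∀ k, ι k → Ω → Z),
      IsProbabilityMeasure μ ∧ IsBlockArray μ cl ν r ρ ξ := by
  obtain ⟨Ω, mΩ, μ, X, -, hlaw, hindep, hμ⟩ :=
    exists_hasLaw_indepFun (fun _ : Σ k, ι k => Z) fun i => ν i.1 (cl i.1 i.2)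
  exact ⟨Ω, mΩ, μ, fun k i => X ⟨k, i⟩, hμ, fun k i => hlaw ⟨k, i⟩,
    fun k => hindep.precomp sigma_mk_injective, hr, hρ, hpos⟩

end Coupling

section Pairs

/-- The pairs `i < j` of nodes. -/
abbrev Pair (n : ℕ) : Type := {p : Fin n × Fin n // p.1 < p.2}

/-- The block of a pair with labels `a`, `b`: `0` within group 1 (label `true`), `1` within
group 2, `2` between groups. -/
def labelBlock (a b : Bool) : Fin 3 := if a then (if b then 0 else 2) else (if b then 2 else 1)

/-- The block of a pair of nodes with labels `l`. -/
def pairBlock {n : ℕ} (l : Fin n → Bool) (p : Pair n) : Fin 3 := labelBlock (l p.1.1) (l p.1.2)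

lemma sum_univ_pair {n : ℕ} {M : Type*} [AddCommMonoid M] (F : Fin n → Fin n → M) :
    ∑ p : Pair n, F p.1.1 p.1.2 = ∑ i, ∑ j, if i < j then F i j else 0 := by
  rw [← sum_subtype (p := fun p : Fin n × Fin n => p.1 < p.2) {p : Fin n × Fin n | p.1 < p.2}
    (by simp) fun p => F p.1 p.2, sum_filter, Fintype.sum_prod_type]

lemma two_mul_sum_univ_pair {n : ℕ} {F : Fin n → Fin n → ℝ} (hF : ∀ i j, F i j = F j i) :
    2 * ∑ p : Pair n, F p.1.1 p.1.2 = ∑ i, ∑ j, F i j - ∑ i, F i i := by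
  have hswap : ∑ i, ∑ j, (if j < i then F i j else 0) = ∑ p : Pair n, F p.1.1 p.1.2 := by
    rw [sum_comm, sum_univ_pair]
    simp only [hF]
  have hdiag : ∑ i, F i i = ∑ i, ∑ j, if i = j then F i j else 0 := by simp
  rw [two_mul, eq_sub_iff_add_eq, hdiag]
  nth_rw 1 [sum_univ_pair]
  rw [← hswap]
  simp only [← sum_add_distrib]
  refine sum_congr rfl fun i _ => sum_congr rfl fun j _ => ?_
  rcases lt_trichotomy i j with h | h | h <;> simp [h, ne_of_lt, ne_of_gt, not_lt_of_gt]

/-- Number of nodes of group 1. -/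
def groupCard {n : ℕ} (l : Fin n → Bool) : ℝ := ∑ i, if l i then 1 else 0

lemma sum_comp_label {n : ℕ} (l : Fin n → Bool) (g : Bool → ℝ) :
    ∑ i, g (l i) = groupCard l * g true + (n - groupCard l) * g false := by
  have hcard : (n : ℝ) - groupCard l = ∑ i, if l i then 0 else 1 := by
    rw [sub_eq_iff_eq_add, groupCard, ← sum_add_distrib]
    simp [ite_add_ite]
  rw [hcard, groupCard, sum_mul, sum_mul, ← sum_add_distrib]
  refine sum_congr rfl fun i _ => ?_
  cases l i <;> simp

lemma blockCard_pairBlock {n : ℕ} (l : Fin n → Bool) (x : Fin 3) :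
    (blockCard (pairBlock l) x : ℝ) = ![(groupCard l ^ 2 - groupCard l) / 2,
      ((n - groupCard l) ^ 2 - (n - groupCard l)) / 2, groupCard l * (n - groupCard l)] x := by
  set F : Bool → Bool → ℝ := fun a b => if labelBlock a b = x then 1 else 0
  have hF (a b : Bool) : F a b = F b a := by cases a <;> cases b <;> rfl
  have htwo := two_mul_sum_univ_pair (n := n) (F := fun i j => F (l i) (l j)) fun i j => hF _ _
  simp only [fun i => sum_comp_label l (F (l i)), sum_add_distrib, ← mul_sum,
    fun b => sum_comp_label l (F · b), sum_comp_label l fun a => F a a] at htwo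
  have hcard : (blockCard (pairBlock l) x : ℝ) = ∑ p : Pair n, F (l p.1.1) (l p.1.2) := by
    simp only [F, sum_boole, blockCard, pairBlock]
    congr
  rw [hcard, ← mul_right_inj' two_ne_zero, htwo]
  fin_cases x <;> simp only [F, labelBlock, Fin.zero_eta, Fin.mk_one, Fin.reduceFinMk,
    Fin.reduceEq, Matrix.cons_val, if_true, if_false, Bool.false_eq_true, zero_ne_one,
    one_ne_zero] <;> ring

/-- Limit of the number of pairs of block `x` divided by `n²`, when a fraction `κ` of the nodes is
in group 1. -/
def blockFreq (κ : ℝ) : Fin 3 → ℝ := ![κ ^ 2 / 2, (1 - κ) ^ 2 / 2, κ * (1 - κ)]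

lemma blockFreq_pos {κ : ℝ} (hκ : κ ∈ Set.Ioo 0 1) (x : Fin 3) : 0 < blockFreq κ x := by
  have h0 : 0 < κ := hκ.1
  have h1 : 0 < 1 - κ := sub_pos.2 hκ.2
  fin_cases x <;> simp only [blockFreq, Fin.zero_eta, Fin.mk_one, Fin.reduceFinMk,
    Matrix.cons_val] <;> positivity

lemma tendsto_blockCard_div_sq {κ : ℝ} {l : ∀ n, Fin n → Bool}
    (h : Tendsto (fun n => groupCard (l n) / n) atTop (nhds κ)) (x : Fin 3) :
    Tendsto (fun n => (blockCard (pairBlock (l n)) x : ℝ) / n ^ 2) atTop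
      (nhds (blockFreq κ x)) := by
  have hinv : Tendsto (fun n : ℕ => (n : ℝ)⁻¹) atTop (nhds 0) := tendsto_inv_atTop_nhds_zero_nat
  set s : ℕ → ℝ := fun n => groupCard (l n) / n
  have hs : (fun n : ℕ => ![(s n ^ 2 - s n * (n : ℝ)⁻¹) / 2,
      ((1 - s n) ^ 2 - (1 - s n) * (n : ℝ)⁻¹) / 2, s n * (1 - s n)] x) =ᶠ[atTop]
      fun n => (blockCard (pairBlock (l n)) x : ℝ) / n ^ 2 := by
    filter_upwards [eventually_ne_atTop 0] with n hn
    have : (n : ℝ) ≠ 0 := Nat.cast_ne_zero.2 hn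
    rw [blockCard_pairBlock]
    fin_cases x <;> simp only [s, Fin.zero_eta, Fin.mk_one, Fin.reduceFinMk, Matrix.cons_val] <;>
      field_simp
  refine Tendsto.congr' hs ?_
  have h' := h.const_sub 1
  fin_cases x <;> simp only [blockFreq, Fin.zero_eta, Fin.mk_one, Fin.reduceFinMk, Matrix.cons_val]
  · simpa using ((h.pow 2).sub (h.mul hinv)).div_const 2
  · simpa using ((h'.pow 2).sub (h'.mul hinv)).div_const 2
  · exact h.mul h'

lemma tendsto_sq_div_blockCard {κ : ℝ} (hκ : κ ∈ Set.Ioo 0 1) {l : ∀ n, Fin n → Bool}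
    (h : Tendsto (fun n => groupCard (l n) / n) atTop (nhds κ)) (x : Fin 3) :
    Tendsto (fun n : ℕ => (n : ℝ) ^ 2 / blockCard (pairBlock (l n)) x) atTop
      (nhds (blockFreq κ x)⁻¹) := by
  simpa using (tendsto_blockCard_div_sq h x).inv₀ (blockFreq_pos hκ x).ne'

end Pairs

section ArrayLaw

/-- Conditional law, given the labels `l`, of the construct and observed entries of all pairs. -/
def arrayLaw (q β : ℝ) (w : Fin 4 → ℝ) {n : ℕ} (l : Fin n → Bool) :
    Measure (Pair n → Bool × Bool × Bool) :=
  Measure.pi fun p => rowLaw q β w (pairBlock l p)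

instance (q β : ℝ) (w : Fin 4 → ℝ) {n : ℕ} (l : Fin n → Bool) :
    IsProbabilityMeasure (arrayLaw q β w l) := by
  unfold arrayLaw
  infer_instance

/-- The estimator of the deviation, as a function of the labels and of the pair array. -/
def contrastHat {n : ℕ} (l : Fin n → Bool) (z : Pair n → Bool × Bool × Bool) : Fin 4 → ℝ :=
  contrast fun x => blockAvg (pairBlock l) x pairObs z

variable {κ : ℝ} {q β : unitInterval} {w : ℕ → Fin 4 → ℝ} {l : ∀ n, Fin n → Bool}

open scoped Matrix in
lemma tendstoInDistribution_contrastHat (hq : (q : ℝ) ∈ Set.Ioo 0 1) (hβ : (β : ℝ) ∈ Set.Ioo 0 1)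
    (hw : Tendsto w atTop (nhds 0)) {ρ : Fin 3 → ℝ} {Ω : Type*} [MeasurableSpace Ω]
    {μ : Measure Ω} [IsProbabilityMeasure μ] {ξ : ∀ n, Pair n → Ω → Bool × Bool × Bool}
    (H : IsBlockArray μ (fun n => pairBlock (l n)) (fun n => rowLaw q β (w n)) (fun n => n) ρ ξ)
    (t : Fin 4 → ℝ) :
    TendstoInDistribution (fun n ω => n * (t ⬝ᵥ contrastHat (l n) (ξ n · ω) -
        t ⬝ᵥ contrast fun x => ∫ z, pairObs z ∂rowLaw q β (w n) x)) atTop id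
      (fun _ => μ) (gaussianReal 0 (t ⬝ᵥ asympCov q β ρ *ᵥ t).toNNReal) := by
  have hmean (x : Fin 3) : Tendsto (fun n => ∫ z, pairObs z ∂rowLaw q β (w n) x) atTop
      (nhds (blockMean q β 0 x)) := by
    have := ((continuous_integral_rowLaw q β x pairObs).tendsto 0).comp hw
    rwa [integral_pairObs_rowLaw (by simp [blockProb_zero]) (by simp [blockErr_zero])] at this
  have hvar (x : Fin 3) := ((continuous_variance_rowLaw q β x fun z =>
    contrastForm q β t (Pi.single x (pairObs z))).tendsto 0).comp hw
  simp only [rowLaw_zero] at hvar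
  have hnonneg : 0 ≤ t ⬝ᵥ asympCov q β ρ *ᵥ t := by
    rw [dotProduct_asympCov_mulVec]
    exact sum_nonneg fun x _ => mul_nonneg (H.limit_pos x).le (variance_nonneg _ _)
  exact H.tendstoInDistribution_comp_blockAvg .of_discrete norm_pairObs_le
    (tendsto_pi_nhds.2 hmean)
    ((Continuous.dotProduct continuous_const continuous_id).measurable.comp measurable_contrast)
    (hasStrictFDerivAt_dotProduct_contrast hq.1.ne' hβ.2.ne t) hvar
    ((Real.coe_toNNReal _ hnonneg).trans (dotProduct_asympCov_mulVec q β ρ t)) HasLaw.id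

open scoped Matrix in
lemma tendsto_arrayLaw_contrastHat (hκ : κ ∈ Set.Ioo 0 1) (hq : (q : ℝ) ∈ Set.Ioo 0 1)
    (hβ : (β : ℝ) ∈ Set.Ioo 0 1) (hw : Tendsto w atTop (nhds 0))
    (hl : Tendsto (fun n => groupCard (l n) / n) atTop (nhds κ)) {t : Fin 4 → ℝ} (ht : t ≠ 0)
    (x : ℝ) :
    Tendsto (fun n => arrayLaw q β (w n) (l n) {z | n * (t ⬝ᵥ (contrastHat (l n) z - w n)) ≤ x})
      atTop (nhds (gaussianReal 0
        (t ⬝ᵥ asympCov q β (blockFreq κ)⁻¹ *ᵥ t).toNNReal (Set.Iic x))) := by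
  have hρ (x : Fin 3) : 0 < (blockFreq κ)⁻¹ x := inv_pos.2 (blockFreq_pos hκ x)
  obtain ⟨Ω, _, μ, ξ, _, H⟩ := exists_isBlockArray (cl := fun n => pairBlock (l n))
    (ν := fun n => rowLaw q β (w n)) tendsto_natCast_atTop_atTop (tendsto_sq_div_blockCard hκ hl) hρ
  have hpos := (posDef_asympCov hq hβ hρ).dotProduct_mulVec_pos ht
  rw [star_trivial] at hpos
  have := nullSingletonClass_gaussianReal (μ := 0) (Real.toNNReal_pos.2 hpos).ne'
  have hcdf := tendsto_measure_le_of_tendstoInDistribution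
    (tendstoInDistribution_contrastHat hq hβ hw H t) (x := x) (by simp)
  rw [Measure.map_id] at hcdf
  refine hcdf.congr' ?_
  filter_upwards [hw.eventually (eventually_contrast_integral_rowLaw hq hβ)] with n hn
  have hlaw : HasLaw (fun ω p => ξ n p ω) (arrayLaw q β (w n) (l n)) μ :=
    (H.indep n).hasLaw_pi (H.hasLaw n)
  rw [hn, ← hlaw.map_eq, Measure.map_apply_of_aemeasurable hlaw.aemeasurable .of_discrete]
  simp only [dotProduct_sub, Set.preimage, Set.mem_ofPred_eq]

lemma tripleLaw_agree_lt_one (hq : (q : ℝ) ∈ Set.Ioo 0 1) (hβ : (β : ℝ) ∈ Set.Ioo 0 1) :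
    tripleLaw q β {z | z.2.1 = z.2.2} < 1 := by
  have hmass : 0 < tripleMass q β (true, true, false) :=
    mul_pos (mul_pos hq.1 (sub_pos.2 hβ.2)) hβ.1
  refine prob_le_one.lt_of_ne fun hone => hmass.not_ge ?_
  rw [← ENNReal.ofReal_eq_zero, ← tripleLaw_singleton]
  exact measure_mono_null (by simp) ((prob_compl_eq_zero_iff .of_discrete).2 hone)

lemma arrayLaw_agree_le (w : Fin 4 → ℝ) {n : ℕ} (l : Fin n → Bool) :
    arrayLaw q β w l {z | ∀ p, (z p).2.1 = (z p).2.2} ≤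
      tripleLaw q β {z | z.2.1 = z.2.2} ^ blockCard (pairBlock l) 2 := by
  have hpi : {z : Pair n → Bool × Bool × Bool | ∀ p, (z p).2.1 = (z p).2.2} =
      Set.univ.pi fun _ => {z | z.2.1 = z.2.2} := by
    ext z
    simp
  set s : Finset (Pair n) := {p | pairBlock l p = 2}
  have hrow (p : Pair n) (hp : p ∈ s) :
      rowLaw q β w (pairBlock l p) = tripleLaw q β := by
    rw [(mem_filter.1 hp).2, rowLaw, rowParam, blockProb, blockErr]
    simp
  rw [hpi, arrayLaw, Measure.pi_pi, blockCard, ← prod_const]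
  refine (prod_le_prod_of_subset_of_le_one' (subset_univ s) fun _ _ _ => prob_le_one).trans_eq ?_
  exact prod_congr rfl fun p hp => by rw [hrow p hp]

lemma tendsto_arrayLaw_agree (hκ : κ ∈ Set.Ioo 0 1) (hq : (q : ℝ) ∈ Set.Ioo 0 1)
    (hβ : (β : ℝ) ∈ Set.Ioo 0 1) (hl : Tendsto (fun n => groupCard (l n) / n) atTop (nhds κ)) :
    Tendsto (fun n => arrayLaw q β (w n) (l n) {z | ∀ p, (z p).2.1 = (z p).2.2}) atTop
      (nhds 0) := by
  have hcard : Tendsto (fun n => blockCard (pairBlock (l n)) 2) atTop atTop := by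
    rw [← tendsto_natCast_atTop_iff (R := ℝ)]
    refine ((tendsto_blockCard_div_sq hl 2).pos_mul_atTop (blockFreq_pos hκ 2) <|
      (tendsto_pow_atTop two_ne_zero).comp tendsto_natCast_atTop_atTop).congr' ?_
    filter_upwards [eventually_ne_atTop 0] with n hn
    exact div_mul_cancel₀ _ (pow_ne_zero 2 (Nat.cast_ne_zero.2 hn))
  exact tendsto_of_tendsto_of_tendsto_of_le_of_le tendsto_const_nhds
    ((ENNReal.tendsto_pow_atTop_nhds_zero_of_lt_one (tripleLaw_agree_lt_one hq hβ)).comp hcard)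
    (fun _ => zero_le) fun n => arrayLaw_agree_le (w n) (l n)

end ArrayLaw

section ModelLaw

/-- Law of `n` i.i.d. labels, equal to `true` with probability `κ`. -/
def labelLaw (κ : unitInterval) (n : ℕ) : Measure (Fin n → Bool) :=
  Measure.pi fun _ => bernoulliMeasure true false κ

instance (κ : unitInterval) (n : ℕ) : IsProbabilityMeasure (labelLaw κ n) := by
  unfold labelLaw
  infer_instance

lemma labelLaw_real_singleton (κ : unitInterval) {n : ℕ} (l : Fin n → Bool) :
    (labelLaw κ n).real {l} = labelMass κ l := by
  have hlabel (b : Bool) :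
      (bernoulliMeasure true false κ).real {b} = if b then (κ : ℝ) else 1 - κ := by
    cases b <;> simp
  rw [← Set.univ_pi_singleton, labelLaw, measureReal_def, Measure.pi_pi, ENNReal.toReal_prod,
    labelMass]
  exact prod_congr rfl fun i _ => hlabel (l i)

lemma ae_tendsto_groupCard_div {Ω : Type*} [MeasurableSpace Ω] {μ : Measure Ω}
    {κ : unitInterval} {X : ℕ → Ω → Bool} (hX : ∀ i, HasLaw (X i) (bernoulliMeasure true false κ) μ)
    (hindep : iIndepFun X μ) :
    ∀ᵐ ω ∂μ, Tendsto (fun n => groupCard (fun i : Fin n => X i ω) / n) atTop (nhds (κ : ℝ)) := by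
  set f : Bool → ℝ := fun b => if b then 1 else 0
  have hf : Measurable f := .of_discrete
  have hlaw (i : ℕ) : HasLaw (f ∘ X i) ((bernoulliMeasure true false κ).map f) μ :=
    HasLaw.comp ⟨hf.aemeasurable, rfl⟩ (hX i)
  have hmean : μ[f ∘ X 0] = (κ : ℝ) := by
    rw [(hX 0).integral_comp hf.aestronglyMeasurable, integral_bernoulliMeasure]
    simp [f]
  have hint : Integrable (f ∘ X 0) μ := by
    have : Integrable f (bernoulliMeasure true false κ) := .of_finite
    rw [← (hX 0).map_eq] at this
    exact this.comp_aemeasurable (hX 0).aemeasurable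
  filter_upwards [strong_law_ae_real (fun i => f ∘ X i) hint
    (fun i j hij => (hindep.indepFun hij).comp hf hf)
    fun i => (hlaw i).identDistrib (hlaw 0)] with ω hω
  rw [hmean] at hω
  refine hω.congr fun n => ?_
  rw [groupCard, ← Fin.sum_univ_eq_sum_range (fun i => (f ∘ X i) ω)]
  rfl

lemma tendsto_lintegral_labelLaw {κ : unitInterval} {F : ∀ n, (Fin n → Bool) → ENNReal}
    {L : ENNReal} (hF : ∀ n l, F n l ≤ 1)
    (h : ∀ l : ∀ n, Fin n → Bool, Tendsto (fun n => groupCard (l n) / n) atTop (nhds (κ : ℝ)) →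
      Tendsto (fun n => F n (l n)) atTop (nhds L)) :
    Tendsto (fun n => ∫⁻ l, F n l ∂labelLaw κ n) atTop (nhds L) := by
  obtain ⟨Ω, _, μ, X, hmeas, hX, hindep, _⟩ := exists_iid ℕ (bernoulliMeasure true false κ)
  have hlaw (n : ℕ) : HasLaw (fun ω (i : Fin n) => X i ω) (labelLaw κ n) μ :=
    (hindep.precomp Fin.val_injective).hasLaw_pi fun i => hX i
  have hlim := tendsto_lintegral_of_dominated_convergence (μ := μ) 1
    (F := fun n ω => F n fun i => X i ω) (f := fun _ => L)
    (fun n => Measurable.of_discrete.comp (measurable_pi_lambda _ fun i => hmeas i))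
    (fun n => .of_forall fun ω => hF n _) (by simp)
    ((ae_tendsto_groupCard_div hX hindep).mono fun ω => h _)
  simp only [lintegral_const, measure_univ, mul_one] at hlim
  refine hlim.congr fun n => ?_
  exact (hlaw n).lintegral_comp (f := F n) .of_discrete

/-- Joint law of the labels and of the pair array. -/
def modelLaw (κ : unitInterval) (q β : ℝ) (w : Fin 4 → ℝ) (n : ℕ) :
    Measure ((Fin n → Bool) × (Pair n → Bool × Bool × Bool)) :=
  (labelLaw κ n).bind fun l => (arrayLaw q β w l).map (Prod.mk l)

lemma modelLaw_apply (κ : unitInterval) (q β : ℝ) (w : Fin 4 → ℝ) {n : ℕ}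
    (S : Set ((Fin n → Bool) × (Pair n → Bool × Bool × Bool))) :
    modelLaw κ q β w n S = ∫⁻ l, arrayLaw q β w l (Prod.mk l ⁻¹' S) ∂labelLaw κ n := by
  rw [modelLaw, Measure.bind_apply .of_discrete .of_discrete]
  simp only [Measure.map_apply measurable_prodMk_left (.of_discrete (s := S))]

instance (κ : unitInterval) (q β : ℝ) (w : Fin 4 → ℝ) (n : ℕ) :
    IsProbabilityMeasure (modelLaw κ q β w n) := ⟨by simp [modelLaw_apply]⟩

lemma tendsto_modelLaw {κ : unitInterval} {q β : ℝ} {w : ℕ → Fin 4 → ℝ} {L : ENNReal}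
    {S : ∀ n, Set ((Fin n → Bool) × (Pair n → Bool × Bool × Bool))}
    (h : ∀ l : ∀ n, Fin n → Bool, Tendsto (fun n => groupCard (l n) / n) atTop (nhds (κ : ℝ)) →
      Tendsto (fun n => arrayLaw q β (w n) (l n) (Prod.mk (l n) ⁻¹' S n)) atTop (nhds L)) :
    Tendsto (fun n => modelLaw κ q β (w n) n (S n)) atTop (nhds L) := by
  simp only [modelLaw_apply]
  exact tendsto_lintegral_labelLaw (fun _ _ => prob_le_one) h

end ModelLaw

section Conditioning

lemma tendsto_cond_of_tendsto_compl {ι : Type*} {Ω : ι → Type*} [∀ i, MeasurableSpace (Ω i)]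
    {μ : ∀ i, Measure (Ω i)} [∀ i, IsProbabilityMeasure (μ i)] {a : Filter ι}
    {S T : ∀ i, Set (Ω i)} {L : ENNReal} (hS : ∀ i, MeasurableSet (S i))
    (hcompl : Tendsto (fun i => μ i (S i)ᶜ) a (nhds 0))
    (hT : Tendsto (fun i => μ i (T i)) a (nhds L)) :
    Tendsto (fun i => cond (μ i) (S i) (T i)) a (nhds L) := by
  have hone : Tendsto (fun i => μ i (S i)) a (nhds 1) := by
    have h := ENNReal.Tendsto.sub (tendsto_const_nhds (x := 1)) hcompl (.inl ENNReal.one_ne_top)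
    rw [tsub_zero] at h
    exact h.congr fun i => by rw [← prob_compl_eq_one_sub (hS i).compl, compl_compl]
  have hinter : Tendsto (fun i => μ i (S i ∩ T i)) a (nhds L) := by
    refine tendsto_of_tendsto_of_tendsto_of_le_of_le
      (by simpa using ENNReal.Tendsto.sub hT hcompl (.inr ENNReal.zero_ne_top)) hT (fun i => ?_)
      fun i => measure_mono Set.inter_subset_right
    rw [tsub_le_iff_right]
    refine (measure_mono fun ω hω => ?_).trans (measure_union_le _ _)
    exact (em (ω ∈ S i)).imp (⟨·, hω⟩) id
  simp only [cond_apply (hS _)]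
  simpa using ENNReal.Tendsto.mul (tendsto_inv_iff.2 hone) (by simp) hinter (by simp)

lemma cond_preimage_of_hasLaw {Ω K : Type*} [MeasurableSpace Ω] [MeasurableSpace K]
    {μ : Measure Ω} {ν : Measure K} {X : Ω → K} (hX : HasLaw X ν μ) {S T : Set K}
    (hS : MeasurableSet S) (hT : MeasurableSet T) :
    cond μ (X ⁻¹' S) (X ⁻¹' T) = cond ν S T := by
  have hS' := hX.aemeasurable.nullMeasurableSet_preimage hS
  rw [cond_apply hS, ← hX.map_eq, Measure.map_apply_of_aemeasurable hX.aemeasurable hS,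
    Measure.map_apply_of_aemeasurable hX.aemeasurable (hS.inter hT), ProbabilityTheory.cond,
    Measure.smul_apply, Measure.restrict_apply₀' hS', smul_eq_mul, Set.preimage_inter,
    Set.inter_comm]

end Conditioning

section FiniteLaw

variable {Ω K : Type*} [MeasurableSpace Ω] {μ : Measure Ω}

lemma nullMeasurableSet_of_add_compl_le [IsFiniteMeasure μ] {s : Set Ω}
    (h : μ s + μ sᶜ ≤ μ Set.univ) : NullMeasurableSet s μ := by
  have hmeas := (measurableSet_toMeasurable μ sᶜ).compl
  have hle : μ s ≤ μ (toMeasurable μ sᶜ)ᶜ := by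
    rw [measure_compl (measurableSet_toMeasurable μ sᶜ) (measure_ne_top _ _), measure_toMeasurable]
    exact ENNReal.le_sub_of_add_le_right (measure_ne_top _ _) h
  exact hmeas.nullMeasurableSet.congr <| ae_eq_of_subset_of_measure_ge
    (Set.compl_subset_comm.1 (subset_toMeasurable μ sᶜ)) hle hmeas.nullMeasurableSet
    (measure_ne_top _ _)

variable [MeasurableSpace K] [Finite K] [MeasurableSingletonClass K] {ν : Measure K} {X : Ω → K}

lemma measure_preimage_le_of_singleton (h : ∀ k, μ (X ⁻¹' {k}) = ν {k}) (s : Set K) :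
    μ (X ⁻¹' s) ≤ ν s := by
  lift s to Finset K using s.toFinite
  calc μ (X ⁻¹' s) ≤ ∑ k ∈ s, μ (X ⁻¹' {k}) := by
        rw [← Set.biUnion_preimage_singleton]
        exact measure_biUnion_finset_le s _
    _ = ν s := by simp only [h, sum_measure_singleton]

lemma hasLaw_of_measure_preimage_singleton [IsProbabilityMeasure μ] [IsProbabilityMeasure ν]
    (h : ∀ k, μ (X ⁻¹' {k}) = ν {k}) : HasLaw X ν μ := by
  have hX : AEMeasurable X μ := by
    refine NullMeasurable.aemeasurable fun s hs => nullMeasurableSet_of_add_compl_le ?_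
    calc μ (X ⁻¹' s) + μ (X ⁻¹' s)ᶜ ≤ ν s + ν sᶜ := add_le_add
          (measure_preimage_le_of_singleton h s) (measure_preimage_le_of_singleton h sᶜ)
      _ = μ Set.univ := by simp [measure_add_measure_compl hs]
  refine ⟨hX, Measure.ext_of_singleton fun k => ?_⟩
  rw [Measure.map_apply_of_aemeasurable hX (measurableSet_singleton k), h]

end FiniteLaw

section ObsSBM

/-- The symmetric loopless network with prescribed entries above the diagonal. -/
def symExt {n : ℕ} (f : Pair n → Bool) (i j : Fin n) : Bool :=
  if h : i < j then f ⟨(i, j), h⟩ else if h : j < i then f ⟨(j, i), h⟩ else false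

lemma symExt_symm {n : ℕ} (f : Pair n → Bool) (i j : Fin n) : symExt f i j = symExt f j i := by
  rcases lt_trichotomy i j with h | rfl | h <;> simp [symExt, *, not_lt_of_gt]

lemma symExt_loopless {n : ℕ} (f : Pair n → Bool) (i : Fin n) : symExt f i i = false := by
  simp [symExt]

lemma symExt_apply {n : ℕ} (f : Pair n → Bool) (p : Pair n) : symExt f p.1.1 p.1.2 = f p := by
  simp [symExt, p.2]

lemma eq_iff_forall_pair {n : ℕ} {a a' : Fin n → Fin n → Bool} (hs : ∀ i j, a i j = a j i)
    (h0 : ∀ i, a i i = false) (hs' : ∀ i j, a' i j = a' j i) (h0' : ∀ i, a' i i = false) :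
    a = a' ↔ ∀ p : Pair n, a p.1.1 p.1.2 = a' p.1.1 p.1.2 := by
  refine ⟨fun h p => by rw [h], fun h => ?_⟩
  ext i j
  rcases lt_trichotomy i j with hij | rfl | hij
  · rw [h ⟨(i, j), hij⟩]
  · rw [h0, h0']
  · rw [hs, hs', h ⟨(j, i), hij⟩]

/-- The entries of a construct network and of two observed networks, listed pair by pair. -/
def pairArray {n : ℕ} (a y y' : Fin n → Fin n → Bool) (p : Pair n) : Bool × Bool × Bool :=
  (a p.1.1 p.1.2, y p.1.1 p.1.2, y' p.1.1 p.1.2)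

lemma sbmB_eq_labelBlock (v : Fin 3 → ℝ) :
    sbmB (v 0) (v 1) (v 2) = fun a b => v (labelBlock a b) := by
  ext a b
  cases a <;> cases b <;> rfl

lemma edgeMass_mul_obsMass_mul_obsMass {n : ℕ} (B βm : Bool → Bool → ℝ) (l : Fin n → Bool)
    (z : Pair n → Bool × Bool × Bool) :
    edgeMass B l (symExt fun p => (z p).1)
        * obsMass βm l (symExt fun p => (z p).1) (symExt fun p => (z p).2.1)
        * obsMass βm l (symExt fun p => (z p).1) (symExt fun p => (z p).2.2)
      = ∏ p, tripleMass (B (l p.1.1) (l p.1.2)) (βm (l p.1.1) (l p.1.2)) (z p) := by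
  have hpair (F : Fin n × Fin n → ℝ) : ∏ p with p.1 < p.2, F p = ∏ p : Pair n, F p.1 :=
    prod_subtype _ (by simp) F
  simp only [edgeMass, obsMass, hpair, symExt_apply, ← prod_mul_distrib]
  rfl

lemma arrayLaw_real_singleton {q β : ℝ} {w : Fin 4 → ℝ} (hp : ∀ x, blockProb q w x ∈ unitInterval)
    (hb : ∀ x, blockErr β w x ∈ unitInterval) {n : ℕ} (l : Fin n → Bool)
    (z : Pair n → Bool × Bool × Bool) :
    (arrayLaw q β w l).real {z} =
      ∏ p, tripleMass (blockProb q w (pairBlock l p)) (blockErr β w (pairBlock l p)) (z p) := by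
  rw [← Set.univ_pi_singleton, arrayLaw, measureReal_def, Measure.pi_pi, ENNReal.toReal_prod]
  refine prod_congr rfl fun p _ => ?_
  rw [rowLaw, tripleLaw_singleton, ENNReal.toReal_ofReal (tripleMass_nonneg _ _ _), rowParam,
    Set.projIcc_of_mem _ (hp _), Set.projIcc_of_mem _ (hb _)]

lemma modelLaw_singleton (κ : unitInterval) (q β : ℝ) (w : Fin 4 → ℝ) {n : ℕ} (l : Fin n → Bool)
    (z : Pair n → Bool × Bool × Bool) :
    modelLaw κ q β w n {(l, z)} = labelLaw κ n {l} * arrayLaw q β w l {z} := by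
  have hpre : (fun l' => arrayLaw q β w l' (Prod.mk l' ⁻¹' {(l, z)})) =
      Set.indicator {l} fun l' => arrayLaw q β w l' {z} := by
    ext l'
    by_cases h : l' = l
    · subst h
      rw [Set.indicator_of_mem (Set.mem_singleton l'), ← Set.singleton_prod_singleton,
        Set.mk_preimage_prod_right (Set.mem_singleton l')]
    · rw [Set.indicator_of_notMem (s := {l}) h, ← Set.singleton_prod_singleton,
        Set.mk_preimage_prod_right_eq_empty (s := {l}) h, measure_empty]
  rw [modelLaw_apply, hpre, lintegral_indicator (measurableSet_singleton l),
    lintegral_singleton, mul_comm]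

lemma IsObsSBM.hasLaw {Ω : Type*} [MeasurableSpace Ω] {P : Measure Ω} {n : ℕ} {κ : unitInterval}
    {q β : ℝ} {w : Fin 4 → ℝ} (hp : ∀ x, blockProb q w x ∈ unitInterval)
    (hb : ∀ x, blockErr β w x ∈ unitInterval)
    {c : Ω → Fin n → Bool} {A Y Y' : Ω → Fin n → Fin n → Bool}
    (h : IsObsSBM P n (sbmB (blockProb q w 0) (blockProb q w 1) (blockProb q w 2))
      (sbmB (blockErr β w 0) (blockErr β w 1) (blockErr β w 2)) κ c A Y Y') :
    HasLaw (fun ω => (c ω, pairArray (A ω) (Y ω) (Y' ω))) (modelLaw κ q β w n) P := by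
  have := h.isProb
  refine hasLaw_of_measure_preimage_singleton fun ⟨l, z⟩ => ?_
  have hset : (fun ω => (c ω, pairArray (A ω) (Y ω) (Y' ω))) ⁻¹' {(l, z)} =
      {ω | c ω = l ∧ A ω = symExt (fun p => (z p).1) ∧ Y ω = symExt (fun p => (z p).2.1) ∧
        Y' ω = symExt (fun p => (z p).2.2)} := by
    ext ω
    simp only [Set.mem_preimage, Set.mem_singleton_iff, Prod.ext_iff, funext_iff (g := z),
      pairArray, Set.mem_ofPred_eq, forall_and, symExt_apply,
      eq_iff_forall_pair (h.symmA ω) (h.looplessA ω) (symExt_symm _) (symExt_loopless _),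
      eq_iff_forall_pair (h.symmY ω) (h.looplessY ω) (symExt_symm _) (symExt_loopless _),
      eq_iff_forall_pair (h.symmY' ω) (h.looplessY' ω) (symExt_symm _) (symExt_loopless _)]
  rw [hset, h.law _ _ _ _ (symExt_symm _) (symExt_loopless _) (symExt_symm _) (symExt_loopless _)
    (symExt_symm _) (symExt_loopless _), mul_assoc, mul_assoc, ← mul_assoc (edgeMass _ _ _),
    edgeMass_mul_obsMass_mul_obsMass, sbmB_eq_labelBlock, sbmB_eq_labelBlock]
  change ENNReal.ofReal (_ * ∏ p, tripleMass (blockProb q w (pairBlock l p))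
    (blockErr β w (pairBlock l p)) (z p)) = _
  rw [← arrayLaw_real_singleton hp hb, ← labelLaw_real_singleton,
    ENNReal.ofReal_mul measureReal_nonneg, ofReal_measureReal, ofReal_measureReal,
    modelLaw_singleton]

end ObsSBM

section Statistic

variable {n : ℕ}

/-- The selector of the pairs of a block. -/
def blockSel (l : Fin n → Bool) : Fin 3 → Fin n → Fin n → Bool :=
  ![within1 l, within2 l, between l]

lemma blockSel_eq_true_iff (l : Fin n → Bool) (x : Fin 3) (p : Pair n) :
    blockSel l x p.1.1 p.1.2 = true ↔ pairBlock l p = x := by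
  unfold pairBlock
  fin_cases x <;> cases h : l p.1.1 <;> cases h' : l p.1.2 <;>
    simp [blockSel, labelBlock, within1, within2, between, h, h']

lemma pairCard_eq_sum (sel : Fin n → Fin n → Bool) :
    pairCard sel = ∑ p : Pair n, if sel p.1.1 p.1.2 then (1 : ℝ) else 0 := by
  rw [pairCard, ← filter_filter, card_filter,
    sum_subtype {p : Fin n × Fin n | p.1 < p.2} (p := fun p => p.1 < p.2)
      (F := inferInstance) (by simp)]
  push_cast
  rfl

lemma pairCard_blockSel (l : Fin n → Bool) (x : Fin 3) :
    pairCard (blockSel l x) = blockCard (pairBlock l) x := by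
  simp only [pairCard_eq_sum, blockSel_eq_true_iff, sum_boole, blockCard]

lemma pairCard_blockSel_and (l : Fin n → Bool) (x : Fin 3) (sel : Fin n → Fin n → Bool) :
    pairCard (fun i j => blockSel l x i j && sel i j) =
      ∑ p with pairBlock l p = x, if sel p.1.1 p.1.2 then (1 : ℝ) else 0 := by
  simp only [pairCard_eq_sum, Bool.and_eq_true, blockSel_eq_true_iff, sum_filter, ite_and]

lemma u1hat_blockSel (l : Fin n → Bool) (x : Fin 3) (a y y' : Fin n → Fin n → Bool) :
    u1hat (blockSel l x) y = blockAvg (pairBlock l) x pairObs (pairArray a y y') 0 := by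
  rw [u1hat, pairCard_blockSel, pairCard_blockSel_and, div_eq_inv_mul, blockAvg, Pi.smul_apply,
    Finset.sum_apply, smul_eq_mul]
  rfl

lemma u2hat_blockSel (l : Fin n → Bool) (x : Fin 3) (a y y' : Fin n → Fin n → Bool) :
    u2hat (blockSel l x) y y' = blockAvg (pairBlock l) x pairObs (pairArray a y y') 1 := by
  rw [u2hat, pairCard_blockSel, pairCard_blockSel_and, ← div_div, sum_div, div_eq_inv_mul,
    blockAvg, Pi.smul_apply, Finset.sum_apply, smul_eq_mul]
  simp only [ite_div, zero_div]
  rfl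

lemma estimators_eq_sqrt_smul_contrastHat (l : Fin n → Bool) (a y y' : Fin n → Fin n → Bool) :
    ![muHat1 l y y', muHat2 l y y', gammaHat1 l y y', gammaHat2 l y y'] =
      √n • contrastHat l (pairArray a y y') := by
  simp only [contrastHat, contrast, edgeProb, errorRate, ← u1hat_blockSel, ← u2hat_blockSel,
    Matrix.smul_cons, Matrix.smul_empty]
  rfl

open scoped Matrix in
lemma statistic_eq_dotProduct (hn : n ≠ 0) (t : Fin 4 → ℝ) (μ₁ μ₂ γ₁ γ₂ : ℝ) (l : Fin n → Bool)
    (a y y' : Fin n → Fin n → Bool) :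
    t 0 * (√n * (muHat1 l y y' - μ₁)) + t 1 * (√n * (muHat2 l y y' - μ₂))
        + t 2 * (√n * (gammaHat1 l y y' - γ₁)) + t 3 * (√n * (gammaHat2 l y y' - γ₂)) =
      n * (t ⬝ᵥ (contrastHat l (pairArray a y y') - (√n)⁻¹ • ![μ₁, μ₂, γ₁, γ₂])) := by
  have hest := estimators_eq_sqrt_smul_contrastHat l a y y'
  have hsqrt : √(n : ℝ) ≠ 0 := Real.sqrt_ne_zero'.2 (Nat.cast_pos.2 (Nat.pos_of_ne_zero hn))
  calc _ = √n * (t ⬝ᵥ (![muHat1 l y y', muHat2 l y y', gammaHat1 l y y', gammaHat2 l y y'] -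
          ![μ₁, μ₂, γ₁, γ₂])) := by
        simp only [dotProduct, Fin.sum_univ_four, Pi.sub_apply, Matrix.cons_val]
        ring
    _ = √n * (t ⬝ᵥ √n • (contrastHat l (pairArray a y y') - (√n)⁻¹ • ![μ₁, μ₂, γ₁, γ₂])) := by
        rw [hest, smul_sub, smul_inv_smul₀ hsqrt]
    _ = _ := by
        rw [dotProduct_smul, smul_eq_mul, ← mul_assoc, Real.mul_self_sqrt n.cast_nonneg]

open scoped Matrix in
lemma IsObsSBM.cond_statistic_le {Ω : Type*} [MeasurableSpace Ω] {P : Measure Ω}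
    {κ : unitInterval} {q β μ₁ μ₂ γ₁ γ₂ : ℝ} (hn : n ≠ 0)
    (hp : ∀ x, blockProb q ((√n)⁻¹ • ![μ₁, μ₂, γ₁, γ₂]) x ∈ unitInterval)
    (hb : ∀ x, blockErr β ((√n)⁻¹ • ![μ₁, μ₂, γ₁, γ₂]) x ∈ unitInterval)
    {c : Ω → Fin n → Bool} {A Y Y' : Ω → Fin n → Fin n → Bool}
    (h : IsObsSBM P n (sbmB (q + μ₁ / √n) (q + μ₂ / √n) q) (sbmB (β - γ₁ / √n) (β - γ₂ / √n) β) κ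
      c A Y Y') (t : Fin 4 → ℝ) (x : ℝ) :
    cond P {ω | Y ω ≠ Y' ω} {ω | t 0 * (√n * (muHat1 (c ω) (Y ω) (Y' ω) - μ₁))
        + t 1 * (√n * (muHat2 (c ω) (Y ω) (Y' ω) - μ₂))
        + t 2 * (√n * (gammaHat1 (c ω) (Y ω) (Y' ω) - γ₁))
        + t 3 * (√n * (gammaHat2 (c ω) (Y ω) (Y' ω) - γ₂)) ≤ x} =
      cond (modelLaw κ q β ((√n)⁻¹ • ![μ₁, μ₂, γ₁, γ₂]) n)
        {k | ¬∀ p, (k.2 p).2.1 = (k.2 p).2.2}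
        {k | n * (t ⬝ᵥ (contrastHat k.1 k.2 - (√n)⁻¹ • ![μ₁, μ₂, γ₁, γ₂])) ≤ x} := by
  have hlaw := IsObsSBM.hasLaw hp hb (c := c) (A := A) (Y := Y) (Y' := Y') (P := P)
    (by simpa [blockProb, blockErr, div_eq_inv_mul] using h)
  rw [← cond_preimage_of_hasLaw hlaw .of_discrete .of_discrete]
  congr 2
  · ext ω
    exact not_congr (eq_iff_forall_pair (h.symmY ω) (h.looplessY ω) (h.symmY' ω) (h.looplessY' ω))
  · simp only [fun ω => statistic_eq_dotProduct hn t μ₁ μ₂ γ₁ γ₂ (c ω) (A ω)]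
    rfl

end Statistic

section Limit

open scoped Matrix in
lemma quadForm4_eq_dotProduct_mulVec (M : Matrix (Fin 4) (Fin 4) ℝ) (t : Fin 4 → ℝ) :
    quadForm4 M t = t ⬝ᵥ M *ᵥ t := by
  simp only [quadForm4, dotProduct, Matrix.mulVec, mul_sum, mul_assoc]

open scoped Matrix in
lemma tendsto_cond_modelLaw_contrastHat {κ q β : unitInterval} {w : ℕ → Fin 4 → ℝ}
    (hκ : (κ : ℝ) ∈ Set.Ioo 0 1) (hq : (q : ℝ) ∈ Set.Ioo 0 1) (hβ : (β : ℝ) ∈ Set.Ioo 0 1)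
    (hw : Tendsto w atTop (nhds 0)) {t : Fin 4 → ℝ} (ht : t ≠ 0) (x : ℝ) :
    Tendsto (fun n => cond (modelLaw κ q β (w n) n) {k | ¬∀ p, (k.2 p).2.1 = (k.2 p).2.2}
        {k | n * (t ⬝ᵥ (contrastHat k.1 k.2 - w n)) ≤ x}) atTop
      (nhds (gaussianReal 0 (t ⬝ᵥ asympCov q β (blockFreq κ)⁻¹ *ᵥ t).toNNReal (Set.Iic x))) := by
  refine tendsto_cond_of_tendsto_compl (fun _ => .of_discrete) ?_
    (tendsto_modelLaw fun l hl => tendsto_arrayLaw_contrastHat hκ hq hβ hw hl ht x)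
  refine tendsto_modelLaw fun l hl => ?_
  refine (tendsto_arrayLaw_agree (w := w) hκ hq hβ hl).congr fun n => ?_
  congr 1
  ext z
  exact not_not.symm

end Limit

theorem statement_14
    (κ q β μ₁ μ₂ γ₁ γ₂ : ℝ)
    (hκ0 : 0 < κ) (hκ1 : κ < 1) (hq0 : 0 < q) (hq1 : q < 1)
    (hβ0 : 0 < β) (hβ1 : β < 1)
    (Ω : ℕ → Type) [mΩ : ∀ n, MeasurableSpace (Ω n)] (P : ∀ n, Measure (Ω n))
    (c : ∀ n, Ω n → Fin n → Bool)
    (A Y Y' : ∀ n, Ω n → Fin n → Fin n → Bool)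
    (hmodel : ∀ᶠ n : ℕ in atTop,
      IsObsSBM (P n) n
        (sbmB (q + μ₁ / Real.sqrt n) (q + μ₂ / Real.sqrt n) q)
        (sbmB (β - γ₁ / Real.sqrt n) (β - γ₂ / Real.sqrt n) β)
        κ (c n) (A n) (Y n) (Y' n)) :
    ∃ SigmaM : Matrix (Fin 4) (Fin 4) ℝ, SigmaM.PosDef ∧
      ∀ t : Fin 4 → ℝ, t ≠ 0 → ∀ x : ℝ,
        Tendsto (fun n =>
            ((ProbabilityTheory.cond (P n) {ω | Y n ω ≠ Y' n ω})
              {ω | t 0 * (Real.sqrt n *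
                    (muHat1 (c n ω) (Y n ω) (Y' n ω) - μ₁))
                + t 1 * (Real.sqrt n *
                    (muHat2 (c n ω) (Y n ω) (Y' n ω) - μ₂))
                + t 2 * (Real.sqrt n *
                    (gammaHat1 (c n ω) (Y n ω) (Y' n ω) - γ₁))
                + t 3 * (Real.sqrt n *
                    (gammaHat2 (c n ω) (Y n ω) (Y' n ω) - γ₂)) ≤ x}).toReal)
          atTop
          (nhds ((gaussianReal 0 (Real.toNNReal (quadForm4 SigmaM t))
            (Set.Iic x)).toReal)) := by
  lift κ to unitInterval using ⟨hκ0.le, hκ1.le⟩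
  lift q to unitInterval using ⟨hq0.le, hq1.le⟩
  lift β to unitInterval using ⟨hβ0.le, hβ1.le⟩
  have hw : Tendsto (fun n : ℕ => (√n)⁻¹ • ![μ₁, μ₂, γ₁, γ₂]) atTop (nhds 0) := by
    simpa using (tendsto_inv_atTop_zero.comp (Real.tendsto_sqrt_atTop.comp
      tendsto_natCast_atTop_atTop)).smul_const ![μ₁, μ₂, γ₁, γ₂]
  refine ⟨asympCov q β (blockFreq κ)⁻¹, posDef_asympCov ⟨hq0, hq1⟩ ⟨hβ0, hβ1⟩ fun x =>
    inv_pos.2 (blockFreq_pos ⟨hκ0, hκ1⟩ x), fun t ht x => ?_⟩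
  rw [quadForm4_eq_dotProduct_mulVec]
  refine (ENNReal.tendsto_toReal (measure_ne_top _ _)).comp
    ((tendsto_cond_modelLaw_contrastHat ⟨hκ0, hκ1⟩ ⟨hq0, hq1⟩ ⟨hβ0, hβ1⟩ hw ht x).congr' ?_)
  filter_upwards [hmodel, hw.eventually (eventually_blockProb_mem ⟨hq0, hq1⟩),
    hw.eventually (eventually_blockErr_mem ⟨hβ0, hβ1⟩), eventually_ne_atTop 0] with n h hp hb hn
  exact (h.cond_statistic_le hn hp hb t x).symm

end
end

section
/- Under the 2-group SBM with observation errors with q ∈ (0,1) and β̄ ∈ (0,1) a fixed tuning parameter, define, on the event Y ≠ Y*, the statistics Q_{n,β̄}(b) = (n(β̂_b − b), √n γ̂_1, √n γ̂_2)ᵀ Θ̂_β (n(β̂_b − b), √n γ̂_1, √n γ̂_2) and Q_{n,μ} = n (γ̂_1, γ̂_2, μ̂_1, μ̂_2)ᵀ Θ̂_μ (γ̂_1, γ̂_2, μ̂_1, μ̂_2), where Θ̂_β and Θ̂_μ are consistent (in operator norm) estimators of the corresponding asymptotic precision matrices Σ_β^{−1} and Σ_μ^{−1}. Define the test function Ψ_α(Y,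 Y*, c) = 1{Y ≠ Y*} · 1{min_{b ∈ [0, β̄]} Q_{n,β̄}(b) > c^{(3)}_α} · 1{Q_{n,μ} > c^{(4)}_α}, where c^{(ν)}_α is the (1 − α)-quantile of the chi-squared distribution with ν degrees of freedom. Then for every parameter configuration in the null set H_{0,β̄} = {γ_1 = γ_2 = 0, β ∈ [0, β̄]} ∪ {γ_1 = γ_2 = 0, μ_1 = μ_2 = 0}, the test asymptotically controls the type I error at level α: limsup_{n→∞} P(Ψ_α(Y, Y*, c) = 1) ≤ α. -/
/-!
STATEMENT 17: Asymptotic level-α control of the intersection–union test for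
systematic bias under the 2-group SBM with observation errors.  On the event
Y ≠ Y*, Q_{n,β̄}(b) and Q_{n,μ} are quadratic forms in the statistics
(n(β̂_b − b), √n γ̂₁, √n γ̂₂) resp. √n(γ̂₁, γ̂₂, μ̂₁, μ̂₂), built from
consistent estimators Θ̂_β, Θ̂_μ of the asymptotic precision matrices
Σ_β⁻¹, Σ_μ⁻¹ (the limiting covariances being characterized by the Cramér–Wold
property, valid when β ∈ (0,1)).  The test rejects when Y ≠ Y*,
min_{b ∈ [0,β̄]} Q_{n,β̄}(b) > c⁽³⁾_α and Q_{n,μ} > c⁽⁴⁾_α, where c⁽ᵛ⁾_α is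
the (1−α)-quantile of χ²(ν).  For every parameter configuration in the null
set H₀,β̄ = {γ₁ = γ₂ = 0, β ∈ [0,β̄]} ∪ {γ₁ = γ₂ = 0, μ₁ = μ₂ = 0}, the
asymptotic type I error is at most α.  The model hypothesis holds for all
large n.
-/

open MeasureTheory ProbabilityTheory Filter Finset

noncomputable section

/-- The chi-squared distribution with `k` degrees of freedom. -/
def chiSqMeasure (k : ℝ) : Measure ℝ := gammaMeasure (k / 2) (1 / 2)

/-- The statistic vector (n(β̂_b − b), √n γ̂₁, √n γ̂₂). -/
def statVec3 {n : ℕ} (b : ℝ) (c : Fin n → Bool)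
    (y y' : Fin n → Fin n → Bool) : Fin 3 → ℝ :=
  ![ (n : ℝ) * (betaHat (between c) y y' - b),
     Real.sqrt n * gammaHat1 c y y',
     Real.sqrt n * gammaHat2 c y y' ]

/-- The estimator vector (γ̂₁, γ̂₂, μ̂₁, μ̂₂). -/
def estVec4 {n : ℕ} (c : Fin n → Bool)
    (y y' : Fin n → Fin n → Bool) : Fin 4 → ℝ :=
  ![ gammaHat1 c y y', gammaHat2 c y y', muHat1 c y y', muHat2 c y y' ]

/-- The statistic Q_{n,β̄}(b). -/
def Qbeta {n : ℕ} (b : ℝ) (c : Fin n → Bool) (y y' : Fin n → Fin n → Bool)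
    (Θ : Matrix (Fin 3) (Fin 3) ℝ) : ℝ :=
  ∑ k, ∑ k', statVec3 b c y y' k * Θ k k' * statVec3 b c y y' k'

/-- The statistic Q_{n,μ}. -/
def Qmu {n : ℕ} (c : Fin n → Bool) (y y' : Fin n → Fin n → Bool)
    (Θ : Matrix (Fin 4) (Fin 4) ℝ) : ℝ :=
  (n : ℝ) * ∑ k, ∑ k', estVec4 c y y' k * Θ k k' * estVec4 c y y' k'

/-!
On the null set, one of the two quadratic forms is asymptotically chi-squared: the one in
`n(β̂_b − b), √n γ̂₁, √n γ̂₂` evaluated at the true `b = β` (which dominates its minimum over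
`b`), or the one in `√n(γ̂, μ̂)`. Since the test requires both forms to be large, its level is
at most the level of that one test, whatever the joint behaviour of the two. The chi-squared
limit follows from the Cramér–Wold device, Slutsky's lemma for the estimated precision matrix,
and `(S^{1/2} z)ᵀ S⁻¹ (S^{1/2} z) = ‖z‖²` for a standard Gaussian `z`. When `β = 0` there are no
observation errors, `Y = Y*` almost surely, and the test never rejects.

The model gives only the probabilities of single configurations and no measurability. As
finitely many of them add up to one, each event about `c, A, Y, Y*` and its complement have
outer measures summing to one, which makes the event null-measurable.
-/

section ChiSquared

open scoped Topology

-- Analytic continuation from a real neighbourhood of `0` to the strip around the imaginary axis,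
-- where the two characteristic functions live.
theorem measure_eq_of_mgf_eventuallyEq {μ ν : Measure ℝ} [IsFiniteMeasure μ]
    [IsFiniteMeasure ν] (hν : 0 ∈ interior (integrableExpSet id ν))
    (h : mgf id μ =ᶠ[𝓝 0] mgf id ν) : μ = ν := by
  have hmass : μ.real Set.univ = ν.real Set.univ := by simpa only [mgf_zero'] using h.eq_of_nhds
  obtain rfl | hν0 := eq_zero_or_neZero ν
  · simpa [measureReal_eq_zero_iff] using hmass
  have hμ0 : NeZero μ := by
    refine ⟨fun hμ ↦ hν0.out ?_⟩
    simpa [hμ, measureReal_eq_zero_iff] using hmass.symm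
  have hμ : 0 ∈ interior (integrableExpSet id μ) := by
    rw [mem_interior_iff_mem_nhds] at hν ⊢
    filter_upwards [hν, h] with t ht hEq
    exact mgf_pos_iff.1 (hEq ▸ mgf_pos_iff.2 ht)
  set I := interior (integrableExpSet id μ) ∩ interior (integrableExpSet id ν)
  have hI : Convex ℝ I := convex_integrableExpSet.interior.inter convex_integrableExpSet.interior
  have hfreq : ∃ᶠ z in 𝓝[≠] (0 : ℂ), complexMGF id μ z = complexMGF id ν z := by
    have hreal : ∀ᶠ x : ℝ in 𝓝[≠] 0, complexMGF id μ x = complexMGF id ν x := by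
      filter_upwards [nhdsWithin_le_nhds h] with x hx
      rw [complexMGF_ofReal, complexMGF_ofReal, hx]
    have hofReal : Tendsto ((↑) : ℝ → ℂ) (𝓝[≠] 0) (𝓝[≠] 0) :=
      tendsto_nhdsWithin_iff.2 ⟨Complex.continuous_ofReal.tendsto' _ _ rfl |>.mono_left
        nhdsWithin_le_nhds, eventually_nhdsWithin_of_forall fun x hx ↦ by simpa using hx⟩
    exact hofReal.frequently hreal.frequently
  have hstrip : Set.EqOn (complexMGF id μ) (complexMGF id ν) {z | z.re ∈ I} :=
    AnalyticOnNhd.eqOn_of_preconnected_of_frequently_eq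
      (analyticOnNhd_complexMGF.mono fun _ hz ↦ hz.1)
      (analyticOnNhd_complexMGF.mono fun _ hz ↦ hz.2)
      (hI.linear_preimage Complex.reLm).isPreconnected (by simpa using ⟨hμ, hν⟩) hfreq
  refine Measure.ext_of_charFun (funext fun t ↦ ?_)
  rw [← complexMGF_id_mul_I, ← complexMGF_id_mul_I]
  exact hstrip (by simpa using ⟨hμ, hν⟩)

theorem mgf_gammaMeasure {a r t : ℝ} (ha : 0 < a) (hr : 0 < r) (ht : t < r) :
    mgf id (gammaMeasure a r) t = (r / (r - t)) ^ a := by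
  have hrt : 0 < r - t := sub_pos.2 ht
  have hpdf (x : ℝ) : (gammaPDF a r x).toReal • Real.exp (t * x) =
      (Set.Ici 0).indicator
        (fun x ↦ r ^ a / Real.Gamma a * (x ^ (a - 1) * Real.exp (-((r - t) * x)))) x := by
    rw [gammaPDF, ENNReal.toReal_ofReal (gammaPDFReal_nonneg ha hr x), gammaPDFReal]
    by_cases hx : 0 ≤ x
    · rw [if_pos hx, Set.indicator_of_mem (Set.mem_Ici.2 hx), smul_eq_mul, mul_assoc, mul_assoc,
        ← Real.exp_add]
      ring_nf
    · rw [if_neg hx, Set.indicator_of_notMem (by simpa using hx), zero_smul]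
  have hmeas : Measurable (gammaPDF a r) := (measurable_gammaPDFReal a r).ennreal_ofReal
  rw [mgf, gammaMeasure, integral_withDensity_eq_integral_toReal_smul hmeas
    (ae_of_all _ fun _ ↦ ENNReal.ofReal_lt_top)]
  simp only [id, hpdf]
  rw [integral_indicator measurableSet_Ici, integral_Ici_eq_integral_Ioi, integral_const_mul,
    Real.integral_rpow_mul_exp_neg_mul_Ioi ha hrt, Real.div_rpow hr.le hrt.le,
    Real.div_rpow zero_le_one hrt.le, Real.one_rpow]
  field_simp [(Real.Gamma_pos_of_pos ha).ne']

theorem integral_exp_mul_sq_gaussianReal (t : ℝ) :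
    ∫ x, Real.exp (t * x ^ 2) ∂gaussianReal 0 1 = √(1 - 2 * t)⁻¹ := by
  have hpdf (x : ℝ) : gaussianPDFReal 0 1 x • Real.exp (t * x ^ 2) =
      (√(2 * Real.pi))⁻¹ * Real.exp (-(1 / 2 - t) * x ^ 2) := by
    rw [gaussianPDFReal, smul_eq_mul, NNReal.coe_one, mul_one, mul_assoc, ← Real.exp_add]
    ring_nf
  rw [integral_gaussianReal_eq_integral_smul one_ne_zero]
  simp only [hpdf]
  rw [integral_const_mul, integral_gaussian, ← Real.sqrt_inv, ← Real.sqrt_mul (by positivity)]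
  congr 1
  field_simp

variable {E : Type*} [NormedAddCommGroup E] [InnerProductSpace ℝ E] [FiniteDimensional ℝ E]
  [MeasurableSpace E] [BorelSpace E]

theorem mgf_norm_sq_stdGaussian (t : ℝ) :
    mgf (fun x : E ↦ ‖x‖ ^ 2) (stdGaussian E) t = √(1 - 2 * t)⁻¹ ^ Module.finrank ℝ E := by
  have hnorm (x : Fin (Module.finrank ℝ E) → ℝ) :
      Real.exp (t * ‖∑ i, x i • stdOrthonormalBasis ℝ E i‖ ^ 2) =
        ∏ i, Real.exp (t * x i ^ 2) := by
    rw [← real_inner_self_eq_norm_sq, Orthonormal.inner_sum (stdOrthonormalBasis ℝ E).orthonormal,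
      Finset.mul_sum, Real.exp_sum]
    simp [sq]
  have hsum : Measurable fun x : Fin (Module.finrank ℝ E) → ℝ ↦
      ∑ i, x i • stdOrthonormalBasis ℝ E i := by fun_prop
  rw [mgf, stdGaussian, integral_map hsum.aemeasurable (by fun_prop)]
  simp only [hnorm]
  rw [integral_fintype_prod_eq_prod (fun _ x ↦ Real.exp (t * x ^ 2))]
  simp only [integral_exp_mul_sq_gaussianReal, prod_const, card_univ, Fintype.card_fin]

theorem isProbabilityMeasure_chiSqMeasure {k : ℝ} (hk : 0 < k) :
    IsProbabilityMeasure (chiSqMeasure k) :=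
  isProbabilityMeasure_gammaMeasure (half_pos hk) one_half_pos

theorem map_norm_sq_stdGaussian [Nontrivial E] :
    (stdGaussian E).map (fun x ↦ ‖x‖ ^ 2) = chiSqMeasure (Module.finrank ℝ E) := by
  have hd : (0 : ℝ) < Module.finrank ℝ E := mod_cast Module.finrank_pos
  have := isProbabilityMeasure_chiSqMeasure hd
  have hmgf {t : ℝ} (ht : t < 1 / 2) : mgf id (chiSqMeasure (Module.finrank ℝ E)) t =
      (1 / 2 / (1 / 2 - t)) ^ ((Module.finrank ℝ E : ℝ) / 2) :=
    mgf_gammaMeasure (half_pos hd) one_half_pos ht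
  have hnhds : Set.Iio (1 / 2 : ℝ) ∈ 𝓝 0 := Iio_mem_nhds one_half_pos
  refine measure_eq_of_mgf_eventuallyEq ?_ ?_
  · refine mem_interior_iff_mem_nhds.2 (mem_of_superset hnhds fun t ht ↦ mgf_pos_iff.1 ?_)
    rw [hmgf ht]
    have := sub_pos.2 (Set.mem_Iio.1 ht)
    positivity
  · filter_upwards [hnhds] with t ht
    have := sub_pos.2 (Set.mem_Iio.1 ht)
    rw [mgf_id_map (by fun_prop), mgf_norm_sq_stdGaussian, hmgf ht, Real.sqrt_eq_rpow,
      ← Real.rpow_natCast, ← Real.rpow_mul (inv_nonneg.2 (by linarith))]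
    congr 1
    · field_simp
    · ring

end ChiSquared

section QuadraticForm

open scoped Matrix

variable {ι : Type*} [Fintype ι] {S : Matrix ι ι ℝ}

@[fun_prop]
theorem continuous_dotProduct_mulVec {X : Type*} [TopologicalSpace X] {v : X → ι → ℝ}
    {M : X → Matrix ι ι ℝ} (hv : Continuous v) (hM : Continuous M) :
    Continuous fun x ↦ v x ⬝ᵥ M x *ᵥ v x :=
  hv.dotProduct (hM.matrix_mulVec hv)

theorem dotProduct_mulVec_eq_sum (v : ι → ℝ) (M : Matrix ι ι ℝ) :
    v ⬝ᵥ M *ᵥ v = ∑ k, ∑ k', v k * M k k' * v k' := by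
  simp only [dotProduct, Matrix.mulVec, Finset.mul_sum, mul_assoc]

variable [DecidableEq ι]

open scoped MatrixOrder in
theorem sqrt_mulVec_dotProduct_inv_mulVec (hS : S.PosDef) (z : ι → ℝ) :
    (CFC.sqrt S *ᵥ z) ⬝ᵥ S⁻¹ *ᵥ (CFC.sqrt S *ᵥ z) = z ⬝ᵥ z := by
  set R := CFC.sqrt S
  have hRR : R * R = S := CFC.sqrt_mul_sqrt_self S hS.posSemidef.nonneg
  have hR : Rᵀ = R := (Matrix.nonneg_iff_posSemidef.1 (CFC.sqrt_nonneg S)).isHermitian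
  have hdet : IsUnit R.det := by
    have := (Matrix.isUnit_iff_isUnit_det S).1 hS.isUnit
    rw [← hRR, Matrix.det_mul] at this
    exact isUnit_of_mul_isUnit_left this
  have hone : R * (S⁻¹ * R) = 1 := by
    rw [← hRR, Matrix.mul_inv_rev, Matrix.nonsing_inv_mul_cancel_right _ _ hdet,
      Matrix.mul_nonsing_inv R hdet]
  rw [Matrix.mulVec_mulVec, ← Matrix.vecMul_transpose, hR, ← Matrix.dotProduct_mulVec,
    Matrix.mulVec_mulVec, hone, Matrix.one_mulVec]

open scoped MatrixOrder in
theorem map_quadForm_multivariateGaussian [Nonempty ι] (hS : S.PosDef) :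
    (multivariateGaussian 0 S).map (fun v ↦ v.ofLp ⬝ᵥ S⁻¹ *ᵥ v.ofLp) =
      chiSqMeasure (Fintype.card ι) := by
  have hquad (z : EuclideanSpace ℝ ι) :
      (0 + Matrix.toEuclideanCLM (𝕜 := ℝ) (CFC.sqrt S) z).ofLp ⬝ᵥ
        S⁻¹ *ᵥ (0 + Matrix.toEuclideanCLM (𝕜 := ℝ) (CFC.sqrt S) z).ofLp = ‖z‖ ^ 2 := by
    rw [zero_add, Matrix.ofLp_toEuclideanCLM, sqrt_mulVec_dotProduct_inv_mulVec hS,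
      EuclideanSpace.real_norm_sq_eq]
    simp only [dotProduct, sq]
  rw [multivariateGaussian, Measure.map_map (by fun_prop) (by fun_prop), ← finrank_euclideanSpace
    (𝕜 := ℝ), ← map_norm_sq_stdGaussian]
  exact congrArg (Measure.map · _) (funext hquad)

theorem map_dotProduct_multivariateGaussian (hS : S.PosSemidef) (t : ι → ℝ) :
    (multivariateGaussian 0 S).map (fun v ↦ t ⬝ᵥ v.ofLp) =
      gaussianReal 0 (t ⬝ᵥ S *ᵥ t).toNNReal := by
  have hmeas : Measurable fun v : EuclideanSpace ℝ ι ↦ t ⬝ᵥ v.ofLp := by fun_prop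
  have := Measure.isProbabilityMeasure_map (μ := multivariateGaussian 0 S) hmeas.aemeasurable
  have hinner (v : EuclideanSpace ℝ ι) (s : ℝ) :
      inner ℝ (t ⬝ᵥ v.ofLp) s = inner ℝ v (WithLp.toLp 2 (s • t)) := by
    simp [EuclideanSpace.inner_eq_star_dotProduct]
  have hvar (s : ℝ) : (s • t) ⬝ᵥ S *ᵥ (s • t) = (t ⬝ᵥ S *ᵥ t).toNNReal * s ^ 2 := by
    have hnonneg : 0 ≤ t ⬝ᵥ S *ᵥ t := star_trivial t ▸ hS.dotProduct_mulVec_nonneg t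
    rw [Real.coe_toNNReal _ hnonneg, Matrix.mulVec_smul, smul_dotProduct, dotProduct_smul,
      smul_eq_mul, smul_eq_mul]
    ring
  refine Measure.ext_of_charFun (funext fun s ↦ ?_)
  rw [charFun_apply, integral_map hmeas.aemeasurable (by fun_prop)]
  simp only [hinner]
  rw [← charFun_apply, charFun_multivariateGaussian hS, charFun_gaussianReal, hvar]
  simp

theorem chiSqMeasure_Ici (k c : ℝ) : chiSqMeasure k (Set.Ici c) = chiSqMeasure k (Set.Ioi c) := by
  have : NullSingletonClass (chiSqMeasure k) := by
    unfold chiSqMeasure gammaMeasure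
    infer_instance
  exact measure_congr Ioi_ae_eq_Ici.symm

theorem multivariateGaussian_le_quadForm [Nonempty ι] (hS : S.PosDef) {c α : ℝ}
    (hc : (chiSqMeasure (Fintype.card ι) (Set.Iic c)).toReal = 1 - α) :
    multivariateGaussian 0 S {v | c ≤ v.ofLp ⬝ᵥ S⁻¹ *ᵥ v.ofLp} = ENNReal.ofReal α := by
  have : IsProbabilityMeasure (chiSqMeasure (Fintype.card ι)) :=
    isProbabilityMeasure_chiSqMeasure (mod_cast Fintype.card_pos)
  have hquad : Continuous fun v : EuclideanSpace ℝ ι ↦ v.ofLp ⬝ᵥ S⁻¹ *ᵥ v.ofLp := by fun_prop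
  calc multivariateGaussian 0 S {v | c ≤ v.ofLp ⬝ᵥ S⁻¹ *ᵥ v.ofLp}
      = (multivariateGaussian 0 S).map (fun v ↦ v.ofLp ⬝ᵥ S⁻¹ *ᵥ v.ofLp) (Set.Ici c) :=
        (Measure.map_apply hquad.measurable measurableSet_Ici).symm
    _ = chiSqMeasure (Fintype.card ι) (Set.Iic c)ᶜ := by
        rw [map_quadForm_multivariateGaussian hS, chiSqMeasure_Ici, Set.compl_Iic]
    _ = ENNReal.ofReal α := by
        rw [← ofReal_measureReal, probReal_compl_eq_one_sub measurableSet_Iic, measureReal_def, hc,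
          sub_sub_cancel]

end QuadraticForm

section WeakConvergence

open scoped Topology

theorem tendsto_probabilityMeasure_of_tendsto_measureReal_Iic {κ : Type*} {l : Filter κ}
    [l.IsCountablyGenerated] {ρ : κ → ProbabilityMeasure ℝ} {ν : ProbabilityMeasure ℝ}
    (h : ∀ x, Tendsto (fun i ↦ (ρ i : Measure ℝ).real (Set.Iic x)) l
      (𝓝 ((ν : Measure ℝ).real (Set.Iic x)))) :
    Tendsto ρ l (𝓝 ν) := by
  have hIoc (m : ProbabilityMeasure ℝ) {a b : ℝ} (hab : a ≤ b) :
      (m : Measure ℝ).real (Set.Ioc a b) =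
        (m : Measure ℝ).real (Set.Iic b) - (m : Measure ℝ).real (Set.Iic a) := by
    rw [← Set.Iic_sdiff_Iic, measureReal_sdiff (Set.Iic_subset_Iic.2 hab) measurableSet_Iic]
  refine IsPiSystem.tendsto_probabilityMeasure_of_tendsto_of_mem
    (S := {s | ∃ a b : ℝ, a ≤ b ∧ s = Set.Ioc a b}) ?_ ?_ ?_ ?_
  · rintro _ ⟨a, b, -, rfl⟩ _ ⟨a', b', -, rfl⟩ ⟨x, hx⟩
    rw [Set.Ioc_inter_Ioc] at hx ⊢
    exact ⟨_, _, hx.1.le.trans hx.2, rfl⟩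
  · rintro _ ⟨a, b, -, rfl⟩
    exact measurableSet_Ioc
  · intro u hu x hx
    obtain ⟨a, b, ⟨hax, hxb⟩, hab⟩ := (mem_nhds_iff_exists_Ioo_subset.1 (hu.mem_nhds hx))
    obtain ⟨d, hxd, hdb⟩ := exists_between hxb
    exact ⟨_, ⟨a, d, (hax.trans hxd).le, rfl⟩, Ioc_mem_nhds hax hxd,
      (Set.Ioc_subset_Ioo_right hdb).trans hab⟩
  · rintro _ ⟨a, b, hab, rfl⟩
    rw [← NNReal.tendsto_coe]
    have := (h b).sub (h a)
    simp only [← hIoc _ hab] at this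
    exact this

variable {Ω' : Type*} {mΩ' : MeasurableSpace Ω'} {μ' : Measure Ω'} [IsProbabilityMeasure μ']

theorem tendstoInDistribution_of_tendsto_measure_le {κ : Type*} {l : Filter κ}
    [l.IsCountablyGenerated] {Ω : κ → Type*} {mΩ : ∀ i, MeasurableSpace (Ω i)}
    {μ : ∀ i, Measure (Ω i)} [∀ i, IsProbabilityMeasure (μ i)] {X : ∀ i, Ω i → ℝ} {Z : Ω' → ℝ}
    (hX : ∀ i, AEMeasurable (X i) (μ i)) (hZ : AEMeasurable Z μ')
    (h : ∀ x, Tendsto (fun i ↦ (μ i {ω | X i ω ≤ x}).toReal) l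
      (𝓝 (μ' {ω | Z ω ≤ x}).toReal)) :
    TendstoInDistribution X l Z μ μ' where
  forall_aemeasurable := hX
  aemeasurable_limit := hZ
  tendsto := by
    refine tendsto_probabilityMeasure_of_tendsto_measureReal_Iic fun x ↦ ?_
    simp only [ProbabilityMeasure.coe_mk, measureReal_def,
      Measure.map_apply_of_aemeasurable (hX _) measurableSet_Iic,
      Measure.map_apply_of_aemeasurable hZ measurableSet_Iic]
    exact h x

section CramerWold

variable {E : Type*} [NormedAddCommGroup E] [InnerProductSpace ℝ E] [MeasurableSpace E]
  [BorelSpace E]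

theorem charFun_map_inner_one [SecondCountableTopology E] {Ω : Type*} {mΩ : MeasurableSpace Ω}
    {μ : Measure Ω} {X : Ω → E} (hX : AEMeasurable X μ) (t : E) :
    charFun (μ.map fun ω ↦ inner ℝ (X ω) t) 1 = charFun (μ.map X) t := by
  rw [charFun_apply, charFun_apply, integral_map (by fun_prop) (by fun_prop),
    integral_map hX (by fun_prop)]
  simp

theorem tendstoInDistribution_of_forall_inner [FiniteDimensional ℝ E] {Ω : ℕ → Type*}
    {mΩ : ∀ n, MeasurableSpace (Ω n)} {μ : ∀ n, Measure (Ω n)} [∀ n, IsProbabilityMeasure (μ n)]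
    {X : ∀ n, Ω n → E} {Z : Ω' → E}
    (hX : ∀ n, AEMeasurable (X n) (μ n)) (hZ : AEMeasurable Z μ')
    (h : ∀ t : E, TendstoInDistribution (fun n ω ↦ inner ℝ (X n ω) t) atTop
      (fun ω ↦ inner ℝ (Z ω) t) μ μ') :
    TendstoInDistribution X atTop Z μ μ' where
  forall_aemeasurable := hX
  aemeasurable_limit := hZ
  tendsto := by
    refine ProbabilityMeasure.tendsto_of_tendsto_charFun fun t ↦ ?_
    have := ProbabilityMeasure.tendsto_iff_tendsto_charFun.1 (h t).tendsto 1
    simp only [ProbabilityMeasure.coe_mk] at this ⊢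
    rw [charFun_map_inner_one hZ] at this
    exact this.congr fun n ↦ charFun_map_inner_one (hX n) t

end CramerWold

section Slutsky

variable {E F : Type*} [TopologicalSpace E] [PseudoMetricSpace F]

theorem iInter_closure_fst_image_closedBall {C : Set (E × F)} (hC : IsClosed C) (y : F)
    {δ : ℕ → ℝ} (hδ0 : ∀ j, 0 ≤ δ j) (hδ : Tendsto δ atTop (𝓝 0)) :
    ⋂ j, closure (Prod.fst '' (C ∩ {p | dist p.2 y ≤ δ j})) = {x | (x, y) ∈ C} := by
  refine subset_antisymm (fun x hx ↦ ?_) fun x hx ↦ Set.mem_iInter.2 fun j ↦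
    subset_closure ⟨(x, y), ⟨hx, by simpa using hδ0 j⟩, rfl⟩
  refine hC.closure_subset (mem_closure_iff_nhds.2 fun W hW ↦ ?_)
  obtain ⟨U, hU, V, hV, hUV⟩ := mem_nhds_prod_iff.1 hW
  obtain ⟨ε, hε, hball⟩ := Metric.mem_nhds_iff.1 hV
  obtain ⟨j, hj⟩ := (hδ.eventually_lt_const hε).exists
  obtain ⟨_, hxU, ⟨p, ⟨hpC, hp⟩, rfl⟩⟩ := mem_closure_iff_nhds.1 (Set.mem_iInter.1 hx j) U hU
  exact ⟨p, hUV ⟨hxU, hball (hp.trans_lt hj)⟩, hpC⟩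

variable {κ : Type*} {l : Filter κ} {Ω : κ → Type*} {mΩ : ∀ i, MeasurableSpace (Ω i)}
  {μ : ∀ i, Measure (Ω i)} [∀ i, IsProbabilityMeasure (μ i)] [MeasurableSpace E] [BorelSpace E]
  [HasOuterApproxClosed E] {X : ∀ i, Ω i → E} {Z : Ω' → E} {Y : ∀ i, Ω i → F} {y : F}

theorem limsup_measure_prodMk_mem_le_measure_closure
    (hX : TendstoInDistribution X l Z μ μ') {δ : ℝ}
    (hY : Tendsto (fun i ↦ μ i {ω | δ < dist (Y i ω) y}) l (𝓝 0)) (C : Set (E × F)) :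
    limsup (fun i ↦ μ i {ω | (X i ω, Y i ω) ∈ C}) l ≤
      μ'.map Z (closure (Prod.fst '' (C ∩ {p | dist p.2 y ≤ δ}))) := by
  set S : Set E := closure (Prod.fst '' (C ∩ {p | dist p.2 y ≤ δ}))
  have hS : IsClosed S := isClosed_closure
  have hsplit (i : κ) : μ i {ω | (X i ω, Y i ω) ∈ C} ≤
      (μ i).map (X i) S + μ i {ω | δ < dist (Y i ω) y} := by
    rw [Measure.map_apply_of_aemeasurable (hX.forall_aemeasurable i) hS.measurableSet]
    refine (measure_mono fun ω hω ↦ ?_).trans (measure_union_le _ _)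
    exact (le_or_gt (dist (Y i ω) y) δ).imp (fun h ↦ subset_closure ⟨_, ⟨hω, h⟩, rfl⟩) id
  calc limsup (fun i ↦ μ i {ω | (X i ω, Y i ω) ∈ C}) l
      ≤ limsup (fun i ↦ (μ i).map (X i) S + μ i {ω | δ < dist (Y i ω) y}) l :=
        limsup_le_limsup (.of_forall hsplit)
    _ = limsup (fun i ↦ (μ i).map (X i) S) l := ENNReal.limsup_add_of_right_tendsto_zero hY _
    _ ≤ μ'.map Z S := ProbabilityMeasure.limsup_measure_closed_le_of_tendsto hX.tendsto hS

theorem limsup_measure_prodMk_mem_le_of_tendstoInDistribution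
    (hX : TendstoInDistribution X l Z μ μ')
    (hY : ∀ ε > 0, Tendsto (fun i ↦ μ i {ω | ε < dist (Y i ω) y}) l (𝓝 0))
    {C : Set (E × F)} (hC : IsClosed C) :
    limsup (fun i ↦ μ i {ω | (X i ω, Y i ω) ∈ C}) l ≤ μ' {ω | (Z ω, y) ∈ C} := by
  let S (j : ℕ) : Set E := closure (Prod.fst '' (C ∩ {p | dist p.2 y ≤ 1 / ((j : ℝ) + 1)}))
  have hinter : ⋂ j, S j = {x | (x, y) ∈ C} :=
    iInter_closure_fst_image_closedBall hC y (fun j ↦ by positivity)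
      tendsto_one_div_add_atTop_nhds_zero_nat
  have hanti : Antitone S := fun i j hij ↦ closure_mono <| Set.image_mono <|
    Set.inter_subset_inter_right _ <| Set.ofPred_subset_ofPred.2 fun _ hp ↦
      hp.trans (Nat.one_div_le_one_div hij)
  have hslice : Tendsto (fun j ↦ μ'.map Z (S j)) atTop (𝓝 (μ' {ω | (Z ω, y) ∈ C})) := by
    have := Measure.isProbabilityMeasure_map hX.aemeasurable_limit
    have hlim := tendsto_measure_iInter_atTop (μ := μ'.map Z)
      (fun j ↦ isClosed_closure.measurableSet.nullMeasurableSet) hanti ⟨0, measure_ne_top _ _⟩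
    have hy : MeasurableSet {x | (x, y) ∈ C} :=
      (hC.preimage (Continuous.prodMk_left y)).measurableSet
    rwa [hinter, Measure.map_apply_of_aemeasurable hX.aemeasurable_limit hy] at hlim
  exact ge_of_tendsto' hslice fun j ↦
    limsup_measure_prodMk_mem_le_measure_closure hX (hY _ Nat.one_div_pos_of_nat) C

end Slutsky

end WeakConvergence

section WaldTest

open scoped Matrix Topology

variable {ι : Type*} [Fintype ι] {Ω : ℕ → Type*} {mΩ : ∀ n, MeasurableSpace (Ω n)}
  {μ : ∀ n, Measure (Ω n)} {X : ∀ n, Ω n → ι → ℝ} {Θ : ∀ n, Ω n → Matrix ι ι ℝ}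
  {S M : Matrix ι ι ℝ}

/-- Asymptotic normality of the random vectors `X n`, with mean zero and limiting covariance `S`.
It is encoded by the Cramér–Wold device: the distribution function of every nonzero linear
combination of the coordinates converges pointwise to a Gaussian one. -/
def IsAsymptoticallyNormal (μ : ∀ n, Measure (Ω n)) (X : ∀ n, Ω n → ι → ℝ)
    (S : Matrix ι ι ℝ) : Prop :=
  ∀ t : ι → ℝ, t ≠ 0 → ∀ x : ℝ,
    Tendsto (fun n ↦ (μ n {ω | t ⬝ᵥ X n ω ≤ x}).toReal) atTop
      (𝓝 (gaussianReal 0 (t ⬝ᵥ S *ᵥ t).toNNReal (Set.Iic x)).toReal)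

/-- Consistency of the random matrices `Θ n` as estimators of `M`, i.e. convergence in probability.
It is stated entrywise, which in finite dimension amounts to convergence in operator norm. -/
def IsConsistentEstimator (μ : ∀ n, Measure (Ω n)) (Θ : ∀ n, Ω n → Matrix ι ι ℝ)
    (M : Matrix ι ι ℝ) : Prop :=
  ∀ k k', ∀ ε > (0 : ℝ),
    Tendsto (fun n ↦ μ n {ω | ε < |Θ n ω k k' - M k k'|}) atTop (𝓝 0)

theorem IsAsymptoticallyNormal.tendstoInDistribution [DecidableEq ι]
    [∀ n, IsProbabilityMeasure (μ n)] (hX : IsAsymptoticallyNormal μ X S) (hS : S.PosSemidef)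
    (hXm : ∀ n, AEMeasurable (X n) (μ n)) :
    TendstoInDistribution (fun n ω ↦ WithLp.toLp 2 (X n ω)) atTop id μ
      (multivariateGaussian 0 S) := by
  have hinner (v : ι → ℝ) (t : EuclideanSpace ℝ ι) :
      inner ℝ (WithLp.toLp 2 v) t = t.ofLp ⬝ᵥ v := by
    simp [EuclideanSpace.inner_eq_star_dotProduct]
  have hXm' (n : ℕ) : AEMeasurable (fun ω ↦ WithLp.toLp 2 (X n ω)) (μ n) :=
    (WithLp.measurable_toLp 2 _).comp_aemeasurable (hXm n)
  refine tendstoInDistribution_of_forall_inner hXm' aemeasurable_id fun t ↦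
    tendstoInDistribution_of_tendsto_measure_le (fun n ↦ (hXm' n).inner_const)
      aemeasurable_id.inner_const fun x ↦ ?_
  obtain rfl | ht := eq_or_ne t 0
  · by_cases hx : 0 ≤ x <;> simp [hx]
  · have hlim : multivariateGaussian 0 S {v | inner ℝ v t ≤ x} =
        gaussianReal 0 (t.ofLp ⬝ᵥ S *ᵥ t.ofLp).toNNReal (Set.Iic x) := by
      rw [← map_dotProduct_multivariateGaussian hS,
        Measure.map_apply (by fun_prop) measurableSet_Iic]
      exact congrArg _ (Set.ext fun v ↦ by rw [← WithLp.toLp_ofLp 2 v]; simp [hinner])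
    simp only [id, hlim]
    simp only [hinner]
    exact hX t.ofLp (by simpa using ht) x

theorem IsConsistentEstimator.tendsto_measure_lt_dist (hΘ : IsConsistentEstimator μ Θ M) {ε : ℝ}
    (hε : 0 < ε) :
    Tendsto (fun n ↦ μ n {ω | ε < dist (α := ι → ι → ℝ) (Θ n ω) M}) atTop (𝓝 0) := by
  have hsub (n : ℕ) : {ω | ε < dist (α := ι → ι → ℝ) (Θ n ω) M} ⊆
      ⋃ k, ⋃ k', {ω | ε < |Θ n ω k k' - M k k'|} := by
    intro ω hω
    by_contra h
    simp only [Set.mem_iUnion, Set.mem_ofPred_eq, not_exists, not_lt] at h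
    exact hω.not_ge <| (dist_pi_le_iff hε.le).2 fun k ↦ (dist_pi_le_iff hε.le).2 (h k)
  have hsum : Tendsto (fun n ↦ ∑ k, ∑ k', μ n {ω | ε < |Θ n ω k k' - M k k'|}) atTop (𝓝 0) := by
    simpa using tendsto_finsetSum univ fun k _ ↦ tendsto_finsetSum univ fun k' _ ↦ hΘ k k' ε hε
  refine tendsto_of_tendsto_of_tendsto_of_le_of_le tendsto_const_nhds hsum (fun _ ↦ zero_le)
    fun n ↦ (measure_mono (hsub n)).trans <| (measure_iUnion_fintype_le _ _).trans <|
      Finset.sum_le_sum fun k _ ↦ measure_iUnion_fintype_le _ _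

variable [Nonempty ι]

theorem IsAsymptoticallyNormal.eventually_ne_zero (hX : IsAsymptoticallyNormal μ X S) :
    ∀ᶠ n in atTop, μ n ≠ 0 := by
  obtain ⟨t, ht⟩ := exists_ne (0 : ι → ℝ)
  set ν := gaussianReal 0 (t ⬝ᵥ S *ᵥ t).toNNReal
  have hlim : Tendsto (fun x ↦ (ν (Set.Iic x)).toReal) atTop (𝓝 1) := by
    simpa [Function.comp_def] using
      (ENNReal.tendsto_toReal (measure_ne_top _ _)).comp (tendsto_measure_Iic_atTop ν)
  obtain ⟨x, hx⟩ := (hlim.eventually_const_lt zero_lt_one).exists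
  filter_upwards [(hX t ht x).eventually_const_lt hx] with n hn h0
  simp [h0] at hn

theorem measure_inter_le_cond {Ω : Type*} {mΩ : MeasurableSpace Ω} {P : Measure Ω}
    [IsZeroOrProbabilityMeasure P] {s : Set Ω} (hs : NullMeasurableSet s P) (t : Set Ω) :
    P (s ∩ t) ≤ P[|s] t := by
  rw [ProbabilityTheory.cond, Measure.smul_apply, Measure.restrict_apply₀' hs, Set.inter_comm,
    smul_eq_mul]
  exact le_mul_of_one_le_left' (ENNReal.one_le_inv.2 prob_le_one)

variable [DecidableEq ι] {c α : ℝ}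

theorem limsup_measure_lt_quadForm_le [∀ n, IsProbabilityMeasure (μ n)] (hS : S.PosDef)
    (hX : IsAsymptoticallyNormal μ X S) (hXm : ∀ n, AEMeasurable (X n) (μ n))
    (hΘ : IsConsistentEstimator μ Θ S⁻¹)
    (hc : (chiSqMeasure (Fintype.card ι) (Set.Iic c)).toReal = 1 - α) :
    limsup (fun n ↦ μ n {ω | c < X n ω ⬝ᵥ Θ n ω *ᵥ X n ω}) atTop ≤ ENNReal.ofReal α := by
  let C : Set (EuclideanSpace ℝ ι × (ι → ι → ℝ)) :=
    {p | c ≤ p.1.ofLp ⬝ᵥ Matrix.of p.2 *ᵥ p.1.ofLp}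
  have hC : IsClosed C := isClosed_le continuous_const <|
    continuous_dotProduct_mulVec (by fun_prop) continuous_snd
  calc limsup (fun n ↦ μ n {ω | c < X n ω ⬝ᵥ Θ n ω *ᵥ X n ω}) atTop
      ≤ limsup (fun n ↦ μ n {ω | (WithLp.toLp 2 (X n ω), Θ n ω) ∈ C}) atTop :=
        limsup_le_limsup (.of_forall fun n ↦ measure_mono fun _ hω ↦ le_of_lt (α := ℝ) hω)
    _ ≤ multivariateGaussian 0 S {v | (v, S⁻¹) ∈ C} :=
        limsup_measure_prodMk_mem_le_of_tendstoInDistribution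
          (hX.tendstoInDistribution hS.posSemidef hXm)
          (fun _ ↦ hΘ.tendsto_measure_lt_dist) hC
    _ = ENNReal.ofReal α := multivariateGaussian_le_quadForm hS hc

theorem limsup_measure_inter_lt_quadForm_le {P : ∀ n, Measure (Ω n)} {s : ∀ n, Set (Ω n)}
    (hP : ∀ᶠ n in atTop, IsProbabilityMeasure (P n))
    (hs : ∀ᶠ n in atTop, NullMeasurableSet (s n) (P n)) (hS : S.PosDef)
    (hX : IsAsymptoticallyNormal (fun n ↦ (P n)[|s n]) X S)
    (hXm : ∀ᶠ n in atTop, AEMeasurable (X n) (P n))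
    (hΘ : IsConsistentEstimator (fun n ↦ (P n)[|s n]) Θ S⁻¹)
    (hc : (chiSqMeasure (Fintype.card ι) (Set.Iic c)).toReal = 1 - α) :
    limsup (fun n ↦ P n (s n ∩ {ω | c < X n ω ⬝ᵥ Θ n ω *ᵥ X n ω})) atTop ≤
      ENNReal.ofReal α := by
  obtain ⟨N, hN⟩ := eventually_atTop.1 (((hP.and hs).and hXm).and hX.eventually_ne_zero)
  have hcond (n : ℕ) : IsProbabilityMeasure ((P (n + N))[|s (n + N)]) := by
    obtain ⟨⟨⟨_, -⟩, -⟩, h0⟩ := hN (n + N) (N.le_add_left n)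
    exact cond_isProbabilityMeasure fun h ↦ h0 (cond_eq_zero_of_meas_eq_zero h)
  have hshift := tendsto_add_atTop_nat N
  calc limsup (fun n ↦ P n (s n ∩ {ω | c < X n ω ⬝ᵥ Θ n ω *ᵥ X n ω})) atTop
      ≤ limsup (fun n ↦ (P n)[|s n] {ω | c < X n ω ⬝ᵥ Θ n ω *ᵥ X n ω}) atTop := by
        refine limsup_le_limsup ?_
        filter_upwards [hP, hs] with n _ hsn using measure_inter_le_cond hsn _
    _ = limsup (fun n ↦ (P (n + N))[|s (n + N)]
          {ω | c < X (n + N) ω ⬝ᵥ Θ (n + N) ω *ᵥ X (n + N) ω}) atTop :=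
        (limsup_nat_add _ N).symm
    _ ≤ ENNReal.ofReal α := limsup_measure_lt_quadForm_le hS
        (fun t ht x ↦ (hX t ht x).comp hshift)
        (fun n ↦ (hN (n + N) (N.le_add_left n)).1.2.mono_ac cond_absolutelyContinuous)
        (fun k k' ε hε ↦ (hΘ k k' ε hε).comp hshift) hc

end WaldTest

section NullMeasurable

variable {Ω K : Type*} {mΩ : MeasurableSpace Ω} {μ : Measure Ω} [IsFiniteMeasure μ]

theorem nullMeasurableSet_of_measure_add_measure_compl_le {s : Set Ω}
    (h : μ s + μ sᶜ ≤ μ Set.univ) : NullMeasurableSet s μ := by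
  set M := toMeasurable μ s
  set N := toMeasurable μ sᶜ
  have hcover : M ∪ N = Set.univ :=
    Set.eq_univ_of_univ_subset <| (Set.union_compl_self s).ge.trans <|
      Set.union_subset_union (subset_toMeasurable μ s) (subset_toMeasurable μ sᶜ)
  have hoverlap : μ (M ∩ N) = 0 := by
    have hadd : μ Set.univ + μ (M ∩ N) = μ s + μ sᶜ := by
      rw [← hcover, measure_union_add_inter M (measurableSet_toMeasurable μ sᶜ),
        measure_toMeasurable, measure_toMeasurable]
    have hle : μ Set.univ + μ (M ∩ N) ≤ μ Set.univ + 0 := by rwa [hadd, add_zero]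
    exact nonpos_iff_eq_zero.1 ((ENNReal.add_le_add_iff_left (measure_ne_top μ _)).1 hle)
  have hM : M =ᵐ[μ] s := by
    refine (ae_le_set.2 (measure_mono_null ?_ hoverlap)).antisymm
      (subset_toMeasurable μ s).eventuallyLE
    exact Set.inter_subset_inter_right M (subset_toMeasurable μ sᶜ)
  exact (measurableSet_toMeasurable μ s).nullMeasurableSet.congr hM

theorem nullMeasurableSet_preimage_of_sum_le [Fintype K] {X : Ω → K}
    (h : ∑ x, μ (X ⁻¹' {x}) ≤ μ Set.univ) (T : Set K) : NullMeasurableSet (X ⁻¹' T) μ := by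
  classical
  have hfiber (U : Set K) : μ (X ⁻¹' U) ≤ ∑ x with x ∈ U, μ (X ⁻¹' {x}) := by
    refine (measure_mono fun ω hω ↦ ?_).trans (measure_biUnion_finset_le _ _)
    simpa using hω
  refine nullMeasurableSet_of_measure_add_measure_compl_le ?_
  calc μ (X ⁻¹' T) + μ (X ⁻¹' Tᶜ)
      ≤ ∑ x with x ∈ T, μ (X ⁻¹' {x}) + ∑ x with ¬x ∈ T, μ (X ⁻¹' {x}) :=
        add_le_add (hfiber T) (by simpa using hfiber Tᶜ)
    _ = ∑ x, μ (X ⁻¹' {x}) := Finset.sum_filter_add_sum_filter_not _ _ _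
    _ ≤ μ Set.univ := h

end NullMeasurable

section Configurations

/-- The joint mass of `(A i j, Y i j, Y' i j)` at a pair with connection probability `b` and type II
error rate `β`: the two replicates are independent given the edge. -/
def pairMass (b β : ℝ) (z : Bool × Bool × Bool) : ℝ :=
  (if z.1 then b else 1 - b) *
    (if z.1 then (if z.2.1 then 1 - β else β) else (if z.2.1 then 0 else 1)) *
    (if z.1 then (if z.2.2 then 1 - β else β) else (if z.2.2 then 0 else 1))

theorem pairMass_nonneg {b β : ℝ} (hb : b ∈ Set.Icc 0 1) (hβ : β ∈ Set.Icc 0 1)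
    (z : Bool × Bool × Bool) : 0 ≤ pairMass b β z := by
  have hb1 := sub_nonneg.2 hb.2
  have hβ1 := sub_nonneg.2 hβ.2
  have hb0 := hb.1
  have hβ0 := hβ.1
  unfold pairMass
  split_ifs <;> positivity

theorem sum_pairMass (b β : ℝ) : ∑ z, pairMass b β z = 1 := by
  simp only [pairMass, Fintype.sum_prod_type, Fintype.sum_bool, if_true, Bool.false_eq_true,
    if_false]
  ring

theorem pairMass_zero_right_of_ne (b : ℝ) {z : Bool × Bool × Bool} (hz : z.2.1 ≠ z.2.2) :
    pairMass b 0 z = 0 := by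
  obtain ⟨a, y, y'⟩ := z
  cases a <;> cases y <;> cases y' <;> simp_all [pairMass]

/-- The data of a labelled network with two replicates: the labels and, for each pair `i < j`, the
entries of the three adjacency matrices. Symmetric loopless matrices are determined by these. -/
abbrev Config (n : ℕ) : Type :=
  (Fin n → Bool) × ({p : Fin n × Fin n // p.1 < p.2} → Bool × Bool × Bool)

/-- The configuration recorded by labels `l` and adjacency matrices `a`, `y`, `y'`. -/
def toConfig {n : ℕ} (l : Fin n → Bool) (a y y' : Fin n → Fin n → Bool) : Config n :=
  (l, fun p ↦ (a p.1.1 p.1.2, y p.1.1 p.1.2, y' p.1.1 p.1.2))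

/-- The probability of a configuration under the stochastic block model with observation errors. -/
def configMass {n : ℕ} (B βm : Bool → Bool → ℝ) (κ : ℝ) (x : Config n) : ℝ :=
  labelMass κ x.1 * ∏ p, pairMass (B (x.1 p.1.1) (x.1 p.1.2)) (βm (x.1 p.1.1) (x.1 p.1.2)) (x.2 p)

variable {n : ℕ} {B βm : Bool → Bool → ℝ} {κ : ℝ}

theorem configMass_toConfig (l : Fin n → Bool) (a y y' : Fin n → Fin n → Bool) :
    configMass B βm κ (toConfig l a y y') =
      labelMass κ l * edgeMass B l a * obsMass βm l a y * obsMass βm l a y' := by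
  have hpairs (p : Fin n × Fin n) : p ∈ univ.filter (fun p : Fin n × Fin n ↦ p.1 < p.2) ↔
      p.1 < p.2 := by simp
  rw [edgeMass, obsMass, obsMass, mul_assoc, mul_assoc, ← Finset.prod_mul_distrib,
    ← Finset.prod_mul_distrib, Finset.prod_subtype (F := Subtype.fintype _) _ hpairs]
  simp only [configMass, toConfig, pairMass, mul_assoc]
  rfl

theorem configMass_nonneg (hκ : κ ∈ Set.Icc 0 1) (hB : ∀ x y, B x y ∈ Set.Icc 0 1)
    (hβ : ∀ x y, βm x y ∈ Set.Icc 0 1) (x : Config n) : 0 ≤ configMass B βm κ x := by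
  refine mul_nonneg (Finset.prod_nonneg fun i _ ↦ ?_)
    (Finset.prod_nonneg fun p _ ↦ pairMass_nonneg (hB _ _) (hβ _ _) _)
  split_ifs
  exacts [hκ.1, sub_nonneg.2 hκ.2]

theorem sum_configMass (B βm : Bool → Bool → ℝ) (κ : ℝ) :
    ∑ x : Config n, configMass B βm κ x = 1 := by
  have hlabels : ∑ l : Fin n → Bool, labelMass κ l = 1 := by
    simp only [labelMass]
    rw [← Fintype.prod_sum fun (_ : Fin n) (z : Bool) ↦ if z then κ else 1 - κ]
    simp
  have hpairs (l : Fin n → Bool) : ∑ z : {p : Fin n × Fin n // p.1 < p.2} → Bool × Bool × Bool,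
      ∏ p, pairMass (B (l p.1.1) (l p.1.2)) (βm (l p.1.1) (l p.1.2)) (z p) = 1 := by
    rw [← Fintype.prod_sum fun (p : {p : Fin n × Fin n // p.1 < p.2}) z ↦
      pairMass (B (l p.1.1) (l p.1.2)) (βm (l p.1.1) (l p.1.2)) z]
    simp only [sum_pairMass, Finset.prod_const_one]
  simp only [Fintype.sum_prod_type, configMass, ← Finset.mul_sum, hpairs, mul_one, hlabels]

theorem eq_of_symm_of_forall_lt {V R : Type*} [LinearOrder V] {a b : V → V → R}
    (ha : ∀ i j, a i j = a j i) (hb : ∀ i j, b i j = b j i) (hdiag : ∀ i, a i i = b i i)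
    (h : ∀ i j, i < j → a i j = b i j) : a = b := by
  funext i j
  obtain hij | rfl | hij := lt_trichotomy i j
  · exact h i j hij
  · exact hdiag i
  · rw [ha, hb, h j i hij]

end Configurations

namespace IsObsSBM

variable {Ω : Type*} {mΩ : MeasurableSpace Ω} {P : Measure Ω} {n : ℕ} {B βm : Bool → Bool → ℝ}
  {κ : ℝ} {c : Ω → Fin n → Bool} {A Y Y' : Ω → Fin n → Fin n → Bool}

theorem eq_of_toConfig_eq (h : IsObsSBM P n B βm κ c A Y Y') {ω ω' : Ω}
    (hω : toConfig (c ω) (A ω) (Y ω) (Y' ω) = toConfig (c ω') (A ω') (Y ω') (Y' ω')) :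
    c ω = c ω' ∧ A ω = A ω' ∧ Y ω = Y ω' ∧ Y' ω = Y' ω' := by
  obtain ⟨hc, hpairs⟩ := Prod.ext_iff.1 hω
  have hentries (i j : Fin n) (hij : i < j) :
      A ω i j = A ω' i j ∧ Y ω i j = Y ω' i j ∧ Y' ω i j = Y' ω' i j := by
    simpa [toConfig] using congrFun hpairs ⟨(i, j), hij⟩
  refine ⟨hc, ?_, ?_, ?_⟩
  · exact eq_of_symm_of_forall_lt (h.symmA ω) (h.symmA ω')
      (fun i ↦ by rw [h.looplessA, h.looplessA]) fun i j hij ↦ (hentries i j hij).1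
  · exact eq_of_symm_of_forall_lt (h.symmY ω) (h.symmY ω')
      (fun i ↦ by rw [h.looplessY, h.looplessY]) fun i j hij ↦ (hentries i j hij).2.1
  · exact eq_of_symm_of_forall_lt (h.symmY' ω) (h.symmY' ω')
      (fun i ↦ by rw [h.looplessY', h.looplessY']) fun i j hij ↦ (hentries i j hij).2.2

theorem measure_toConfig_preimage_le (h : IsObsSBM P n B βm κ c A Y Y') (x : Config n) :
    P ((fun ω ↦ toConfig (c ω) (A ω) (Y ω) (Y' ω)) ⁻¹' {x}) ≤
      ENNReal.ofReal (configMass B βm κ x) := by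
  obtain hempty | ⟨ω, rfl⟩ :=
    ((fun ω ↦ toConfig (c ω) (A ω) (Y ω) (Y' ω)) ⁻¹' {x}).eq_empty_or_nonempty
  · simp [hempty]
  · rw [configMass_toConfig, ← h.law _ _ _ _ (h.symmA ω) (h.looplessA ω) (h.symmY ω)
      (h.looplessY ω) (h.symmY' ω) (h.looplessY' ω)]
    exact measure_mono fun ω' hω' ↦ h.eq_of_toConfig_eq hω'

theorem nullMeasurableSet (h : IsObsSBM P n B βm κ c A Y Y') (hκ : κ ∈ Set.Icc 0 1)
    (hB : ∀ x y, B x y ∈ Set.Icc 0 1) (hβ : ∀ x y, βm x y ∈ Set.Icc 0 1)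
    (p : (Fin n → Bool) → (a y y' : Fin n → Fin n → Bool) → Prop) :
    NullMeasurableSet {ω | p (c ω) (A ω) (Y ω) (Y' ω)} P := by
  have := h.isProb
  set X : Ω → Config n := fun ω ↦ toConfig (c ω) (A ω) (Y ω) (Y' ω)
  have hsum : ∑ x, P (X ⁻¹' {x}) ≤ P Set.univ := calc
    ∑ x, P (X ⁻¹' {x}) ≤ ∑ x, ENNReal.ofReal (configMass B βm κ x) :=
      Finset.sum_le_sum fun x _ ↦ h.measure_toConfig_preimage_le x
    _ = P Set.univ := by
      rw [← ENNReal.ofReal_sum_of_nonneg fun x _ ↦ configMass_nonneg hκ hB hβ x, sum_configMass,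
        ENNReal.ofReal_one, measure_univ]
  have hpre : X ⁻¹' (X '' {ω | p (c ω) (A ω) (Y ω) (Y' ω)}) =
      {ω | p (c ω) (A ω) (Y ω) (Y' ω)} := by
    refine (Set.subset_preimage_image _ _).antisymm' ?_
    rintro ω ⟨ω', hω', heq⟩
    obtain ⟨hc, hA, hY, hY'⟩ := h.eq_of_toConfig_eq heq
    rwa [Set.mem_ofPred_eq, hc, hA, hY, hY'] at hω'
  exact hpre ▸ nullMeasurableSet_preimage_of_sum_le hsum _

theorem aemeasurable (h : IsObsSBM P n B βm κ c A Y Y') (hκ : κ ∈ Set.Icc 0 1)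
    (hB : ∀ x y, B x y ∈ Set.Icc 0 1) (hβ : ∀ x y, βm x y ∈ Set.Icc 0 1) {R : Type*}
    [MeasurableSpace R] [MeasurableSpace.CountablyGenerated R] [Nonempty R]
    (f : (Fin n → Bool) → (a y y' : Fin n → Fin n → Bool) → R) :
    AEMeasurable (fun ω ↦ f (c ω) (A ω) (Y ω) (Y' ω)) P :=
  NullMeasurable.aemeasurable fun s _ ↦
    h.nullMeasurableSet hκ hB hβ fun l a y y' ↦ f l a y y' ∈ s

theorem measure_ne_eq_zero (h : IsObsSBM P n B βm κ c A Y Y') (hβ : ∀ x y, βm x y = 0) :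
    P {ω | Y ω ≠ Y' ω} = 0 := by
  have hsub : {ω | Y ω ≠ Y' ω} ⊆ ⋃ x ∈ {x : Config n | ∃ p, (x.2 p).2.1 ≠ (x.2 p).2.2},
      (fun ω ↦ toConfig (c ω) (A ω) (Y ω) (Y' ω)) ⁻¹' {x} := by
    intro ω hω
    obtain ⟨i, j, hij, hne⟩ : ∃ i j, i < j ∧ Y ω i j ≠ Y' ω i j := by
      by_contra! heq
      exact hω (eq_of_symm_of_forall_lt (h.symmY ω) (h.symmY' ω)
        (fun i ↦ by rw [h.looplessY, h.looplessY']) heq)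
    exact Set.mem_biUnion (x := toConfig (c ω) (A ω) (Y ω) (Y' ω)) ⟨⟨(i, j), hij⟩, hne⟩ rfl
  refine measure_mono_null hsub ((measure_biUnion_null_iff (Set.to_countable _)).2 ?_)
  rintro x ⟨p, hp⟩
  have hmass : configMass B βm κ x = 0 := mul_eq_zero_of_right _ <|
    Finset.prod_eq_zero (mem_univ p) (by rw [hβ, pairMass_zero_right_of_ne _ hp])
  simpa [hmass] using h.measure_toConfig_preimage_le x

end IsObsSBM

section Statistics

open scoped Matrix Topology

theorem isAsymptoticallyNormal_iff {ι : Type*} [Fintype ι] {Ω : ℕ → Type*}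
    {mΩ : ∀ n, MeasurableSpace (Ω n)} {μ : ∀ n, Measure (Ω n)} {X : ∀ n, Ω n → ι → ℝ}
    {S : Matrix ι ι ℝ} :
    IsAsymptoticallyNormal μ X S ↔ ∀ t : ι → ℝ, t ≠ 0 → ∀ x : ℝ,
      Tendsto (fun n ↦ (μ n {ω | ∑ k, t k * X n ω k ≤ x}).toReal) atTop
        (𝓝 (gaussianReal 0 (∑ k, ∑ k', t k * S k k' * t k').toNNReal (Set.Iic x)).toReal) := by
  simp only [IsAsymptoticallyNormal, ← dotProduct_mulVec_eq_sum, dotProduct]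

theorem limsup_toReal_le_of_limsup_le_ofReal {κ : Type*} {l : Filter κ} [l.NeBot]
    {u : κ → ENNReal} {a : ℝ} (ha : 0 ≤ a) (h : limsup u l ≤ ENNReal.ofReal a) :
    limsup (fun i ↦ (u i).toReal) l ≤ a := by
  have hlt : limsup u l < ENNReal.ofReal (a + 1) :=
    h.trans_lt ((ENNReal.ofReal_lt_ofReal_iff (by positivity)).2 (lt_add_one a))
  rw [ENNReal.limsup_toReal_eq ENNReal.ofReal_ne_top
    ((eventually_lt_of_limsup_lt hlt).mono fun _ ↦ le_of_lt)]
  exact ENNReal.toReal_le_of_le_ofReal ha h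

section QuadraticStatistics

variable {n : ℕ} (c : Fin n → Bool) (y y' : Fin n → Fin n → Bool)

theorem Qbeta_eq_dotProduct_mulVec (b : ℝ) (Θ : Matrix (Fin 3) (Fin 3) ℝ) :
    Qbeta b c y y' Θ = statVec3 b c y y' ⬝ᵥ Θ *ᵥ statVec3 b c y y' :=
  (dotProduct_mulVec_eq_sum _ _).symm

theorem Qmu_eq_dotProduct_mulVec (Θ : Matrix (Fin 4) (Fin 4) ℝ) :
    Qmu c y y' Θ = (√n • estVec4 c y y') ⬝ᵥ Θ *ᵥ (√n • estVec4 c y y') := by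
  rw [Qmu, ← dotProduct_mulVec_eq_sum, Matrix.mulVec_smul, smul_dotProduct, dotProduct_smul,
    smul_smul, Real.mul_self_sqrt n.cast_nonneg, smul_eq_mul]

theorem continuous_Qbeta (Θ : Matrix (Fin 3) (Fin 3) ℝ) : Continuous fun b ↦ Qbeta b c y y' Θ := by
  simp only [Qbeta_eq_dotProduct_mulVec, statVec3]
  fun_prop

theorem sInf_Qbeta_le {s : Set ℝ} (hs : IsCompact s) {b : ℝ} (hb : b ∈ s)
    (Θ : Matrix (Fin 3) (Fin 3) ℝ) :
    sInf ((fun b ↦ Qbeta b c y y' Θ) '' s) ≤ Qbeta b c y y' Θ :=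
  csInf_le (hs.image (continuous_Qbeta c y y' Θ)).bddBelow ⟨b, hb, rfl⟩

end QuadraticStatistics

theorem sbmB_mem {s : Set ℝ} {x₁ x₂ xb : ℝ} (h₁ : x₁ ∈ s) (h₂ : x₂ ∈ s) (hb : xb ∈ s)
    (i j : Bool) : sbmB x₁ x₂ xb i j ∈ s := by
  cases i <;> cases j <;> assumption

theorem sbmB_self (x : ℝ) : sbmB x x x = fun _ _ ↦ x := by
  funext i j
  cases i <;> cases j <;> rfl

theorem eventually_add_div_sqrt_mem_Icc {q : ℝ} (hq : q ∈ Set.Ioo 0 1) (μ : ℝ) :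
    ∀ᶠ n : ℕ in atTop, q + μ / √n ∈ Set.Icc 0 1 := by
  have hlim : Tendsto (fun n : ℕ ↦ q + μ / √n) atTop (𝓝 q) := by
    simpa using (tendsto_const_nhds (x := μ)).div_atTop
      (Real.tendsto_sqrt_atTop.comp tendsto_natCast_atTop_atTop) |>.const_add q
  exact hlim.eventually_mem (Icc_mem_nhds hq.1 hq.2)

theorem eventually_sbmB_add_div_sqrt_mem_Icc {q : ℝ} (hq : q ∈ Set.Ioo 0 1) (μ₁ μ₂ : ℝ) :
    ∀ᶠ n : ℕ in atTop, ∀ i j, sbmB (q + μ₁ / √n) (q + μ₂ / √n) q i j ∈ Set.Icc 0 1 := by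
  filter_upwards [eventually_add_div_sqrt_mem_Icc hq μ₁, eventually_add_div_sqrt_mem_Icc hq μ₂]
    with n h₁ h₂ using sbmB_mem h₁ h₂ (Set.Ioo_subset_Icc_self hq)

section ObsSBM

variable {Ω : ℕ → Type*}
  {mΩ : ∀ n, MeasurableSpace (Ω n)} {P : ∀ n, Measure (Ω n)} {B βm : ℕ → Bool → Bool → ℝ}
  {κ α r : ℝ} {c : ∀ n, Ω n → Fin n → Bool} {A Y Y' : ∀ n, Ω n → Fin n → Fin n → Bool}

theorem limsup_measure_ne_inter_lt_quadForm_le {ι : Type*} [Fintype ι] [Nonempty ι] [DecidableEq ι]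
    (hmodel : ∀ᶠ n in atTop, IsObsSBM (P n) n (B n) (βm n) κ (c n) (A n) (Y n) (Y' n))
    (hκ : κ ∈ Set.Icc 0 1) (hB : ∀ᶠ n in atTop, ∀ x y, B n x y ∈ Set.Icc 0 1)
    (hβ : ∀ᶠ n in atTop, ∀ x y, βm n x y ∈ Set.Icc 0 1)
    (f : ∀ n, (Fin n → Bool) → (y y' : Fin n → Fin n → Bool) → ι → ℝ)
    {S : Matrix ι ι ℝ} {Θ : ∀ n, Ω n → Matrix ι ι ℝ} (hS : S.PosDef)
    (hf : IsAsymptoticallyNormal (fun n ↦ (P n)[|{ω | Y n ω ≠ Y' n ω}])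
      (fun n ω ↦ f n (c n ω) (Y n ω) (Y' n ω)) S)
    (hΘ : IsConsistentEstimator (fun n ↦ (P n)[|{ω | Y n ω ≠ Y' n ω}]) Θ S⁻¹)
    (hr : (chiSqMeasure (Fintype.card ι) (Set.Iic r)).toReal = 1 - α) :
    limsup (fun n ↦ P n ({ω | Y n ω ≠ Y' n ω} ∩ {ω | r <
      f n (c n ω) (Y n ω) (Y' n ω) ⬝ᵥ Θ n ω *ᵥ f n (c n ω) (Y n ω) (Y' n ω)})) atTop ≤
      ENNReal.ofReal α := by
  refine limsup_measure_inter_lt_quadForm_le (hmodel.mono fun _ h ↦ h.isProb) ?_ hS hf ?_ hΘ hr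
  · filter_upwards [hmodel, hB, hβ] with n h hBn hβn
    exact h.nullMeasurableSet hκ hBn hβn fun _ _ y y' ↦ y ≠ y'
  · filter_upwards [hmodel, hB, hβ] with n h hBn hβn
    exact h.aemeasurable hκ hBn hβn fun l _ y y' ↦ f n l y y'

theorem limsup_measure_ne_inter_lt_sInf_Qbeta_le
    (hmodel : ∀ᶠ n in atTop, IsObsSBM (P n) n (B n) (βm n) κ (c n) (A n) (Y n) (Y' n))
    (hκ : κ ∈ Set.Icc 0 1) (hB : ∀ᶠ n in atTop, ∀ x y, B n x y ∈ Set.Icc 0 1)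
    (hβ : ∀ᶠ n in atTop, ∀ x y, βm n x y ∈ Set.Icc 0 1)
    {b : ℝ} {s : Set ℝ} (hs : IsCompact s) (hb : b ∈ s) {S : Matrix (Fin 3) (Fin 3) ℝ}
    {Θ : ∀ n, Ω n → Matrix (Fin 3) (Fin 3) ℝ} (hS : S.PosDef)
    (hstat : IsAsymptoticallyNormal (fun n ↦ (P n)[|{ω | Y n ω ≠ Y' n ω}])
      (fun n ω ↦ statVec3 b (c n ω) (Y n ω) (Y' n ω)) S)
    (hΘ : IsConsistentEstimator (fun n ↦ (P n)[|{ω | Y n ω ≠ Y' n ω}]) Θ S⁻¹)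
    (hr : (chiSqMeasure 3 (Set.Iic r)).toReal = 1 - α) :
    limsup (fun n ↦ P n ({ω | Y n ω ≠ Y' n ω} ∩ {ω | r <
      sInf ((fun b ↦ Qbeta b (c n ω) (Y n ω) (Y' n ω) (Θ n ω)) '' s)})) atTop ≤
      ENNReal.ofReal α := by
  refine (limsup_le_limsup (.of_forall fun n ↦ measure_mono ?_)).trans
    (limsup_measure_ne_inter_lt_quadForm_le hmodel hκ hB hβ (fun _ ↦ statVec3 b) hS hstat hΘ
      (mod_cast hr))
  refine Set.inter_subset_inter_right _ fun ω hω ↦ Set.mem_ofPred.2 (hω.trans_le ?_)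
  exact (sInf_Qbeta_le _ _ _ hs hb _).trans_eq (Qbeta_eq_dotProduct_mulVec _ _ _ _ _)

theorem limsup_measure_ne_inter_lt_Qmu_le
    (hmodel : ∀ᶠ n in atTop, IsObsSBM (P n) n (B n) (βm n) κ (c n) (A n) (Y n) (Y' n))
    (hκ : κ ∈ Set.Icc 0 1) (hB : ∀ᶠ n in atTop, ∀ x y, B n x y ∈ Set.Icc 0 1)
    (hβ : ∀ᶠ n in atTop, ∀ x y, βm n x y ∈ Set.Icc 0 1)
    {S : Matrix (Fin 4) (Fin 4) ℝ} {Θ : ∀ n, Ω n → Matrix (Fin 4) (Fin 4) ℝ} (hS : S.PosDef)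
    (hest : IsAsymptoticallyNormal (fun n ↦ (P n)[|{ω | Y n ω ≠ Y' n ω}])
      (fun n ω ↦ √n • estVec4 (c n ω) (Y n ω) (Y' n ω)) S)
    (hΘ : IsConsistentEstimator (fun n ↦ (P n)[|{ω | Y n ω ≠ Y' n ω}]) Θ S⁻¹)
    (hr : (chiSqMeasure 4 (Set.Iic r)).toReal = 1 - α) :
    limsup (fun n ↦ P n ({ω | Y n ω ≠ Y' n ω} ∩ {ω | r <
      Qmu (c n ω) (Y n ω) (Y' n ω) (Θ n ω)})) atTop ≤ ENNReal.ofReal α := by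
  simp only [Qmu_eq_dotProduct_mulVec]
  exact limsup_measure_ne_inter_lt_quadForm_le hmodel hκ hB hβ
    (fun n l y y' ↦ √n • estVec4 l y y') hS hest hΘ (mod_cast hr)

end ObsSBM

end Statistics

theorem statement_17
    (κ q β βbar μ₁ μ₂ γ₁ γ₂ α : ℝ)
    (hκ0 : 0 < κ) (hκ1 : κ < 1) (hq0 : 0 < q) (hq1 : q < 1)
    (hβ0 : 0 ≤ β) (hβ1 : β < 1) (hβbar0 : 0 < βbar) (hβbar1 : βbar < 1)
    (hα0 : 0 < α) (hα1 : α < 1)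
    (Ω : ℕ → Type) [mΩ : ∀ n, MeasurableSpace (Ω n)] (P : ∀ n, Measure (Ω n))
    (c : ∀ n, Ω n → Fin n → Bool)
    (A Y Y' : ∀ n, Ω n → Fin n → Fin n → Bool)
    (hmodel : ∀ᶠ n : ℕ in atTop,
      IsObsSBM (P n) n
        (sbmB (q + μ₁ / Real.sqrt n) (q + μ₂ / Real.sqrt n) q)
        (sbmB (β - γ₁ / Real.sqrt n) (β - γ₂ / Real.sqrt n) β)
        κ (c n) (A n) (Y n) (Y' n))
    -- the estimated precision matrices
    (Θβ : ∀ n, Ω n → Matrix (Fin 3) (Fin 3) ℝ)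
    (Θμ : ∀ n, Ω n → Matrix (Fin 4) (Fin 4) ℝ)
    -- Σ_β: the positive definite limiting covariance of
    -- (n(β̂_b − β), √n(γ̂₁ − γ₁), √n(γ̂₂ − γ₂)) (valid when β ∈ (0,1), on the
    -- event Y ≠ Y*), with Θ̂_β a consistent estimator of Σ_β⁻¹
    (SigmaB : Matrix (Fin 3) (Fin 3) ℝ)
    (hSB : 0 < β → SigmaB.PosDef ∧
      (∀ t : Fin 3 → ℝ, t ≠ 0 → ∀ x : ℝ,
        Tendsto (fun n =>
            ((ProbabilityTheory.cond (P n) {ω | Y n ω ≠ Y' n ω})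
              {ω | ∑ k, t k * (statVec3 β (c n ω) (Y n ω) (Y' n ω) k -
                  ![0, Real.sqrt n * γ₁, Real.sqrt n * γ₂] k) ≤ x}).toReal)
          atTop
          (nhds ((gaussianReal 0
              (Real.toNNReal (∑ k, ∑ k', t k * SigmaB k k' * t k'))
              (Set.Iic x)).toReal))))
    (hΘβ : 0 < β → ∀ (k k' : Fin 3), ∀ ε > (0:ℝ),
      Tendsto (fun n =>
          (ProbabilityTheory.cond (P n) {ω | Y n ω ≠ Y' n ω})
            {ω | ε < |Θβ n ω k k' - SigmaB⁻¹ k k'|})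
        atTop (nhds 0))
    -- Σ_μ: the positive definite limiting covariance of
    -- √n(γ̂₁ − γ₁, γ̂₂ − γ₂, μ̂₁ − μ₁, μ̂₂ − μ₂) (valid when β ∈ (0,1), on the
    -- event Y ≠ Y*), with Θ̂_μ a consistent estimator of Σ_μ⁻¹
    (SigmaM : Matrix (Fin 4) (Fin 4) ℝ)
    (hSM : 0 < β → SigmaM.PosDef ∧
      (∀ t : Fin 4 → ℝ, t ≠ 0 → ∀ x : ℝ,
        Tendsto (fun n =>
            ((ProbabilityTheory.cond (P n) {ω | Y n ω ≠ Y' n ω})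
              {ω | ∑ k, t k * (Real.sqrt n *
                  (estVec4 (c n ω) (Y n ω) (Y' n ω) k -
                    ![γ₁, γ₂, μ₁, μ₂] k)) ≤ x}).toReal)
          atTop
          (nhds ((gaussianReal 0
              (Real.toNNReal (∑ k, ∑ k', t k * SigmaM k k' * t k'))
              (Set.Iic x)).toReal))))
    (hΘμ : 0 < β → ∀ (k k' : Fin 4), ∀ ε > (0:ℝ),
      Tendsto (fun n =>
          (ProbabilityTheory.cond (P n) {ω | Y n ω ≠ Y' n ω})
            {ω | ε < |Θμ n ω k k' - SigmaM⁻¹ k k'|})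
        atTop (nhds 0))
    -- the (1−α)-quantiles of χ²(3) and χ²(4)
    (c3 c4 : ℝ)
    (hc3 : (chiSqMeasure 3 (Set.Iic c3)).toReal = 1 - α)
    (hc4 : (chiSqMeasure 4 (Set.Iic c4)).toReal = 1 - α)
    -- the null hypothesis H₀,β̄
    (hnull : (γ₁ = 0 ∧ γ₂ = 0 ∧ 0 ≤ β ∧ β ≤ βbar) ∨
             (γ₁ = 0 ∧ γ₂ = 0 ∧ μ₁ = 0 ∧ μ₂ = 0)) :
    -- asymptotic type I error control at level α
    Filter.limsup (fun n =>
        (P n {ω | Y n ω ≠ Y' n ω ∧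
          c3 < sInf ((fun b => Qbeta b (c n ω) (Y n ω) (Y' n ω) (Θβ n ω)) ''
            Set.Icc (0:ℝ) βbar) ∧
          c4 < Qmu (c n ω) (Y n ω) (Y' n ω) (Θμ n ω)}).toReal)
      atTop ≤ α := by
  obtain ⟨rfl, rfl⟩ : γ₁ = 0 ∧ γ₂ = 0 := hnull.elim (fun h ↦ ⟨h.1, h.2.1⟩) fun h ↦ ⟨h.1, h.2.1⟩
  simp only [zero_div, sub_zero, mul_zero, sbmB_self] at hmodel hSB
  refine limsup_toReal_le_of_limsup_le_ofReal hα0.le ?_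
  obtain rfl | hβ := hβ0.eq_or_lt
  · refine limsup_le_of_le (h := hmodel.mono fun n hn ↦ ?_)
    have hYY' : P n {ω | Y n ω ≠ Y' n ω} = 0 := hn.measure_ne_eq_zero fun _ _ ↦ rfl
    exact (measure_mono_null (fun _ hω ↦ hω.1) hYY').trans_le zero_le
  have hκ : κ ∈ Set.Icc 0 1 := ⟨hκ0.le, hκ1.le⟩
  have hB := eventually_sbmB_add_div_sqrt_mem_Icc ⟨hq0, hq1⟩ μ₁ μ₂
  rcases hnull with ⟨-, -, -, hββbar⟩ | ⟨-, -, rfl, rfl⟩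
  · have hstat : IsAsymptoticallyNormal (fun n ↦ (P n)[|{ω | Y n ω ≠ Y' n ω}])
        (fun n ω ↦ statVec3 β (c n ω) (Y n ω) (Y' n ω)) SigmaB :=
      isAsymptoticallyNormal_iff.2 (by simpa [Fin.sum_univ_succ] using (hSB hβ).2)
    exact (limsup_le_limsup (.of_forall fun n ↦ measure_mono fun _ ↦ And.imp_right And.left)).trans
      (limsup_measure_ne_inter_lt_sInf_Qbeta_le hmodel hκ hB (.of_forall fun _ _ _ ↦ ⟨hβ0, hβ1.le⟩)
        isCompact_Icc ⟨hβ0, hββbar⟩ (hSB hβ).1 hstat (hΘβ hβ) hc3)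
  · have hest : IsAsymptoticallyNormal (fun n ↦ (P n)[|{ω | Y n ω ≠ Y' n ω}])
        (fun n ω ↦ √n • estVec4 (c n ω) (Y n ω) (Y' n ω)) SigmaM :=
      isAsymptoticallyNormal_iff.2 (by simpa [Fin.sum_univ_succ] using (hSM hβ).2)
    exact (limsup_le_limsup (.of_forall fun n ↦ measure_mono fun _ ↦ And.imp_right And.right)).trans
      (limsup_measure_ne_inter_lt_Qmu_le hmodel hκ hB (.of_forall fun _ _ _ ↦ ⟨hβ0, hβ1.le⟩)
        (hSM hβ).1 hest (hΘμ hβ) hc4)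

end
end
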